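/- Fix a ∈ ℤ and set a* = |a|+1 if |a| ≤ 1 and a* = |a| if |a| ≥ 2. For any θ ∈ Ḣ^{a*}_⋄ and f ∈ Ḣ^{a*−1}_⋄, the linearization operator 𝕀_θ (defined by 𝕀_θ[ξ](t) = solution at time t of the linearized Navier–Stokes equation with initial condition ξ) extends to Ḣ^a_⋄, and for all ξ ∈ Ḣ^a_⋄ one has 𝕀_θ[ξ] ∈ C([0,T], Ḣ^a_⋄) ∩ L²([0,T], Ḣ^{a+1}_⋄). Moreover, for every B > 0 there exists C = C(ν, T, ‖f‖_{Ḣ^{a*−1}}, a, B) > 0 such that for all θ with ‖θ‖_{Ḣ^{a*}} ≤ B and all ξ ∈ Ḣ^a_⋄: sup_{0≤t≤T} ‖𝕀_θ[ξ](t)‖²_{Ḣ^a} + ∫₀ᵀ ‖𝕀_θ[ξ](t)‖²_{Ḣ^{a+1}} dt ≤ C ‖ξ‖²_{Ḣ^a}. -/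

import Mathlib

open MeasureTheory Set
open scoped BigOperators

noncomputable section

namespace NS2D

/-- Nonzero Fourier frequencies of the 2D torus `Ω = 𝕋²`. -/
def Freq : Type := {k : ℤ × ℤ // k ≠ 0}

/-- Squared Euclidean modulus `|k|²` of a frequency. -/
def knormSq (k : Freq) : ℝ := (k.1.1 : ℝ) ^ 2 + (k.1.2 : ℝ) ^ 2

/-- Eigenvalue `λ_k = 4π²|k|²` of the periodic Laplacian `−Δ`. -/
def lam (k : Freq) : ℝ := 4 * Real.pi ^ 2 * knormSq k

/-- A divergence-free mean-zero vector field `u ∈ Ḣ_⋄` (or, more generally, an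
element of the scale `Ḣ^α_⋄`) on the torus is represented by its Fourier
coefficients `c k` along the orthonormal basis
`e_k(x) = |k|⁻¹ (k₂, −k₁) exp(2πi k·x)` of divergence-free fields. -/
abbrev Coef : Type := Freq → ℂ

/-- Negation of a frequency. -/
def fneg (k : Freq) : Freq := ⟨-k.1, neg_ne_zero.mpr k.2⟩

/-- The conjugacy condition expressing that the coefficients `c` represent a
real-valued vector field (note `e_{−k} = − conj e_k`). -/
def IsReal (c : Coef) : Prop := ∀ k, c (fneg k) = - (starRingEnd ℂ) (c k)

/-- Squared homogeneous Sobolev norm `‖·‖²_{Ḣ^α} = Σ_k λ_k^α |c k|²`. -/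
def hSq (α : ℝ) (c : Coef) : ℝ := ∑' k, lam k ^ α * ‖c k‖ ^ 2

/-- Homogeneous Sobolev norm `‖·‖_{Ḣ^α}`. -/
def hN (α : ℝ) (c : Coef) : ℝ := Real.sqrt (hSq α c)

/-- Finiteness of the `Ḣ^α`-norm. -/
def FinH (α : ℝ) (c : Coef) : Prop := Summable fun k => lam k ^ α * ‖c k‖ ^ 2

/-- Membership in `Ḣ^α_⋄` (real-valued field with finite `Ḣ^α`-norm). -/
def MemH (α : ℝ) (c : Coef) : Prop := IsReal c ∧ FinH α c

/-- Membership in `Ḣ^∞_⋄ = C^∞(Ω)² ∩ Ḣ_⋄`: all Sobolev norms are finite. -/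
def MemHinf (c : Coef) : Prop := ∀ α : ℝ, MemH α c

/-- Real `Ḣ^α` inner product `⟨·,·⟩_{Ḣ^α}` (for real-valued fields). -/
def hInner (α : ℝ) (c d : Coef) : ℝ := ∑' k, lam k ^ α * (c k * (starRingEnd ℂ) (d k)).re

/-- The `L²` inner product. -/
def innerC (c d : Coef) : ℂ := ∑' k, c k * (starRingEnd ℂ) (d k)

/-- The unit vector `(k₂, −k₁)/|k|` spanning the divergence-free direction at
frequency `k`. -/
def evec (k : Freq) : ℝ × ℝ :=
  ((k.1.2 : ℝ) / Real.sqrt (knormSq k), -((k.1.1 : ℝ)) / Real.sqrt (knormSq k))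

/-- Euclidean dot product on `ℝ²`. -/
def dotR (a b : ℝ × ℝ) : ℝ := a.1 * b.1 + a.2 * b.2

/-- A frequency as a real vector. -/
def fvec (k : Freq) : ℝ × ℝ := ((k.1.1 : ℝ), (k.1.2 : ℝ))

/-- Fourier coefficients (along the basis `e_k`) of the Leray-projected
transport nonlinearity `B[u,v] = P[(u·∇)v]`:
`(B[u,v])^(k) · ē_k = 2πi Σ_{m+n=k, n≠0} c_m d_n (e_m·n)(e_n·e_k)`. -/
def Bc (c d : Coef) : Coef := fun k =>
  (((2 * Real.pi : ℝ) : ℂ) * Complex.I) *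
    ∑' m : Freq,
      if h : k.1 - m.1 ≠ 0 then
        c m * d ⟨k.1 - m.1, h⟩ *
          (((dotR (evec m) (fvec ⟨k.1 - m.1, h⟩) *
            dotR (evec ⟨k.1 - m.1, h⟩) (evec k) : ℝ)) : ℂ)
      else 0

/-- The Laplacian `Δ` acting on the scale: `(Δu)^(k) = −λ_k û(k)`. -/
def lapC (c : Coef) : Coef := fun k => -((lam k : ℝ) : ℂ) * c k

/-- Continuity of a trajectory `t ↦ u(t)`, `t ∈ [0,T]`, for the `Ḣ^α`-norm:
`u ∈ C([0,T], Ḣ^α_⋄)`. -/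
def ContH (α : ℝ) (T : ℝ) (u : ℝ → Coef) : Prop :=
  ∀ t ∈ Icc (0:ℝ) T, ∀ ε > 0, ∃ δ > 0, ∀ s ∈ Icc (0:ℝ) T,
    |s - t| < δ → hN α (u s - u t) < ε

/-- Membership `u ∈ L²([0,T], Ḣ^α_⋄)`. -/
def MemL2H (α : ℝ) (T : ℝ) (u : ℝ → Coef) : Prop :=
  (∀ t ∈ Ioc (0:ℝ) T, MemH α (u t)) ∧
    IntegrableOn (fun t => hSq α (u t)) (Ioc 0 T)

/-- `u` is a strong solution on `[0,T]` of the (Leray-projected) periodic 2D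
Navier–Stokes equations `du/dt + νAu + B[u,u] = f`, `u(0) = θ`, posed in `Ḣ_⋄`:
the Fourier coefficients satisfy the corresponding system of ODEs on `(0,T]`,
the trajectory is continuous into `Ḣ¹_⋄` (in particular at `t = 0`), and lies
in `L²([0,T], Ḣ²_⋄)`. -/
structure IsNSSol (ν : ℝ) (f : Coef) (T : ℝ) (θ : Coef) (u : ℝ → Coef) : Prop where
  init : u 0 = θ
  real : ∀ t ∈ Icc (0:ℝ) T, IsReal (u t)
  deriv : ∀ (k : Freq), ∀ t ∈ Ioc (0:ℝ) T,
    HasDerivAt (fun s => u s k)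
      (f k - ((ν * lam k : ℝ) : ℂ) * u t k - Bc (u t) (u t) k) t
  contH1 : ContH 1 T u
  memL2H2 : MemL2H 2 T u

/-- `U` solves the linear parabolic equation
`dU/dt − νΔU + B[u₀, U] + B[U, u₁] = g`, `U(0) = ξ`, on `[0,T]`. -/
structure IsLinPSol (ν : ℝ) (u₀ u₁ : ℝ → Coef) (g : ℝ → Coef) (T : ℝ) (ξ : Coef)
    (U : ℝ → Coef) : Prop where
  init : U 0 = ξ
  real : ∀ t ∈ Icc (0:ℝ) T, IsReal (U t)
  deriv : ∀ (k : Freq), ∀ t ∈ Ioc (0:ℝ) T,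
    HasDerivAt (fun s => U s k)
      (g t k - ((ν * lam k : ℝ) : ℂ) * U t k - Bc (u₀ t) (U t) k - Bc (U t) (u₁ t) k) t

/-- `U = 𝕀_θ[ξ]` solves the linearisation of Navier–Stokes along the
trajectory `u₀`: `dU/dt − νΔU + B[u₀,U] + B[U,u₀] = 0`, `U(0) = ξ`. -/
def IsLinSol (ν : ℝ) (u₀ : ℝ → Coef) (T : ℝ) (ξ : Coef) (U : ℝ → Coef) : Prop :=
  IsLinPSol ν u₀ u₀ (fun _ => 0) T ξ U

/-- The heat semigroup `S_t = e^{νtΔ}` on the scale `Ḣ^α_⋄`. -/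
def heatS (ν t : ℝ) (c : Coef) : Coef := fun k =>
  ((Real.exp (-(ν * lam k * t)) : ℝ) : ℂ) * c k

/-- Duhamel representation of the solution of the periodic heat equation
`du/dt − νΔu = g`, `u(0) = h`. -/
def heatSol (ν : ℝ) (g : ℝ → Coef) (h : Coef) : ℝ → Coef := fun t k =>
  ((Real.exp (-(ν * lam k * t)) : ℝ) : ℂ) *
    (h k + ∫ s in (0:ℝ)..t, ((Real.exp (ν * lam k * s) : ℝ) : ℂ) * g s k)

/-- Real-linearity of a map on the coefficient space. -/
def IsLinMap (Λ : Coef → Coef) : Prop :=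
  (∀ c d, Λ (c + d) = Λ c + Λ d) ∧ ∀ (r : ℝ) (c : Coef), Λ (r • c) = r • Λ c

/-- `Λ` defines a compact (linear) operator `Ḣ^α_⋄ → Ḣ^β_⋄`: it is linear,
maps `Ḣ^α_⋄` into `Ḣ^β_⋄`, and the image of the `Ḣ^α`-unit ball is totally
bounded for the `Ḣ^β`-norm. -/
def IsCompactOp (α β : ℝ) (Λ : Coef → Coef) : Prop :=
  IsLinMap Λ ∧ (∀ c, MemH α c → MemH β (Λ c)) ∧
    ∀ ε > 0, ∃ S : Finset Coef, ∀ c, MemH α c → hN α c ≤ 1 →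
      ∃ s ∈ S, hN β (Λ c - s) < ε

/-- The index `a* = |a|+1` if `|a| ≤ 1`, `a* = |a|` if `|a| ≥ 2`. -/
def astar (a : ℤ) : ℤ := if |a| ≤ 1 then |a| + 1 else |a|

/-- `i`-th component of the unit vector `evec k`. -/
def evecC (i : Fin 2) (k : Freq) : ℝ := if i = 0 then (evec k).1 else (evec k).2

/-- Fourier coefficients (over all of `ℤ²`) of the scalar component `u_i` of a
divergence-free field with coefficients `c`. -/
def compCoef (i : Fin 2) (c : Coef) : ℤ × ℤ → ℂ := fun n =>
  if h : n ≠ 0 then c ⟨n, h⟩ * ((evecC i ⟨n, h⟩ : ℝ) : ℂ) else 0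

/-- Convolution: Fourier coefficients of a pointwise product of two scalar
functions. -/
def convC (F G : ℤ × ℤ → ℂ) : ℤ × ℤ → ℂ := fun n => ∑' m : ℤ × ℤ, F m * G (n - m)

/-- Squared homogeneous Sobolev norm of a scalar function given by its Fourier
coefficients over `ℤ²`. -/
def hSqScalar (α : ℝ) (F : ℤ × ℤ → ℂ) : ℝ := ∑' k : Freq, lam k ^ α * ‖F k.1‖ ^ 2

/-- `‖u vᵀ‖²_{Ḣ^α} = Σ_{i,j=1}^2 ‖u_i v_j‖²_{Ḣ^α}`. -/
def hSqMat (α : ℝ) (c d : Coef) : ℝ :=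
  ∑ i : Fin 2, ∑ j : Fin 2, hSqScalar α (convC (compCoef i c) (compCoef j d))

/-- The character `exp(2πi k·x)`. -/
def efun (k : Freq) (x : ℝ × ℝ) : ℂ :=
  Complex.exp ((((2 * Real.pi : ℝ)) : ℂ) * Complex.I *
    ((k.1.1 : ℂ) * (x.1 : ℂ) + (k.1.2 : ℂ) * (x.2 : ℂ)))

/-- Pointwise evaluation of the `i`-th component of the field. -/
def evalComp (i : Fin 2) (c : Coef) (x : ℝ × ℝ) : ℂ :=
  ∑' k, c k * ((evecC i k : ℝ) : ℂ) * efun k x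

/-- Supremum norm (`C⁰`-norm) of the field. -/
def c0N (c : Coef) : ℝ := ⨆ x : ℝ × ℝ, max ‖evalComp 0 c x‖ ‖evalComp 1 c x‖

/-- The partial derivative `∂_j` acting on divergence-free fields. -/
def pderiv (j : Fin 2) (c : Coef) : Coef := fun k =>
  (((2 * Real.pi : ℝ) : ℂ) * Complex.I) *
    (if j = 0 then ((k.1.1 : ℤ) : ℂ) else ((k.1.2 : ℤ) : ℂ)) * c k

/-- `C¹`-norm of the field. -/
def c1N (c : Coef) : ℝ := c0N c + c0N (pderiv 0 c) + c0N (pderiv 1 c)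

/-- Norm of the multiplier space `B^ℓ`: `C^ℓ(Ω)²` for `ℓ ≤ 1` and `Ḣ^ℓ` for
`ℓ ≥ 2`. -/
def bN (ℓ : ℕ) (c : Coef) : ℝ :=
  if ℓ = 0 then c0N c else if ℓ = 1 then c1N c else hN (ℓ : ℝ) c

end NS2D

namespace NS2D

section Proofs

open scoped ENNReal

/-! ### Weights on the full lattice and product estimates in `ℝ≥0∞` -/

/-- The lattice weight: `max 1 (4π²|k|²)`. -/
def LL (k : ℤ × ℤ) : ℝ := max 1 (4 * Real.pi ^ 2 * ((k.1 : ℝ) ^ 2 + (k.2 : ℝ) ^ 2))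

lemma one_le_LL (k : ℤ × ℤ) : 1 ≤ LL k := le_max_left _ _
lemma LL_pos (k : ℤ × ℤ) : 0 < LL k := lt_of_lt_of_le one_pos (one_le_LL k)

lemma LL_neg (k : ℤ × ℤ) : LL (-k) = LL k := by simp [LL]

lemma LL_add (m n : ℤ × ℤ) : LL (m + n) ≤ 4 * max (LL m) (LL n) := by
  have hp : 0 < Real.pi ^ 2 := by positivity
  have h1 := one_le_LL m
  have hm : 4 * Real.pi ^ 2 * ((m.1 : ℝ) ^ 2 + (m.2 : ℝ) ^ 2) ≤ max (LL m) (LL n) :=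
    le_trans (le_max_right _ _) (le_max_left _ _)
  have hn : 4 * Real.pi ^ 2 * ((n.1 : ℝ) ^ 2 + (n.2 : ℝ) ^ 2) ≤ max (LL m) (LL n) :=
    le_trans (le_max_right _ _) (le_max_right _ _)
  have h2 : 1 ≤ max (LL m) (LL n) := h1.trans (le_max_left _ _)
  refine max_le (by linarith) ?_
  have : 4 * Real.pi ^ 2 * ((((m + n).1 : ℤ) : ℝ) ^ 2 + (((m + n).2 : ℤ) : ℝ) ^ 2) ≤
      2 * (4 * Real.pi ^ 2 * ((m.1 : ℝ) ^ 2 + (m.2 : ℝ) ^ 2)) +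
      2 * (4 * Real.pi ^ 2 * ((n.1 : ℝ) ^ 2 + (n.2 : ℝ) ^ 2)) := by
    have : (((m + n).1 : ℤ) : ℝ) ^ 2 + (((m + n).2 : ℤ) : ℝ) ^ 2 ≤
      2 * ((m.1 : ℝ) ^ 2 + (m.2 : ℝ) ^ 2) + 2 * ((n.1 : ℝ) ^ 2 + (n.2 : ℝ) ^ 2) := by
      push_cast [Prod.fst_add, Prod.snd_add]
      nlinarith [sq_nonneg ((m.1 : ℝ) - n.1), sq_nonneg ((m.2 : ℝ) - n.2)]
    nlinarith
  linarith

/-- The weights `LL^α` as extended nonnegative reals. -/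
def WW (α : ℝ) (k : ℤ × ℤ) : ℝ≥0∞ := ENNReal.ofReal (LL k ^ α)

lemma WW_ne_top (α : ℝ) (k : ℤ × ℤ) : WW α k ≠ ⊤ := ENNReal.ofReal_ne_top
lemma WW_ne_zero (α : ℝ) (k : ℤ × ℤ) : WW α k ≠ 0 := by
  have := Real.rpow_pos_of_pos (LL_pos k) α
  simpa [WW] using this
lemma WW_add (α β : ℝ) (k : ℤ × ℤ) : WW (α + β) k = WW α k * WW β k := by
  rw [WW, WW, WW, Real.rpow_add (LL_pos k), ENNReal.ofReal_mul (by positivity [LL_pos k])]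
lemma WW_zero (k : ℤ × ℤ) : WW 0 k = 1 := by simp [WW]
lemma WW_mono {α β : ℝ} (h : α ≤ β) (k : ℤ × ℤ) : WW α k ≤ WW β k :=
  ENNReal.ofReal_le_ofReal (Real.rpow_le_rpow_of_exponent_le (one_le_LL k) h)
lemma WW_neg (α : ℝ) (k : ℤ × ℤ) : WW α (-k) = WW α k := by simp [WW, LL_neg]
lemma WW_sq (α : ℝ) (k : ℤ × ℤ) : WW (α / 2) k ^ 2 = WW α k := by
  rw [sq, ← WW_add]; congr 1; ring
lemma WW_mul_neg (α : ℝ) (k : ℤ × ℤ) : WW (-α) k * WW α k = 1 := by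
  rw [← WW_add, neg_add_cancel, WW_zero]
lemma WW_mul_neg' (α : ℝ) (k : ℤ × ℤ) : WW α k * WW (-α) k = 1 := by
  rw [mul_comm, WW_mul_neg]

lemma WW_triangle {r : ℝ} (hr : 0 ≤ r) (m n : ℤ × ℤ) :
    WW r (m + n) ≤ ENNReal.ofReal (4 ^ r) * (WW r m + WW r n) := by
  have h : LL (m + n) ^ r ≤ 4 ^ r * (LL m ^ r + LL n ^ r) := by
    have hm := Real.rpow_nonneg (LL_pos m).le r
    have hn := Real.rpow_nonneg (LL_pos n).le r
    refine (Real.rpow_le_rpow (LL_pos _).le (LL_add m n) hr).trans ?_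
    rw [Real.mul_rpow (by norm_num) (le_trans (LL_pos m).le (le_max_left _ _))]
    refine mul_le_mul_of_nonneg_left ?_ (by positivity)
    rcases max_cases (LL m) (LL n) with h | h <;> rw [h.1] <;> linarith
  calc WW r (m + n) ≤ ENNReal.ofReal (4 ^ r * (LL m ^ r + LL n ^ r)) :=
        ENNReal.ofReal_le_ofReal h
    _ = _ := by
        rw [ENNReal.ofReal_mul (by positivity), ENNReal.ofReal_add
          (Real.rpow_nonneg (LL_pos m).le r) (Real.rpow_nonneg (LL_pos n).le r)]; rfl

lemma WW_summable {r : ℝ} (hr : 3 / 2 ≤ r) : ∑' k, WW (-r) k ≠ ⊤ := by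
  have hle : ∑' k, WW (-r) k ≤ ∑' k, WW (-(3/2)) k :=
    ENNReal.tsum_le_tsum fun k => WW_mono (by linarith) k
  refine ne_top_of_le_ne_top ?_ hle
  have hs : Summable fun k : ℤ × ℤ => LL k ^ (-(3/2) : ℝ) := by
    have h0 := EisensteinSeries.summable_one_div_norm_rpow (k := 3) (by norm_num)
    have h1 : Summable fun k : ℤ × ℤ => ‖(finTwoArrowEquiv ℤ).symm k‖ ^ (-(3:ℝ)) :=
      (finTwoArrowEquiv ℤ).symm.summable_iff.mpr h0
    have h2 : Summable fun k : ℤ × ℤ => ‖(finTwoArrowEquiv ℤ).symm k‖ ^ (-(3:ℝ)) +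
        (if k = 0 then 1 else 0) :=
      h1.add (summable_of_hasFiniteSupport ((Set.finite_singleton (0 : ℤ × ℤ)).subset
        (by intro x hx; by_contra h; simp at h; simp [h] at hx)))
    refine Summable.of_nonneg_of_le (fun k => Real.rpow_nonneg (LL_pos k).le _) (fun k => ?_) h2
    by_cases hk : k = 0
    · have hb : LL k ^ (-(3/2) : ℝ) ≤ 1 :=
        Real.rpow_le_one_of_one_le_of_nonpos (one_le_LL k) (by norm_num)
      simp only [hk, if_true] at hb ⊢
      have : 0 ≤ ‖(finTwoArrowEquiv ℤ).symm (0 : ℤ × ℤ)‖ ^ (-(3:ℝ)) :=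
        Real.rpow_nonneg (norm_nonneg _) _
      linarith
    · simp only [hk, if_false, add_zero]
      set v := (finTwoArrowEquiv ℤ).symm k with hv
      have hvn : 0 < ‖v‖ := by
        rw [norm_pos_iff]
        intro h
        apply hk
        have := congrArg (finTwoArrowEquiv ℤ) h
        rw [hv, Equiv.apply_symm_apply] at this
        rw [this]; rfl
      have hle : ‖v‖ ^ 2 ≤ LL k := by
        have hb : ‖v‖ ≤ Real.sqrt ((k.1 : ℝ) ^ 2 + (k.2 : ℝ) ^ 2) := by
          rw [pi_norm_le_iff_of_nonneg (Real.sqrt_nonneg _)]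
          intro i
          refine Real.le_sqrt_of_sq_le ?_
          fin_cases i
          · have : ‖v 0‖ = |(k.1 : ℝ)| := by simp [hv, finTwoArrowEquiv, Int.norm_eq_abs]
            show ‖v 0‖ ^ 2 ≤ _
            rw [this, sq_abs]; nlinarith [sq_nonneg (k.2 : ℝ)]
          · have : ‖v 1‖ = |(k.2 : ℝ)| := by simp [hv, finTwoArrowEquiv, Int.norm_eq_abs]
            show ‖v 1‖ ^ 2 ≤ _
            rw [this, sq_abs]; nlinarith [sq_nonneg (k.1 : ℝ)]
        have hb2 : ‖v‖ ^ 2 ≤ (k.1 : ℝ) ^ 2 + (k.2 : ℝ) ^ 2 := by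
          have := pow_le_pow_left₀ hvn.le hb 2
          rwa [Real.sq_sqrt (by positivity)] at this
        refine hb2.trans (le_trans ?_ (le_max_right _ _))
        have : 1 ≤ 4 * Real.pi ^ 2 := by nlinarith [Real.pi_gt_three]
        nlinarith [sq_nonneg (k.1 : ℝ), sq_nonneg (k.2 : ℝ)]
      have : (‖v‖ ^ 2) ^ (-(3/2) : ℝ) = ‖v‖ ^ (-(3:ℝ)) := by
        rw [← Real.rpow_natCast, ← Real.rpow_mul hvn.le]; norm_num
      rw [← this]
      exact Real.rpow_le_rpow_of_nonpos (by positivity) hle (by norm_num)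
  have := hs.tsum_ofReal_ne_top
  exact this

/-- Weighted `ℓ²` quantity. -/
def EN (α : ℝ) (x : ℤ × ℤ → ℝ≥0∞) : ℝ≥0∞ := ∑' k, WW α k * x k ^ 2

/-- Convolution in `ℝ≥0∞`. -/
def cv (x y : ℤ × ℤ → ℝ≥0∞) (k : ℤ × ℤ) : ℝ≥0∞ := ∑' m, x m * y (k - m)

lemma EN_mono {α β : ℝ} (h : α ≤ β) (x : ℤ × ℤ → ℝ≥0∞) : EN α x ≤ EN β x :=
  ENNReal.tsum_le_tsum fun k => by gcongr; exact WW_mono h k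

lemma EN_mono_fun {α : ℝ} {x y : ℤ × ℤ → ℝ≥0∞} (h : ∀ k, x k ≤ y k) : EN α x ≤ EN α y :=
  ENNReal.tsum_le_tsum fun k => by gcongr; exact h k

lemma EN_WW (α β : ℝ) (x : ℤ × ℤ → ℝ≥0∞) :
    EN α (fun k => WW (β / 2) k * x k) = EN (α + β) x := by
  refine tsum_congr fun k => ?_
  rw [mul_pow, WW_sq, WW_add, mul_assoc]

lemma cv_comm (x y : ℤ × ℤ → ℝ≥0∞) (k : ℤ × ℤ) : cv x y k = cv y x k := by
  unfold cv
  rw [← (Equiv.subLeft k).tsum_eq]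
  refine tsum_congr fun m => ?_
  simp [mul_comm]

lemma tsum_subLeft (k : ℤ × ℤ) (g : ℤ × ℤ → ℝ≥0∞) : ∑' m, g (k - m) = ∑' m, g m :=
  (Equiv.subLeft k).tsum_eq g
lemma tsum_subRight (k : ℤ × ℤ) (g : ℤ × ℤ → ℝ≥0∞) : ∑' m, g (m - k) = ∑' m, g m :=
  (Equiv.subRight k).tsum_eq g

lemma cs_tsum {ι : Type*} (f g : ι → ℝ≥0∞) :
    (∑' i, f i * g i) ^ 2 ≤ (∑' i, f i ^ 2) * ∑' i, g i ^ 2 := by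
  let _ : MeasurableSpace ι := ⊤
  have h := ENNReal.lintegral_mul_le_Lp_mul_Lq (Measure.count : Measure ι)
    (Real.HolderConjugate.two_two) (f := f) (g := g)
    (measurable_from_top.aemeasurable) (measurable_from_top.aemeasurable)
  simp only [lintegral_count, Pi.mul_apply] at h
  have h2 := pow_le_pow_left' h 2
  refine h2.trans (le_of_eq ?_)
  rw [mul_pow, ← ENNReal.rpow_natCast, ← ENNReal.rpow_natCast, ← ENNReal.rpow_mul,
    ← ENNReal.rpow_mul]
  norm_num

/-- Basic convolution estimate. -/
lemma young {σ τ : ℝ} (hσ : 0 ≤ σ) (hτ : 0 ≤ τ) (h : 3 / 2 ≤ σ + τ) :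
    ∃ K : ℝ≥0∞, K ≠ ⊤ ∧ ∀ x y, ∑' k, cv x y k ^ 2 ≤ K * (EN σ x * EN τ y) := by
  refine ⟨2 * ∑' k, WW (-(σ + τ)) k, ENNReal.mul_ne_top (by norm_num) (WW_summable h), ?_⟩
  intro x y
  have key : ∀ k, cv x y k ^ 2 ≤ (2 * ∑' k, WW (-(σ + τ)) k) *
      ∑' m, (WW σ m * x m ^ 2) * (WW τ (k - m) * y (k - m) ^ 2) := by
    intro k
    have h1 : cv x y k = ∑' m, (WW (-σ / 2) m * WW (-τ / 2) (k - m)) *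
        ((WW (σ / 2) m * x m) * (WW (τ / 2) (k - m) * y (k - m))) := by
      refine tsum_congr fun m => ?_
      have e1 : WW (-σ / 2) m * WW (σ / 2) m = 1 := by
        rw [neg_div]; exact WW_mul_neg _ _
      have e2 : WW (-τ / 2) (k - m) * WW (τ / 2) (k - m) = 1 := by
        rw [neg_div]; exact WW_mul_neg _ _
      calc x m * y (k - m) = (WW (-σ / 2) m * WW (σ / 2) m) *
            (WW (-τ / 2) (k - m) * WW (τ / 2) (k - m)) * (x m * y (k - m)) := by
              rw [e1, e2]; simp
        _ = _ := by ring
    rw [h1]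
    refine (cs_tsum _ _).trans ?_
    gcongr ?_ * ?_
    · calc ∑' m, (WW (-σ / 2) m * WW (-τ / 2) (k - m)) ^ 2
          ≤ ∑' m, (WW (-(σ + τ)) m + WW (-(σ + τ)) (k - m)) := by
            refine ENNReal.tsum_le_tsum fun m => ?_
            rw [mul_pow, WW_sq, WW_sq]
            rcases le_total (LL m) (LL (k - m)) with hl | hl
            · have : WW (-τ) (k - m) ≤ WW (-τ) m := ENNReal.ofReal_le_ofReal
                (Real.rpow_le_rpow_of_nonpos (LL_pos _) hl (by linarith))
              calc _ ≤ WW (-σ) m * WW (-τ) m := by gcongr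
                _ = WW (-(σ + τ)) m := by rw [← WW_add]; congr 1; ring
                _ ≤ _ := le_self_add
            · have : WW (-σ) m ≤ WW (-σ) (k - m) := ENNReal.ofReal_le_ofReal
                (Real.rpow_le_rpow_of_nonpos (LL_pos _) hl (by linarith))
              calc _ ≤ WW (-σ) (k - m) * WW (-τ) (k - m) := by gcongr
                _ = WW (-(σ + τ)) (k - m) := by rw [← WW_add]; congr 1; ring
                _ ≤ _ := le_add_self
        _ = _ := by
            rw [ENNReal.tsum_add, tsum_subLeft k (fun m => WW (-(σ + τ)) m), two_mul]
    · refine ENNReal.tsum_le_tsum fun m => ?_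
      rw [mul_pow, mul_pow, mul_pow, WW_sq, WW_sq]
  calc ∑' k, cv x y k ^ 2 ≤ ∑' k, (2 * ∑' k, WW (-(σ + τ)) k) *
      ∑' m, (WW σ m * x m ^ 2) * (WW τ (k - m) * y (k - m) ^ 2) :=
        ENNReal.tsum_le_tsum key
    _ = _ := by
      rw [ENNReal.tsum_mul_left, ENNReal.tsum_comm]
      congr 1
      unfold EN
      rw [← ENNReal.tsum_mul_right]
      refine tsum_congr fun m => ?_
      rw [ENNReal.tsum_mul_left, tsum_subRight m (fun k => WW τ k * y k ^ 2)]



lemma add_sq_le4 (a b : ℝ≥0∞) : (a + b) ^ 2 ≤ 4 * (a ^ 2 + b ^ 2) := by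
  rcases le_total a b with h | h
  · calc (a + b) ^ 2 ≤ (b + b) ^ 2 := by gcongr
      _ = 4 * b ^ 2 := by ring
      _ ≤ _ := by gcongr; exact le_add_self
  · calc (a + b) ^ 2 ≤ (a + a) ^ 2 := by gcongr
      _ = 4 * a ^ 2 := by ring
      _ ≤ _ := by gcongr; exact le_self_add

/-- Multiplication of a sequence by the weight `LL^(β/2)`. -/
def wt (β : ℝ) (x : ℤ × ℤ → ℝ≥0∞) : ℤ × ℤ → ℝ≥0∞ := fun k => WW (β / 2) k * x k

lemma EN_wt (α β : ℝ) (x : ℤ × ℤ → ℝ≥0∞) : EN α (wt β x) = EN (α + β) x := EN_WW α β x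

lemma split_pos {r : ℝ} (hr : 0 ≤ r) : ∃ C : ℝ≥0∞, C ≠ ⊤ ∧ ∀ x y,
    ∑' k, WW r k * cv x y k ^ 2 ≤
      C * (∑' k, cv (wt r x) y k ^ 2 + ∑' k, cv x (wt r y) k ^ 2) := by
  refine ⟨ENNReal.ofReal (4 ^ (r / 2)) ^ 2 * 4,
    ENNReal.mul_ne_top (ENNReal.pow_ne_top ENNReal.ofReal_ne_top) (by norm_num), fun x y => ?_⟩
  set c := ENNReal.ofReal (4 ^ (r / 2))
  have key : ∀ k, WW (r / 2) k * cv x y k ≤ c * (cv (wt r x) y k + cv x (wt r y) k) := by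
    intro k
    unfold cv
    rw [← ENNReal.tsum_add, ← ENNReal.tsum_mul_left, ← ENNReal.tsum_mul_left]
    refine ENNReal.tsum_le_tsum fun m => ?_
    have := WW_triangle (r := r / 2) (by linarith) m (k - m)
    rw [add_sub_cancel] at this
    calc WW (r / 2) k * (x m * y (k - m)) ≤
        (c * (WW (r / 2) m + WW (r / 2) (k - m))) * (x m * y (k - m)) := by gcongr
      _ = _ := by simp only [wt]; ring
  rw [← ENNReal.tsum_add, ← ENNReal.tsum_mul_left]
  refine ENNReal.tsum_le_tsum fun k => ?_
  calc WW r k * cv x y k ^ 2 = (WW (r / 2) k * cv x y k) ^ 2 := by rw [mul_pow, WW_sq]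
    _ ≤ (c * (cv (wt r x) y k + cv x (wt r y) k)) ^ 2 := pow_le_pow_left' (key k) 2
    _ ≤ c ^ 2 * (4 * (cv (wt r x) y k ^ 2 + cv x (wt r y) k ^ 2)) := by
      rw [mul_pow]; gcongr; exact add_sq_le4 _ _
    _ = _ := by ring

lemma split_neg {b : ℝ} (hb : 0 ≤ b) : ∃ C : ℝ≥0∞, C ≠ ⊤ ∧ ∀ x y,
    ∑' k, WW (-b) k * cv x y k ^ 2 ≤
      C * (∑' k, cv x (wt (-b) y) k ^ 2 +
        ∑' k, WW (-b) k * cv (wt b x) (wt (-b) y) k ^ 2) := by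
  refine ⟨ENNReal.ofReal (4 ^ (b / 2)) ^ 2 * 4,
    ENNReal.mul_ne_top (ENNReal.pow_ne_top ENNReal.ofReal_ne_top) (by norm_num), fun x y => ?_⟩
  set c := ENNReal.ofReal (4 ^ (b / 2))
  have key : ∀ k, WW (-b / 2) k * cv x y k ≤
      c * (cv x (wt (-b) y) k + WW (-b / 2) k * cv (wt b x) (wt (-b) y) k) := by
    intro k
    unfold cv
    rw [← ENNReal.tsum_mul_left (a := WW (-b / 2) k), ← ENNReal.tsum_mul_left (a := WW (-b / 2) k),
      ← ENNReal.tsum_add, ← ENNReal.tsum_mul_left]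
    refine ENNReal.tsum_le_tsum fun m => ?_
    have h1 := WW_triangle (r := b / 2) (by linarith) k (-m)
    rw [← sub_eq_add_neg, WW_neg] at h1
    have e1 : WW (-b / 2) (k - m) * WW (b / 2) (k - m) = 1 := by
      rw [neg_div]; exact WW_mul_neg _ _
    have e2 : WW (-b / 2) k * WW (b / 2) k = 1 := by
      rw [neg_div]; exact WW_mul_neg _ _
    calc WW (-b / 2) k * (x m * y (k - m))
        = (WW (-b / 2) (k - m) * WW (b / 2) (k - m)) *
          (WW (-b / 2) k * (x m * y (k - m))) := by rw [e1, one_mul]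
      _ ≤ (WW (-b / 2) (k - m) * (c * (WW (b / 2) k + WW (b / 2) m))) *
          (WW (-b / 2) k * (x m * y (k - m))) := by gcongr
      _ = c * ((WW (-b / 2) k * WW (b / 2) k) * (x m * (WW (-b / 2) (k - m) * y (k - m))) +
          WW (-b / 2) k * ((WW (b / 2) m * x m) * (WW (-b / 2) (k - m) * y (k - m)))) := by ring
      _ = _ := by rw [e2, one_mul]; simp only [wt]
  rw [← ENNReal.tsum_add, ← ENNReal.tsum_mul_left]
  refine ENNReal.tsum_le_tsum fun k => ?_
  calc WW (-b) k * cv x y k ^ 2 = (WW (-b / 2) k * cv x y k) ^ 2 := by rw [mul_pow, WW_sq]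
    _ ≤ (c * (cv x (wt (-b) y) k + WW (-b / 2) k * cv (wt b x) (wt (-b) y) k)) ^ 2 :=
      pow_le_pow_left' (key k) 2
    _ ≤ c ^ 2 * (4 * (cv x (wt (-b) y) k ^ 2 +
        (WW (-b / 2) k * cv (wt b x) (wt (-b) y) k) ^ 2)) := by
      rw [mul_pow]; gcongr; exact add_sq_le4 _ _
    _ = _ := by rw [mul_pow (WW _ _), WW_sq]; ring

/-- The tame product estimate. -/
lemma tame {r : ℝ} (hr : 0 ≤ r) : ∃ C : ℝ≥0∞, C ≠ ⊤ ∧ ∀ x y,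
    ∑' k, WW r k * cv x y k ^ 2 ≤ C * (EN r x * EN (3/2) y + EN (3/2) x * EN r y) := by
  obtain ⟨C, hC, h⟩ := split_pos hr
  obtain ⟨K, hK, hY⟩ := young (σ := 0) (τ := 3/2) le_rfl (by norm_num) (by norm_num)
  obtain ⟨K', hK', hY'⟩ := young (σ := 3/2) (τ := 0) (by norm_num) le_rfl (by norm_num)
  refine ⟨C * (K + K'), ENNReal.mul_ne_top hC (ENNReal.add_ne_top.2 ⟨hK, hK'⟩), fun x y => ?_⟩
  refine (h x y).trans ?_
  have h1 := hY (wt r x) y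
  have h2 := hY' x (wt r y)
  rw [EN_wt, zero_add] at h1 h2
  calc _ ≤ C * (K * (EN r x * EN (3/2) y) + K' * (EN (3/2) x * EN r y)) := by gcongr
    _ ≤ C * ((K + K') * (EN r x * EN (3/2) y) + (K + K') * (EN (3/2) x * EN r y)) := by
      gcongr <;> simp
    _ = _ := by ring

/-- Admissible pairs for the main product estimate. -/
def Adm (α s : ℝ) : Prop :=
  (0 ≤ α ∧ α ≤ 1 ∧ 1 ≤ s) ∨ (-1 ≤ α ∧ α ≤ 0 ∧ 2 ≤ s) ∨ (α ≤ -(3/2) ∧ -α ≤ s) ∨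
    (1 ≤ α ∧ α ≤ s ∧ 3/2 ≤ s)

/-- The main product estimate. -/
lemma prodMain {α s : ℝ} (had : Adm α s) : ∃ C : ℝ≥0∞, C ≠ ⊤ ∧ ∀ x y,
    ∑' k, WW α k * cv x y k ^ 2 ≤ C * (EN s x * EN (α + 1/2) y) := by
  rcases had with ⟨h0, h1, hs⟩ | ⟨h0, h1, hs⟩ | ⟨h0, hs⟩ | ⟨h0, h1, hs⟩
  · obtain ⟨C, hC, h⟩ := split_pos h0
    obtain ⟨K, hK, hY⟩ := young (σ := 1 - α) (τ := α + 1/2) (by linarith) (by linarith)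
      (by linarith)
    obtain ⟨K', hK', hY'⟩ := young (σ := 1) (τ := 1/2) (by norm_num) (by norm_num) (by norm_num)
    refine ⟨C * (K + K'), ENNReal.mul_ne_top hC (ENNReal.add_ne_top.2 ⟨hK, hK'⟩), fun x y => ?_⟩
    refine (h x y).trans ?_
    have h1 := hY (wt α x) y
    have h2 := hY' x (wt α y)
    rw [EN_wt, sub_add_cancel] at h1
    rw [EN_wt, add_comm (1/2)] at h2
    have hm := EN_mono hs x
    calc _ ≤ C * (K * (EN s x * EN (α + 1/2) y) + K' * (EN s x * EN (α + 1/2) y)) := by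
          gcongr
          · exact h1.trans (by gcongr)
          · exact h2.trans (by gcongr)
      _ = _ := by ring
  · obtain ⟨C, hC, h⟩ := split_neg (b := -α) (by linarith)
    obtain ⟨K, hK, hY⟩ := young (σ := 3/2) (τ := 0) (by norm_num) le_rfl (by norm_num)
    obtain ⟨K', hK', hY'⟩ := young (σ := 1) (τ := 1/2) (by norm_num) (by norm_num) (by norm_num)
    refine ⟨C * (K + K'), ENNReal.mul_ne_top hC (ENNReal.add_ne_top.2 ⟨hK, hK'⟩), fun x y => ?_⟩
    have h := h x y
    rw [neg_neg] at h
    refine h.trans ?_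
    have h1 := hY x (wt α y)
    have h2 := hY' (wt (-α) x) (wt α y)
    rw [EN_wt, zero_add] at h1
    rw [EN_wt, EN_wt, add_comm (1/2)] at h2
    have m1 := EN_mono (α := 3/2) (β := s) (by linarith) x
    have m2 := EN_mono (α := 1 + -α) (β := s) (by linarith) x
    have m3 := EN_mono (α := α) (β := α + 1/2) (by linarith) y
    calc _ ≤ C * (K * (EN s x * EN (α + 1/2) y) + K' * (EN s x * EN (α + 1/2) y)) := by
          gcongr
          · exact h1.trans (by gcongr)
          · refine le_trans (ENNReal.tsum_le_tsum fun k => ?_) (h2.trans (by gcongr))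
            have : WW α k ≤ 1 := by rw [← WW_zero k]; exact WW_mono (by linarith) k
            exact mul_le_of_le_one_left' this
      _ = _ := by ring
  · obtain ⟨C, hC, h⟩ := split_neg (b := -α) (by linarith)
    obtain ⟨K, hK, hY⟩ := young (σ := 3/2) (τ := 0) (by norm_num) le_rfl (by norm_num)
    have hK' : ∑' k, WW α k ≠ ⊤ := by
      have := WW_summable (r := -α) (by linarith)
      rwa [neg_neg] at this
    set K' := ∑' k, WW α k
    refine ⟨C * (K + K'), ENNReal.mul_ne_top hC (ENNReal.add_ne_top.2 ⟨hK, hK'⟩), fun x y => ?_⟩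
    have h := h x y
    rw [neg_neg] at h
    refine h.trans ?_
    have h1 := hY x (wt α y)
    rw [EN_wt, zero_add] at h1
    have h2 : ∀ k, cv (wt (-α) x) (wt α y) k ^ 2 ≤ EN (-α) x * EN α y := by
      intro k
      refine (cs_tsum _ _).trans (le_of_eq ?_)
      rw [tsum_subLeft k (fun m => wt α y m ^ 2)]
      have e1 := EN_wt 0 (-α) x
      have e2 := EN_wt 0 α y
      simp only [EN, WW_zero, one_mul, zero_add] at e1 e2
      rw [e1, e2]; rfl
    have m1 := EN_mono (α := 3/2) (β := s) (by linarith) x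
    have m2 := EN_mono (α := -α) (β := s) (by linarith) x
    have m3 := EN_mono (α := α) (β := α + 1/2) (by linarith) y
    calc _ ≤ C * (K * (EN s x * EN (α + 1/2) y) + K' * (EN s x * EN (α + 1/2) y)) := by
          gcongr
          · exact h1.trans (by gcongr)
          · rw [← ENNReal.tsum_mul_right]
            refine ENNReal.tsum_le_tsum fun k => ?_
            gcongr
            exact (h2 k).trans (by gcongr)
      _ = _ := by ring
  · obtain ⟨C, hC, h⟩ := tame (r := α) (by linarith)
    refine ⟨C * 2, ENNReal.mul_ne_top hC (by norm_num), fun x y => (h x y).trans ?_⟩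
    have m1 := EN_mono (α := 3/2) (β := s) (by linarith) x
    have m2 := EN_mono (α := α) (β := s) (by linarith) x
    have m3 := EN_mono (α := α) (β := α + 1/2) (by linarith) y
    have m4 := EN_mono (α := 3/2) (β := α + 1/2) (by linarith) y
    calc _ ≤ C * (EN s x * EN (α + 1/2) y + EN s x * EN (α + 1/2) y) := by gcongr
      _ = _ := by ring

/-- Pairing estimate for a single coefficient. -/
lemma pairK {a s : ℝ} (h : |a| ≤ s) (k : ℤ × ℤ) : ∃ C : ℝ≥0∞, C ≠ ⊤ ∧ ∀ x y,
    cv x y k ^ 2 ≤ C * (EN s x * EN a y) := by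
  have hs : 0 ≤ s := (abs_nonneg a).trans h
  set c := ENNReal.ofReal (4 ^ (s / 2)) * (WW (s / 2) k + 1)
  have hc : c ≠ ⊤ := ENNReal.mul_ne_top ENNReal.ofReal_ne_top
    (ENNReal.add_ne_top.2 ⟨WW_ne_top _ _, by norm_num⟩)
  refine ⟨c ^ 2, ENNReal.pow_ne_top hc, fun x y => ?_⟩
  have key : cv x y k ≤ c * ∑' m, (WW (s / 2) m * x m) * (WW (a / 2) (k - m) * y (k - m)) := by
    unfold cv
    rw [← ENNReal.tsum_mul_left]
    refine ENNReal.tsum_le_tsum fun m => ?_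
    have h1 : 1 ≤ c * (WW (s / 2) m * WW (a / 2) (k - m)) := by
      have h2 := WW_triangle (r := s / 2) (by linarith) k (-m)
      rw [← sub_eq_add_neg, WW_neg] at h2
      have h3 : (1:ℝ≥0∞) ≤ WW (s / 2) m := by
        rw [← WW_zero m]; exact WW_mono (by linarith) m
      have h4 : WW (s / 2) (k - m) ≤ c * WW (s / 2) m := by
        refine h2.trans ?_
        simp only [c]
        rw [mul_assoc]
        gcongr
        rw [add_mul, one_mul]
        gcongr
        calc WW (s / 2) k = WW (s / 2) k * 1 := (mul_one _).symm
          _ ≤ _ := by gcongr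
      calc (1:ℝ≥0∞) = WW (s / 2) (k - m) * WW (-(s / 2)) (k - m) := (WW_mul_neg' _ _).symm
        _ ≤ (c * WW (s / 2) m) * WW (a / 2) (k - m) := by
          gcongr
          exact WW_mono (by linarith [neg_abs_le a]) _
        _ = _ := by ring
    calc x m * y (k - m) = 1 * (x m * y (k - m)) := (one_mul _).symm
      _ ≤ (c * (WW (s / 2) m * WW (a / 2) (k - m))) * (x m * y (k - m)) := by gcongr
      _ = _ := by ring
  calc cv x y k ^ 2 ≤ (c * _) ^ 2 := pow_le_pow_left' key 2
    _ ≤ c ^ 2 * ((∑' m, (WW (s / 2) m * x m) ^ 2) *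
        ∑' m, (WW (a / 2) (k - m) * y (k - m)) ^ 2) := by
      rw [mul_pow]; gcongr; exact cs_tsum _ _
    _ = _ := by
      rw [tsum_subLeft k (fun m => (WW (a / 2) m * y m) ^ 2)]
      simp only [mul_pow, WW_sq]; rfl



/-! ### Bridge between coefficients on `Freq` and on the lattice -/

/-- Extension by zero. -/
def ext (c : Coef) (n : ℤ × ℤ) : ℂ := open Classical in if h : n ≠ 0 then c ⟨n, h⟩ else 0

/-- Modulus sequence. -/
def nx (c : Coef) (n : ℤ × ℤ) : ℝ≥0∞ := ‖ext c n‖ₑ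

/-- Extended Sobolev norm squared. -/
def EE (α : ℝ) (c : Coef) : ℝ≥0∞ := EN α (nx c)

lemma ext_val (c : Coef) (k : Freq) : ext c k.1 = c k := by
  have := k.2
  unfold ext
  rw [dif_pos this]; rfl

lemma ext_zero (c : Coef) : ext c 0 = 0 := by simp [ext]

lemma nx_val (c : Coef) (k : Freq) : nx c k.1 = ‖c k‖ₑ := by rw [nx, ext_val]
lemma nx_zero (c : Coef) : nx c 0 = 0 := by simp [nx, ext_zero]

instance : Countable Freq := inferInstanceAs (Countable {k : ℤ × ℤ // k ≠ 0})

lemma freq_val_inj : Function.Injective (fun k : Freq => (k.1 : ℤ × ℤ)) := Subtype.val_injective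

lemma knormSq_ge_one (k : Freq) : 1 ≤ knormSq k := by
  have h : (1 : ℤ) ≤ k.1.1 ^ 2 + k.1.2 ^ 2 := by
    by_contra hlt
    have h1 : k.1.1 ^ 2 + k.1.2 ^ 2 ≤ 0 := by omega
    have h2 : k.1.1 = 0 := by nlinarith [sq_nonneg k.1.1, sq_nonneg k.1.2]
    have h3 : k.1.2 = 0 := by nlinarith [sq_nonneg k.1.1, sq_nonneg k.1.2]
    exact k.2 (Prod.ext h2 h3)
  unfold knormSq
  exact_mod_cast h

lemma lam_eq (k : Freq) : lam k = LL k.1 := by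
  have h := knormSq_ge_one k
  unfold lam LL
  rw [max_eq_right]
  · rfl
  · have : 1 ≤ 4 * Real.pi ^ 2 := by nlinarith [Real.pi_gt_three]
    change 1 ≤ 4 * Real.pi ^ 2 * knormSq k
    nlinarith

lemma lam_pos (k : Freq) : 0 < lam k := by rw [lam_eq]; exact LL_pos _
lemma one_le_lam (k : Freq) : 1 ≤ lam k := by rw [lam_eq]; exact one_le_LL _

lemma WW_lam (α : ℝ) (k : Freq) : WW α k.1 = ENNReal.ofReal (lam k ^ α) := by
  rw [lam_eq]; rfl

lemma tsum_freq {M : Type*} [AddCommMonoid M] [TopologicalSpace M] [T2Space M]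
    (g : ℤ × ℤ → M) (h : g 0 = 0) : ∑' k : Freq, g k.1 = ∑' k, g k := by
  refine freq_val_inj.tsum_eq (f := g) ?_
  intro n hn
  have : n ≠ 0 := by rintro rfl; exact hn h
  exact ⟨⟨n, this⟩, rfl⟩

lemma tsum_freq_le (g : ℤ × ℤ → ℝ≥0∞) : ∑' k : Freq, g k.1 ≤ ∑' k, g k :=
  ENNReal.tsum_comp_le_tsum_of_injective freq_val_inj g

lemma EE_eq (α : ℝ) (c : Coef) : EE α c = ∑' k : Freq, WW α k.1 * ‖c k‖ₑ ^ 2 := by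
  unfold EE EN
  rw [← tsum_freq _ (by simp [nx_zero])]
  simp only [nx_val]

lemma EE_term (α : ℝ) (c : Coef) (k : Freq) :
    WW α k.1 * ‖c k‖ₑ ^ 2 = ENNReal.ofReal (lam k ^ α * ‖c k‖ ^ 2) := by
  rw [WW_lam, ENNReal.ofReal_mul (Real.rpow_nonneg (lam_pos k).le _),
    ENNReal.ofReal_pow (norm_nonneg _), ofReal_norm]

lemma term_nonneg (α : ℝ) (c : Coef) (k : Freq) : 0 ≤ lam k ^ α * ‖c k‖ ^ 2 :=
  mul_nonneg (Real.rpow_nonneg (lam_pos k).le _) (sq_nonneg _)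

lemma FinH_iff (α : ℝ) (c : Coef) : FinH α c ↔ EE α c ≠ ⊤ := by
  rw [EE_eq]
  simp only [EE_term]
  constructor
  · intro h; exact h.tsum_ofReal_ne_top
  · intro h
    have := ENNReal.summable_toReal h
    refine this.congr fun k => ?_
    rw [ENNReal.toReal_ofReal (term_nonneg _ _ _)]

lemma hSq_eq (α : ℝ) (c : Coef) : hSq α c = (EE α c).toReal := by
  rw [EE_eq]
  simp only [EE_term]
  rw [ENNReal.tsum_toReal_eq (fun _ => ENNReal.ofReal_ne_top)]
  refine tsum_congr fun k => ?_
  rw [ENNReal.toReal_ofReal (term_nonneg _ _ _)]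

lemma hSq_nonneg (α : ℝ) (c : Coef) : 0 ≤ hSq α c := by
  rw [hSq_eq]; exact ENNReal.toReal_nonneg

lemma ofReal_hSq {α : ℝ} {c : Coef} (h : FinH α c) : ENNReal.ofReal (hSq α c) = EE α c := by
  rw [hSq_eq, ENNReal.ofReal_toReal ((FinH_iff _ _).1 h)]

lemma EE_mono {α β : ℝ} (h : α ≤ β) (c : Coef) : EE α c ≤ EE β c := EN_mono h _

lemma EE_term_le (α : ℝ) (c : Coef) (k : Freq) : WW α k.1 * ‖c k‖ₑ ^ 2 ≤ EE α c := by
  rw [EE_eq]; exact ENNReal.le_tsum k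

/-- Squared modulus on the lattice. -/
def nq (k : ℤ × ℤ) : ℝ := (k.1 : ℝ) ^ 2 + (k.2 : ℝ) ^ 2
/-- Cross product on the lattice. -/
def crs (m n : ℤ × ℤ) : ℝ := (m.2 : ℝ) * n.1 - (m.1 : ℝ) * n.2
/-- Dot product on the lattice. -/
def dt (m n : ℤ × ℤ) : ℝ := (m.1 : ℝ) * n.1 + (m.2 : ℝ) * n.2

lemma nq_nonneg (k : ℤ × ℤ) : 0 ≤ nq k := by unfold nq; positivity

lemma crs_le (m n : ℤ × ℤ) : |crs m n| ≤ Real.sqrt (nq m) * Real.sqrt (nq n) := by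
  rw [← Real.sqrt_mul (nq_nonneg m)]
  refine Real.abs_le_sqrt ?_
  unfold crs nq
  nlinarith [sq_nonneg ((m.1 : ℝ) * n.1 + (m.2 : ℝ) * n.2)]

lemma dt_le (m n : ℤ × ℤ) : |dt m n| ≤ Real.sqrt (nq m) * Real.sqrt (nq n) := by
  rw [← Real.sqrt_mul (nq_nonneg m)]
  refine Real.abs_le_sqrt ?_
  unfold dt nq
  nlinarith [sq_nonneg ((m.2 : ℝ) * n.1 - (m.1 : ℝ) * n.2)]

/-- The interaction kernel. -/
def kap (m n : ℤ × ℤ) : ℝ :=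
  crs m n / Real.sqrt (nq m) * (dt n (m + n) / (Real.sqrt (nq n) * Real.sqrt (nq (m + n))))

lemma kap_le (m n : ℤ × ℤ) : |kap m n| ≤ Real.sqrt (nq (m + n)) := by
  have hc : crs m n = crs m (m + n) := by
    unfold crs; push_cast [Prod.fst_add, Prod.snd_add]; ring
  unfold kap
  rw [abs_mul, abs_div, abs_div, abs_of_nonneg (Real.sqrt_nonneg _),
    abs_of_nonneg (mul_nonneg (Real.sqrt_nonneg _) (Real.sqrt_nonneg _)), hc]
  have h1 : |crs m (m + n)| / Real.sqrt (nq m) ≤ Real.sqrt (nq (m + n)) := by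
    refine div_le_of_le_mul₀ (Real.sqrt_nonneg _) (Real.sqrt_nonneg _) ?_
    rw [mul_comm]; exact crs_le _ _
  have h2 : |dt n (m + n)| / (Real.sqrt (nq n) * Real.sqrt (nq (m + n))) ≤ 1 := by
    refine div_le_one_of_le₀ (dt_le _ _) (by positivity)
  calc _ ≤ Real.sqrt (nq (m + n)) * 1 := by
        refine mul_le_mul h1 h2 (by positivity) (Real.sqrt_nonneg _)
    _ = _ := mul_one _

lemma kap_neg (m n : ℤ × ℤ) : kap (-m) (-n) = kap m n := by
  have : -m + -n = -(m + n) := by abel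
  unfold kap
  rw [this]
  have h1 : crs (-m) (-n) = crs m n := by simp [crs]
  have h2 : ∀ j, nq (-j) = nq j := by intro j; simp [nq]
  have h3 : dt (-n) (-(m + n)) = dt n (m + n) := by simp [dt]; ring
  rw [h1, h2, h2, h2, h3]

lemma Bc_eq (c d : Coef) (k : Freq) : Bc c d k = (((2 * Real.pi : ℝ) : ℂ) * Complex.I) *
    ∑' m : ℤ × ℤ, ext c m * ext d (k.1 - m) * ((kap m (k.1 - m) : ℝ) : ℂ) := by
  unfold Bc
  rw [← tsum_freq _ (by simp [ext_zero])]
  congr 1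
  refine tsum_congr fun m => ?_
  by_cases h : k.1 - m.1 ≠ 0
  · rw [dif_pos h, ext_val]
    have : ext d (k.1 - m.1) = d ⟨k.1 - m.1, h⟩ := ext_val d ⟨k.1 - m.1, h⟩
    rw [this]
    congr 2
    unfold kap dotR evec fvec crs dt nq knormSq
    rw [add_sub_cancel]
    simp only
    congr 1
    · ring
    · rw [div_mul_div_comm, div_mul_div_comm, ← add_div]
      ring_nf
  · rw [dif_neg h]
    push Not at h
    rw [h, ext_zero]; simp

lemma sqrt_lam (k : Freq) : WW (1/2) k.1 = ENNReal.ofReal (2 * Real.pi * Real.sqrt (nq k.1)) := by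
  rw [WW_lam, ← Real.sqrt_eq_rpow]
  have : lam k = (2 * Real.pi) ^ 2 * nq k.1 := by unfold lam knormSq nq; ring
  rw [this, Real.sqrt_mul (by positivity), Real.sqrt_sq (by positivity)]

lemma enorm_kterm (c d : Coef) (k : Freq) (m : ℤ × ℤ) :
    ‖ext c m * ext d (k.1 - m) * ((kap m (k.1 - m) : ℝ) : ℂ)‖ₑ ≤
      ENNReal.ofReal (Real.sqrt (nq k.1)) * (nx c m * nx d (k.1 - m)) := by
  rw [enorm_mul, enorm_mul, mul_comm]
  refine mul_le_mul' ?_ le_rfl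
  rw [← ofReal_norm, Complex.norm_real]
  refine ENNReal.ofReal_le_ofReal ?_
  have := kap_le m (k.1 - m)
  rwa [add_sub_cancel] at this

lemma enorm_Bc (c d : Coef) (k : Freq) :
    ‖Bc c d k‖ₑ ≤ WW (1/2) k.1 * cv (nx c) (nx d) k.1 := by
  rw [Bc_eq, enorm_mul, sqrt_lam]
  have h1 : ‖(((2 * Real.pi : ℝ) : ℂ) * Complex.I)‖ₑ = ENNReal.ofReal (2 * Real.pi) := by
    rw [enorm_mul, ← ofReal_norm, ← ofReal_norm, Complex.norm_real,
      Complex.norm_I, Real.norm_of_nonneg (by positivity)]; simp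
  have h2 : ENNReal.ofReal (2 * Real.pi * Real.sqrt (nq k.1)) =
      ENNReal.ofReal (2 * Real.pi) * ENNReal.ofReal (Real.sqrt (nq k.1)) :=
    ENNReal.ofReal_mul (by positivity)
  rw [h1, h2, mul_assoc]
  refine mul_le_mul' le_rfl ?_
  refine enorm_tsum_le_tsum_enorm.trans ?_
  unfold cv
  rw [← ENNReal.tsum_mul_left]
  exact ENNReal.tsum_le_tsum fun m => enorm_kterm c d k m

lemma enorm_Bc_sq (c d : Coef) (k : Freq) :
    ‖Bc c d k‖ₑ ^ 2 ≤ WW 1 k.1 * cv (nx c) (nx d) k.1 ^ 2 := by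
  calc _ ≤ _ := pow_le_pow_left' (enorm_Bc c d k) 2
    _ = _ := by rw [mul_pow, WW_sq]

lemma kterm_summable {c d : Coef} {k : Freq} (h : cv (nx c) (nx d) k.1 ≠ ⊤) :
    Summable fun m : ℤ × ℤ => ext c m * ext d (k.1 - m) * ((kap m (k.1 - m) : ℝ) : ℂ) := by
  refine Summable.of_norm ?_
  have h1 : ∑' m, ‖ext c m * ext d (k.1 - m) * ((kap m (k.1 - m) : ℝ) : ℂ)‖ₑ ≠ ⊤ := by
    refine ne_top_of_le_ne_top (ENNReal.mul_ne_top (a := ENNReal.ofReal (Real.sqrt (nq k.1)))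
      ENNReal.ofReal_ne_top h) ?_
    unfold cv
    rw [← ENNReal.tsum_mul_left]
    exact ENNReal.tsum_le_tsum fun m => enorm_kterm c d k m
  refine (ENNReal.summable_toReal h1).congr fun m => ?_
  simp

lemma ext_neg {c : Coef} (h : IsReal c) (n : ℤ × ℤ) :
    ext c (-n) = - (starRingEnd ℂ) (ext c n) := by
  by_cases hn : n = 0
  · subst hn; simp [ext_zero]
  · have h1 := h ⟨n, hn⟩
    have h2 := ext_val c ⟨n, hn⟩
    have h3 := ext_val c (fneg ⟨n, hn⟩)
    simp only [fneg] at h3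
    rw [h2, ← h1]
    exact h3

lemma isReal_Bc {c d : Coef} (hc : IsReal c) (hd : IsReal d) : IsReal (Bc c d) := by
  intro k
  rw [Bc_eq, Bc_eq, map_mul, map_mul, Complex.conj_I, Complex.conj_ofReal]
  rw [← (Equiv.neg (ℤ × ℤ)).tsum_eq, Complex.conj_tsum]
  have : ∀ m : ℤ × ℤ, ext c (-m) * ext d ((fneg k).1 - -m) * ((kap (-m) ((fneg k).1 - -m) : ℝ) : ℂ)
      = (starRingEnd ℂ) (ext c m * ext d (k.1 - m) * ((kap m (k.1 - m) : ℝ) : ℂ)) := by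
    intro m
    have e : (fneg k).1 - -m = -(k.1 - m) := by simp [fneg]; abel
    rw [e, kap_neg, ext_neg hc, ext_neg hd, map_mul, map_mul, Complex.conj_ofReal]
    ring
  simp only [Equiv.neg_apply, this]
  ring

lemma lam_fneg (k : Freq) : lam (fneg k) = lam k := by
  simp [lam, knormSq, fneg]



/-! ### Scalar energy estimate -/

lemma tsum_lintegral_le {ι α : Type*} [MeasurableSpace α] (m : Measure α) (F : ι → α → ℝ≥0∞) :
    ∑' i, ∫⁻ t, F i t ∂m ≤ ∫⁻ t, ∑' i, F i t ∂m := by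
  classical
  have key : ∀ s : Finset ι, ∑ i ∈ s, ∫⁻ t, F i t ∂m ≤ ∫⁻ t, ∑ i ∈ s, F i t ∂m := by
    intro s
    induction s using Finset.induction_on with
    | empty => simp
    | insert i s hi ih =>
      simp only [Finset.sum_insert hi]
      exact (add_le_add le_rfl ih).trans (le_lintegral_add _ _)
  rw [ENNReal.tsum_eq_iSup_sum]
  refine iSup_le fun s => (key s).trans (lintegral_mono fun t => ENNReal.sum_le_tsum s)

lemma scalar_energy {y h : ℝ → ℂ} {a b μ : ℝ} (hab : a ≤ b) (hμ : 0 < μ)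
    (hc : ContinuousOn y (Icc a b))
    (hd : ∀ t ∈ Ioo a b, HasDerivAt y (h t - (μ : ℂ) * y t) t) :
    ‖y b‖ₑ ^ 2 + ENNReal.ofReal μ * ∫⁻ t in Ioc a b, ‖y t‖ₑ ^ 2 ≤
      ‖y a‖ₑ ^ 2 + ENNReal.ofReal μ⁻¹ * ∫⁻ t in Ioc a b, ‖h t‖ₑ ^ 2 := by
  by_cases htop : ∫⁻ t in Ioc a b, ‖h t‖ₑ ^ 2 = ⊤
  · rw [htop, ENNReal.mul_top (by simpa using hμ)]; simp
  have hae : ∀ᵐ t ∂(volume.restrict (Ioc a b)), t ∈ Ioo a b := by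
    rw [← restrict_Ioo_eq_restrict_Ioc]
    exact ae_restrict_mem measurableSet_Ioo
  have hym : AEStronglyMeasurable y (volume.restrict (Ioc a b)) :=
    (hc.mono Ioc_subset_Icc_self).aestronglyMeasurable measurableSet_Ioc
  have hhm : AEStronglyMeasurable h (volume.restrict (Ioc a b)) := by
    have h1 : AEStronglyMeasurable (fun t => deriv y t + (μ : ℂ) * y t)
        (volume.restrict (Ioc a b)) :=
      (stronglyMeasurable_deriv y).aestronglyMeasurable.add (hym.const_mul _)
    refine h1.congr ?_
    filter_upwards [hae] with t ht
    rw [(hd t ht).deriv]; ring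
  have hyi : IntegrableOn (fun t => ‖y t‖ ^ 2) (Ioc a b) := by
    have : ContinuousOn (fun t => ‖y t‖ ^ 2) (Icc a b) := by fun_prop
    exact this.integrableOn_Icc.mono_set Ioc_subset_Icc_self
  have hsq : ∀ z : ℂ, ENNReal.ofReal (‖z‖ ^ 2) = ‖z‖ₑ ^ 2 := fun z => by
    rw [ENNReal.ofReal_pow (norm_nonneg _), ofReal_norm]
  have hhi : IntegrableOn (fun t => ‖h t‖ ^ 2) (Ioc a b) := by
    refine ⟨(hhm.norm.pow 2), ?_⟩
    rw [hasFiniteIntegral_iff_ofReal (Filter.Eventually.of_forall fun t => by positivity)]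
    simp only [hsq]
    exact lt_top_iff_ne_top.2 htop
  have hφ : IntegrableOn (fun t => μ⁻¹ * ‖h t‖ ^ 2 - μ * ‖y t‖ ^ 2) (Icc a b) := by
    rw [integrableOn_Icc_iff_integrableOn_Ioc]
    exact (hhi.const_mul _).sub (hyi.const_mul _)
  have main := intervalIntegral.sub_le_integral_of_hasDeriv_right_of_le (g := fun t => ‖y t‖ ^ 2)
    (g' := fun t => 2 * inner ℝ (y t) (h t - (μ : ℂ) * y t)) hab (by fun_prop)
    (fun t ht => (hd t ht).norm_sq.hasDerivWithinAt) hφ (by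
      intro t ht
      have e : (μ : ℂ) * y t = μ • y t := by simp
      rw [e, inner_sub_right, inner_smul_right, real_inner_self_eq_norm_sq]
      have h1 : inner ℝ (y t) (h t) ≤ ‖y t‖ * ‖h t‖ := real_inner_le_norm _ _
      have h2 : 2 * (‖y t‖ * ‖h t‖) ≤ μ * ‖y t‖ ^ 2 + μ⁻¹ * ‖h t‖ ^ 2 := by
        have : 0 ≤ μ⁻¹ * (μ * ‖y t‖ - ‖h t‖) ^ 2 := by positivity
        have e2 : μ⁻¹ * (μ * ‖y t‖ - ‖h t‖) ^ 2 =
          μ * ‖y t‖ ^ 2 + μ⁻¹ * ‖h t‖ ^ 2 - 2 * (‖y t‖ * ‖h t‖) := by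
          field_simp; ring
        linarith
      nlinarith)
  rw [intervalIntegral.integral_of_le hab, integral_sub (hhi.const_mul _) (hyi.const_mul _),
    integral_const_mul, integral_const_mul] at main
  have i1 : ENNReal.ofReal (∫ t in Ioc a b, ‖y t‖ ^ 2) = ∫⁻ t in Ioc a b, ‖y t‖ₑ ^ 2 := by
    rw [ofReal_integral_eq_lintegral_ofReal hyi
      (Filter.Eventually.of_forall fun t => by positivity)]
    simp only [hsq]
  have i2 : ENNReal.ofReal (∫ t in Ioc a b, ‖h t‖ ^ 2) = ∫⁻ t in Ioc a b, ‖h t‖ₑ ^ 2 := by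
    rw [ofReal_integral_eq_lintegral_ofReal hhi
      (Filter.Eventually.of_forall fun t => by positivity)]
    simp only [hsq]
  have p1 : 0 ≤ ∫ t in Ioc a b, ‖y t‖ ^ 2 := integral_nonneg fun t => by positivity
  have p2 : 0 ≤ ∫ t in Ioc a b, ‖h t‖ ^ 2 := integral_nonneg fun t => by positivity
  rw [← i1, ← i2, ← hsq, ← hsq, ← ENNReal.ofReal_mul hμ.le, ← ENNReal.ofReal_mul (by positivity),
    ← ENNReal.ofReal_add (by positivity) (by positivity),
    ← ENNReal.ofReal_add (by positivity) (by positivity)]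
  refine ENNReal.ofReal_le_ofReal ?_
  linarith

/-- Supremum of a coefficient on a time interval. -/
def sp (a b : ℝ) (y : ℝ → Coef) (k : Freq) : ℝ≥0∞ := ⨆ t ∈ Icc a b, ‖y t k‖ₑ

lemma le_sp {a b t : ℝ} (y : ℝ → Coef) (k : Freq) (ht : t ∈ Icc a b) : ‖y t k‖ₑ ≤ sp a b y k :=
  le_iSup₂ (f := fun t (_ : t ∈ Icc a b) => ‖y t k‖ₑ) t ht

/-- Energy norm. -/
def NN (α : ℝ) (μ : Freq → ℝ) (a b : ℝ) (y : ℝ → Coef) : ℝ≥0∞ :=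
  ∑' k : Freq, WW α k.1 * (sp a b y k ^ 2 +
    ENNReal.ofReal (μ k) * ∫⁻ t in Ioc a b, ‖y t k‖ₑ ^ 2)

lemma scalar_energy_sup {y : ℝ → Coef} {k : Freq} {h : ℝ → ℂ} {a b μ : ℝ} (hab : a ≤ b) (hμ : 0 < μ)
    (hc : ContinuousOn (fun t => y t k) (Icc a b))
    (hd : ∀ t ∈ Ioo a b, HasDerivAt (fun t => y t k) (h t - (μ : ℂ) * y t k) t) :
    sp a b y k ^ 2 + ENNReal.ofReal μ * ∫⁻ t in Ioc a b, ‖y t k‖ₑ ^ 2 ≤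
      2 * (‖y a k‖ₑ ^ 2 + ENNReal.ofReal μ⁻¹ * ∫⁻ t in Ioc a b, ‖h t‖ₑ ^ 2) := by
  rw [two_mul]
  refine add_le_add ?_ (le_trans le_add_self (scalar_energy hab hμ hc hd))
  have : ∀ t ∈ Icc a b, ‖y t k‖ₑ ^ 2 ≤
      ‖y a k‖ₑ ^ 2 + ENNReal.ofReal μ⁻¹ * ∫⁻ t in Ioc a b, ‖h t‖ₑ ^ 2 := by
    intro t ht
    have h1 := scalar_energy (y := fun t => y t k) (h := h) ht.1 hμ
      (hc.mono (Icc_subset_Icc le_rfl ht.2))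
      (fun s hs => hd s ⟨hs.1, hs.2.trans_le ht.2⟩)
    refine le_self_add.trans (h1.trans ?_)
    gcongr
    exact ht.2
  have h2 : sp a b y k ≤ (‖y a k‖ₑ ^ 2 + ENNReal.ofReal μ⁻¹ *
      ∫⁻ t in Ioc a b, ‖h t‖ₑ ^ 2) ^ (1/2 : ℝ) := by
    refine iSup₂_le fun t ht => ?_
    rw [← ENNReal.rpow_one ‖y t k‖ₑ]
    rw [show (1:ℝ) = 2 * (1/2) by norm_num, ENNReal.rpow_mul]
    norm_num
    exact ENNReal.rpow_le_rpow (this t ht) (by norm_num)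
  calc _ ≤ _ := pow_le_pow_left' h2 2
    _ = _ := by
      rw [← ENNReal.rpow_natCast, ← ENNReal.rpow_mul]; norm_num

/-- Summed energy estimate. -/
lemma energy_sum {α ν a b : ℝ} {μ : Freq → ℝ} {y h : ℝ → Coef} {G : ℝ → Freq → ℝ≥0∞}
    (hab : a ≤ b) (hν : 0 < ν)
    (hμ : ∀ k, ν * lam k ≤ μ k)
    (hc : ∀ k, ContinuousOn (fun t => y t k) (Icc a b))
    (hd : ∀ k, ∀ t ∈ Ioo a b, HasDerivAt (fun t => y t k) (h t k - (μ k : ℂ) * y t k) t)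
    (hG : ∀ t ∈ Ioc a b, ∀ k, ‖h t k‖ₑ ^ 2 ≤ WW 1 k.1 * G t k) :
    NN α μ a b y ≤ 2 * (EE α (y a) +
      ENNReal.ofReal ν⁻¹ * ∫⁻ t in Ioc a b, ∑' k : Freq, WW α k.1 * G t k) := by
  have hμ0 : ∀ k, 0 < μ k := fun k => (mul_pos hν (lam_pos k)).trans_le (hμ k)
  unfold NN
  calc _ ≤ ∑' k : Freq, 2 * (WW α k.1 * ‖y a k‖ₑ ^ 2 +
        ENNReal.ofReal ν⁻¹ * ∫⁻ t in Ioc a b, WW α k.1 * G t k) := by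
        refine ENNReal.tsum_le_tsum fun k => ?_
        calc _ ≤ WW α k.1 * (2 * (‖y a k‖ₑ ^ 2 + ENNReal.ofReal (μ k)⁻¹ *
              ∫⁻ t in Ioc a b, ‖h t k‖ₑ ^ 2)) :=
              mul_le_mul' le_rfl (scalar_energy_sup hab (hμ0 k) (hc k) (hd k))
          _ ≤ WW α k.1 * (2 * (‖y a k‖ₑ ^ 2 + ENNReal.ofReal ν⁻¹ *
              ∫⁻ t in Ioc a b, G t k)) := by
              gcongr WW α k.1 * (2 * (_ + ?_))
              have e1 : ENNReal.ofReal (μ k)⁻¹ * WW 1 k.1 ≤ ENNReal.ofReal ν⁻¹ := by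
                rw [WW_lam, Real.rpow_one, ← ENNReal.ofReal_mul (by have := hμ0 k; positivity)]
                refine ENNReal.ofReal_le_ofReal ?_
                rw [inv_mul_eq_div, div_le_iff₀ (hμ0 k), inv_mul_eq_div, le_div_iff₀ hν]
                linarith [hμ k]
              calc _ ≤ ENNReal.ofReal (μ k)⁻¹ * ∫⁻ t in Ioc a b, WW 1 k.1 * G t k := by
                    gcongr 1
                    exact setLIntegral_mono' measurableSet_Ioc fun t ht => hG t ht k
                _ = ENNReal.ofReal (μ k)⁻¹ * WW 1 k.1 * ∫⁻ t in Ioc a b, G t k := by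
                    rw [lintegral_const_mul' _ _ (WW_ne_top _ _), mul_assoc]
                _ ≤ _ := mul_le_mul' e1 le_rfl
          _ = _ := by
              rw [lintegral_const_mul' _ _ (WW_ne_top _ _)]; ring
    _ = 2 * (EE α (y a) + ENNReal.ofReal ν⁻¹ *
          ∑' k : Freq, ∫⁻ t in Ioc a b, WW α k.1 * G t k) := by
        rw [ENNReal.tsum_mul_left, ENNReal.tsum_add, ENNReal.tsum_mul_left, EE_eq]
    _ ≤ _ := by
        gcongr
        exact tsum_lintegral_le _ _

lemma EE_le_NN {α : ℝ} {μ : Freq → ℝ} {a b t : ℝ} (y : ℝ → Coef) (ht : t ∈ Icc a b) :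
    EE α (y t) ≤ NN α μ a b y := by
  rw [EE_eq]
  refine ENNReal.tsum_le_tsum fun k => mul_le_mul' le_rfl ?_
  exact (pow_le_pow_left' (le_sp y k ht) 2).trans le_self_add

lemma lint_EE {α a b : ℝ} {y : ℝ → Coef} (hc : ∀ k, ContinuousOn (fun t => y t k) (Icc a b)) :
    ∫⁻ t in Ioc a b, EE α (y t) = ∑' k : Freq, WW α k.1 * ∫⁻ t in Ioc a b, ‖y t k‖ₑ ^ 2 := by
  simp only [EE_eq]
  have hm : ∀ k, AEMeasurable (fun t => ‖y t k‖ₑ ^ 2) (volume.restrict (Ioc a b)) := fun k =>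
    (((hc k).mono Ioc_subset_Icc_self).aestronglyMeasurable measurableSet_Ioc).enorm.pow_const 2
  rw [lintegral_tsum fun k => (hm k).const_mul _]
  refine tsum_congr fun k => ?_
  rw [lintegral_const_mul' _ _ (WW_ne_top _ _)]

lemma lint_EE_le {α ν a b : ℝ} {μ : Freq → ℝ} {y : ℝ → Coef} (hν : 0 < ν)
    (hμ : ∀ k, ν * lam k ≤ μ k)
    (hc : ∀ k, ContinuousOn (fun t => y t k) (Icc a b)) :
    ∫⁻ t in Ioc a b, EE (α + 1) (y t) ≤ ENNReal.ofReal ν⁻¹ * NN α μ a b y := by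
  rw [lint_EE hc, NN, ← ENNReal.tsum_mul_left]
  refine ENNReal.tsum_le_tsum fun k => ?_
  have : WW (α + 1) k.1 ≤ ENNReal.ofReal ν⁻¹ * (WW α k.1 * ENNReal.ofReal (μ k)) := by
    rw [WW_add, mul_left_comm]
    refine mul_le_mul' le_rfl ?_
    rw [WW_lam, Real.rpow_one, ← ENNReal.ofReal_mul (by positivity)]
    refine ENNReal.ofReal_le_ofReal ?_
    rw [inv_mul_eq_div, le_div_iff₀ hν]; linarith [hμ k]
  calc _ ≤ ENNReal.ofReal ν⁻¹ * (WW α k.1 * ENNReal.ofReal (μ k)) *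
        ∫⁻ t in Ioc a b, ‖y t k‖ₑ ^ 2 := mul_le_mul' this le_rfl
    _ = ENNReal.ofReal ν⁻¹ * (WW α k.1 * (ENNReal.ofReal (μ k) *
        ∫⁻ t in Ioc a b, ‖y t k‖ₑ ^ 2)) := by ring
    _ ≤ _ := by gcongr; exact le_add_self



/-! ### Enstrophy cancellation -/

/-- Rescaled coefficient. -/
def wx (c : Coef) (n : ℤ × ℤ) : ℂ := ext c n * (((Real.sqrt (nq n))⁻¹ : ℝ) : ℂ)

lemma nq_neg (n : ℤ × ℤ) : nq (-n) = nq n := by simp [nq]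

lemma wx_neg {c : Coef} (h : IsReal c) (n : ℤ × ℤ) : wx c (-n) = - (starRingEnd ℂ) (wx c n) := by
  unfold wx
  rw [ext_neg h, nq_neg, map_mul, Complex.conj_ofReal]; ring

/-- Trilinear term. -/
def Dx (c : Coef) (k m : ℤ × ℤ) : ℂ :=
  wx c m * wx c (k - m) * (starRingEnd ℂ) (wx c k) * ((crs m (k - m) : ℝ) : ℂ)

/-- The real part of the cancellation. -/
def Px (c : Coef) (k m : ℤ × ℤ) : ℂ := Dx c k m * ((nq (k - m) * nq k : ℝ) : ℂ)

/-- Transport term. -/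
def Tx (c : Coef) (k m : ℤ × ℤ) : ℂ := Dx c k m * ((dt (k - m) k * nq k : ℝ) : ℂ)

lemma Dx_swap (c : Coef) (k m : ℤ × ℤ) : Dx c k (k - m) = - Dx c k m := by
  unfold Dx
  rw [sub_sub_cancel]
  have : crs (k - m) m = - crs m (k - m) := by unfold crs; ring
  rw [this]; push_cast; ring

lemma Tx_symm (c : Coef) (k m : ℤ × ℤ) :
    Tx c k m + Tx c k (k - m) = Px c k m + Px c k (k - m) := by
  unfold Tx Px
  rw [Dx_swap, sub_sub_cancel]
  have : dt (k - m) k * nq k - dt m k * nq k = nq (k - m) * nq k - nq m * nq k := by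
    unfold dt nq; push_cast [Prod.fst_sub, Prod.snd_sub]; ring
  have h2 := congrArg (fun x : ℝ => (x : ℂ)) this
  simp only [Complex.ofReal_sub] at h2
  linear_combination (Dx c k m) * h2

lemma Px_conj {c : Coef} (h : IsReal c) (k m : ℤ × ℤ) :
    Px c (k - m) (-m) = (starRingEnd ℂ) (Px c k m) := by
  unfold Px Dx
  rw [wx_neg h, sub_neg_eq_add, sub_add_cancel]
  have : crs (-m) k = - crs m (k - m) := by
    unfold crs; push_cast [Prod.fst_sub, Prod.snd_sub, Prod.fst_neg, Prod.snd_neg]; ring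
  rw [this]
  simp only [map_mul, Complex.conj_ofReal, Complex.conj_conj]
  push_cast; ring

lemma Tx_eq (c : Coef) (k : Freq) (m : ℤ × ℤ) :
    Tx c k.1 m = ext c m * ext c (k.1 - m) * ((kap m (k.1 - m) : ℝ) : ℂ) *
      ((nq k.1 : ℂ) * (starRingEnd ℂ) (c k)) := by
  unfold Tx Dx wx kap
  rw [add_sub_cancel, ext_val]
  simp only [map_mul, Complex.conj_ofReal]
  push_cast
  simp only [div_eq_mul_inv, mul_inv]
  ring

lemma ofReal_sqrt_nq_le (n : ℤ × ℤ) : ENNReal.ofReal (Real.sqrt (nq n)) ≤ WW (1/2) n := by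
  unfold WW
  refine ENNReal.ofReal_le_ofReal ?_
  rw [← Real.sqrt_eq_rpow]
  refine Real.sqrt_le_sqrt ?_
  unfold LL nq
  refine le_trans ?_ (le_max_right _ _)
  have : 1 ≤ 4 * Real.pi ^ 2 := by nlinarith [Real.pi_gt_three]
  nlinarith [sq_nonneg (n.1 : ℝ), sq_nonneg (n.2 : ℝ)]

lemma ofReal_nq_le (n : ℤ × ℤ) : ENNReal.ofReal (nq n) ≤ WW 1 n := by
  have h := pow_le_pow_left' (ofReal_sqrt_nq_le n) 2
  rwa [WW_sq, ← ENNReal.ofReal_pow (Real.sqrt_nonneg _), Real.sq_sqrt (nq_nonneg n)] at h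

lemma Px_norm (c : Coef) (k m : ℤ × ℤ) :
    ‖Px c k m‖ ≤ ‖ext c m‖ * (Real.sqrt (nq (k - m)) * ‖ext c (k - m)‖) * (nq k * ‖ext c k‖) := by
  have hc : crs m (k - m) = crs m k := by
    unfold crs; push_cast [Prod.fst_sub, Prod.snd_sub]; ring
  unfold Px Dx wx
  simp only [norm_mul, RCLike.norm_conj, Complex.norm_real, Real.norm_eq_abs]
  rw [abs_of_nonneg (nq_nonneg k), abs_of_nonneg (nq_nonneg (k - m)), hc,
    abs_of_nonneg (inv_nonneg.2 (Real.sqrt_nonneg (nq m))),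
    abs_of_nonneg (inv_nonneg.2 (Real.sqrt_nonneg (nq k))),
    abs_of_nonneg (inv_nonneg.2 (Real.sqrt_nonneg (nq (k - m))))]
  have h0 := crs_le m k
  set A := Real.sqrt (nq m)
  set C := Real.sqrt (nq k)
  set D := Real.sqrt (nq (k - m)) with hD
  have e1 : nq (k - m) = D * D := by rw [hD, Real.mul_self_sqrt (nq_nonneg _)]
  rw [e1]
  have hA : 0 ≤ A := Real.sqrt_nonneg _
  have hC : 0 ≤ C := Real.sqrt_nonneg _
  have hDn : 0 ≤ D := Real.sqrt_nonneg _
  have hk := nq_nonneg k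
  have i1 : A⁻¹ * A ≤ 1 := inv_mul_le_one
  have i2 : C⁻¹ * C ≤ 1 := inv_mul_le_one
  have i3 : D⁻¹ * D ≤ 1 := inv_mul_le_one
  calc _ = (‖ext c m‖ * ‖ext c (k - m)‖ * ‖ext c k‖ * nq k * D * A⁻¹ * C⁻¹ * (D⁻¹ * D)) *
        |crs m k| := by ring
    _ ≤ (‖ext c m‖ * ‖ext c (k - m)‖ * ‖ext c k‖ * nq k * D * A⁻¹ * C⁻¹ * 1) * (A * C) := by
        gcongr
    _ = (‖ext c m‖ * ‖ext c (k - m)‖ * ‖ext c k‖ * nq k * D) * ((A⁻¹ * A) * (C⁻¹ * C)) := by ring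
    _ ≤ (‖ext c m‖ * ‖ext c (k - m)‖ * ‖ext c k‖ * nq k * D) * (1 * 1) := by gcongr
    _ = _ := by ring

lemma Px_enorm (c : Coef) (k m : ℤ × ℤ) :
    ‖Px c k m‖ₑ ≤ (WW 1 k * nx c k) * (nx c m * (WW (1/2) (k - m) * nx c (k - m))) := by
  rw [← ofReal_norm]
  refine (ENNReal.ofReal_le_ofReal (Px_norm c k m)).trans ?_
  rw [ENNReal.ofReal_mul (by positivity), ENNReal.ofReal_mul (by positivity),
    ENNReal.ofReal_mul (by positivity), ENNReal.ofReal_mul (nq_nonneg _), ofReal_norm,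
    ofReal_norm, ofReal_norm, mul_comm]
  refine mul_le_mul' (mul_le_mul' (ofReal_nq_le _) le_rfl)
    (mul_le_mul' le_rfl (mul_le_mul' (ofReal_sqrt_nq_le _) le_rfl))

lemma ofReal_amgm (x y : ℝ≥0∞) : x * y ≤ x ^ 2 + y ^ 2 := by
  rcases le_total x y with h | h
  · calc x * y ≤ y * y := mul_le_mul' h le_rfl
      _ = y ^ 2 := (sq y).symm
      _ ≤ _ := le_add_self
  · calc x * y ≤ x * x := mul_le_mul' le_rfl h
      _ = x ^ 2 := (sq x).symm
      _ ≤ _ := le_self_add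

lemma Px_sum {c : Coef} (h2 : EE 2 c ≠ ⊤) :
    ∑' p : (ℤ × ℤ) × (ℤ × ℤ), ‖Px c p.1 p.2‖ₑ ≠ ⊤ := by
  obtain ⟨K, hK, hy⟩ := young (σ := 3/2) (τ := 0) (by norm_num) le_rfl (by norm_num)
  rw [ENNReal.tsum_prod (f := fun k m => ‖Px c k m‖ₑ)]
  have hE : EE (3/2) c ≠ ⊤ := ne_top_of_le_ne_top h2 (EE_mono (by norm_num) c)
  have hE1 : EE 1 c ≠ ⊤ := ne_top_of_le_ne_top h2 (EE_mono (by norm_num) c)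
  refine ne_top_of_le_ne_top (b := EE 2 c + K * (EE (3/2) c * EE 1 c)) ?_ ?_
  · exact ENNReal.add_ne_top.2 ⟨h2, ENNReal.mul_ne_top hK (ENNReal.mul_ne_top hE hE1)⟩
  calc _ ≤ ∑' k, (WW 1 k * nx c k) * cv (nx c) (fun n => WW (1/2) n * nx c n) k := by
        refine ENNReal.tsum_le_tsum fun k => ?_
        unfold cv
        rw [← ENNReal.tsum_mul_left]
        exact ENNReal.tsum_le_tsum fun m => Px_enorm c k m
    _ ≤ ∑' k, ((WW 1 k * nx c k) ^ 2 + cv (nx c) (fun n => WW (1/2) n * nx c n) k ^ 2) :=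
        ENNReal.tsum_le_tsum fun k => ofReal_amgm _ _
    _ ≤ _ := by
        rw [ENNReal.tsum_add]
        refine add_le_add (le_of_eq ?_) ((hy _ _).trans (le_of_eq ?_))
        · unfold EE EN
          refine tsum_congr fun k => ?_
          have := WW_sq 2 k
          norm_num at this
          rw [mul_pow, this]
        · congr 2
          unfold EE EN
          refine tsum_congr fun k => ?_
          rw [mul_pow, WW_sq, WW_zero, one_mul]

lemma summable_of_enorm {ι : Type*} {g : ι → ℂ} (h : ∑' i, ‖g i‖ₑ ≠ ⊤) : Summable g := by
  refine Summable.of_norm ?_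
  refine (ENNReal.summable_toReal h).congr fun m => ?_
  simp

lemma Bc_enstrophy {c : Coef} (h2 : EE 2 c ≠ ⊤) (k : Freq)
    (hcv : cv (nx c) (nx c) k.1 ≠ ⊤) :
    ((lam k : ℝ) : ℂ) * (Bc c c k * (starRingEnd ℂ) (c k)) =
      (((2 * Real.pi : ℝ) : ℂ) * Complex.I) * ((4 * Real.pi ^ 2 : ℝ) : ℂ) *
        ∑' m : ℤ × ℤ, Px c k.1 m := by
  have hP : Summable fun m => Px c k.1 m := by
    refine summable_of_enorm ?_
    have := Px_sum h2
    rw [ENNReal.tsum_prod (f := fun k m => ‖Px c k m‖ₑ)] at this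
    exact ne_top_of_le_ne_top this (ENNReal.le_tsum k.1)
  have hT : Summable fun m => Tx c k.1 m := by
    have := (kterm_summable hcv).mul_right ((nq k.1 : ℂ) * (starRingEnd ℂ) (c k))
    refine this.congr fun m => ?_
    rw [Tx_eq]
  have e : ∑' m, Tx c k.1 m = ∑' m, Px c k.1 m := by
    have hT2 : Summable fun m => Tx c k.1 (k.1 - m) := (Equiv.subLeft k.1).summable_iff.2 hT
    have hP2 : Summable fun m => Px c k.1 (k.1 - m) := (Equiv.subLeft k.1).summable_iff.2 hP
    have a1 : ∑' m, Tx c k.1 (k.1 - m) = ∑' m, Tx c k.1 m := (Equiv.subLeft k.1).tsum_eq _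
    have a2 : ∑' m, Px c k.1 (k.1 - m) = ∑' m, Px c k.1 m := (Equiv.subLeft k.1).tsum_eq _
    have := hT.tsum_add hT2
    simp only [Tx_symm] at this
    rw [hP.tsum_add hP2, a1, a2] at this
    linear_combination (-1/2) * this
  rw [← e, Bc_eq]
  have : lam k = 4 * Real.pi ^ 2 * nq k.1 := rfl
  rw [this]
  simp only [Tx_eq]
  rw [tsum_mul_right]
  push_cast; ring

lemma cv_ne_top_of_sum {c d : Coef} {α : ℝ}
    (h : ∑' k, WW α k * cv (nx c) (nx d) k ^ 2 ≠ ⊤) (k : ℤ × ℤ) : cv (nx c) (nx d) k ≠ ⊤ := by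
  intro htop
  refine h (top_le_iff.1 ?_)
  refine le_trans ?_ (ENNReal.le_tsum k)
  rw [htop]; simp [ENNReal.mul_top, WW_ne_zero]

lemma enstrophy {c : Coef} (hc : IsReal c) (h2 : EE 2 c ≠ ⊤) :
    ∑' k : Freq, lam k * (Bc c c k * (starRingEnd ℂ) (c k)).re = 0 := by
  obtain ⟨C, hC, ht⟩ := tame (r := 1) (by norm_num)
  have hcv : ∀ k, cv (nx c) (nx c) k ≠ ⊤ := by
    refine cv_ne_top_of_sum (α := 1) (ne_top_of_le_ne_top ?_ (ht _ _))
    have hE : EN (3/2) (nx c) ≠ ⊤ := ne_top_of_le_ne_top h2 (EE_mono (by norm_num) c)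
    have hE1 : EN 1 (nx c) ≠ ⊤ := ne_top_of_le_ne_top h2 (EE_mono (by norm_num) c)
    exact ENNReal.mul_ne_top hC (ENNReal.add_ne_top.2
      ⟨ENNReal.mul_ne_top hE1 hE, ENNReal.mul_ne_top hE hE1⟩)
  have hsum : Summable fun p : (ℤ × ℤ) × (ℤ × ℤ) => Px c p.1 p.2 := summable_of_enorm (Px_sum h2)
  have hS : (starRingEnd ℂ) (∑' p : (ℤ × ℤ) × (ℤ × ℤ), Px c p.1 p.2) =
      ∑' p : (ℤ × ℤ) × (ℤ × ℤ), Px c p.1 p.2 := by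
    rw [Complex.conj_tsum]
    let σ : (ℤ × ℤ) × (ℤ × ℤ) ≃ (ℤ × ℤ) × (ℤ × ℤ) :=
      { toFun := fun p => (p.1 - p.2, -p.2)
        invFun := fun p => (p.1 - p.2, -p.2)
        left_inv := fun p => by simp
        right_inv := fun p => by simp }
    rw [← σ.tsum_eq (fun p => Px c p.1 p.2)]
    exact tsum_congr fun p => (Px_conj hc p.1 p.2).symm
  have hre : ∀ k : Freq, lam k * (Bc c c k * (starRingEnd ℂ) (c k)).re =
      ((((2 * Real.pi : ℝ) : ℂ) * Complex.I) * ((4 * Real.pi ^ 2 : ℝ) : ℂ) *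
        ∑' m : ℤ × ℤ, Px c k.1 m).re := by
    intro k
    rw [← Bc_enstrophy h2 k (hcv _), Complex.re_ofReal_mul]
  simp only [hre]
  have hs1 : Summable fun k : ℤ × ℤ => ∑' m : ℤ × ℤ, Px c k m := hsum.prod
  have hs2 : Summable fun k : Freq => ∑' m : ℤ × ℤ, Px c k.1 m :=
    hs1.comp_injective freq_val_inj
  rw [← Complex.re_tsum (hs2.mul_left _), tsum_mul_left, tsum_freq (fun k => ∑' m : ℤ × ℤ, Px c k m)]
  · rw [← hsum.tsum_prod]
    have him := Complex.conj_eq_iff_im.1 hS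
    have e : (((2 * Real.pi : ℝ) : ℂ) * Complex.I) * ((4 * Real.pi ^ 2 : ℝ) : ℂ) =
        ((2 * Real.pi * (4 * Real.pi ^ 2) : ℝ) : ℂ) * Complex.I := by push_cast; ring
    rw [e, mul_assoc, Complex.re_ofReal_mul, Complex.I_mul_re, him]; simp
  · have : ∀ m, Px c 0 m = 0 := by intro m; simp [Px, nq]
    simp [this]



/-! ### Trajectories -/

lemma enorm_sq_add_le (z w : ℂ) : ‖z + w‖ₑ ^ 2 ≤ 4 * (‖z‖ₑ ^ 2 + ‖w‖ₑ ^ 2) :=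
  (pow_le_pow_left' (enorm_add_le z w) 2).trans (add_sq_le4 _ _)

lemma enorm_sq_sub_le (z w : ℂ) : ‖z - w‖ₑ ^ 2 ≤ 4 * (‖z‖ₑ ^ 2 + ‖w‖ₑ ^ 2) := by
  have := enorm_sq_add_le z (-w)
  rwa [← sub_eq_add_neg, enorm_neg] at this

lemma EE_sub_le (α : ℝ) (c d : Coef) : EE α (c - d) ≤ 4 * (EE α c + EE α d) := by
  simp only [EE_eq]
  rw [← ENNReal.tsum_add, ← ENNReal.tsum_mul_left]
  refine ENNReal.tsum_le_tsum fun k => ?_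
  calc _ ≤ WW α k.1 * (4 * (‖c k‖ₑ ^ 2 + ‖d k‖ₑ ^ 2)) :=
        mul_le_mul' le_rfl (enorm_sq_sub_le (c k) (d k))
    _ = _ := by ring

lemma EE_le_sub (α : ℝ) (c d : Coef) : EE α c ≤ 4 * (EE α (c - d) + EE α d) := by
  simp only [EE_eq]
  rw [← ENNReal.tsum_add, ← ENNReal.tsum_mul_left]
  refine ENNReal.tsum_le_tsum fun k => ?_
  have h := enorm_sq_add_le (c k - d k) (d k)
  rw [sub_add_cancel] at h
  calc _ ≤ WW α k.1 * (4 * (‖c k - d k‖ₑ ^ 2 + ‖d k‖ₑ ^ 2)) := mul_le_mul' le_rfl h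
    _ = _ := by simp only [Pi.sub_apply]; ring

lemma EE_of_hN_lt {α ε : ℝ} {c : Coef} (h : EE α c ≠ ⊤) (hε : hN α c < ε) :
    EE α c ≤ ENNReal.ofReal (ε ^ 2) := by
  have hF := (FinH_iff α c).2 h
  rw [← ofReal_hSq hF]
  refine ENNReal.ofReal_le_ofReal ?_
  unfold hN at hε
  have h0 : 0 ≤ Real.sqrt (hSq α c) := Real.sqrt_nonneg _
  rw [← Real.sq_sqrt (hSq_nonneg α c)]
  exact pow_le_pow_left₀ h0 hε.le 2

lemma ContH_cont {α T : ℝ} {u : ℝ → Coef} (hu : ContH α T u)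
    (hf : ∀ t ∈ Icc 0 T, EE α (u t) ≠ ⊤) (k : Freq) : ContinuousOn (fun t => u t k) (Icc 0 T) := by
  rw [Metric.continuousOn_iff]
  intro t ht ε hε
  have hl : 0 < lam k ^ α := Real.rpow_pos_of_pos (lam_pos k) _
  obtain ⟨δ, hδ, h⟩ := hu t ht (Real.sqrt (lam k ^ α) * ε) (by positivity)
  refine ⟨δ, hδ, fun s hs hst => ?_⟩
  have h1 := h s hs hst
  have hfin : EE α (u s - u t) ≠ ⊤ := ne_top_of_le_ne_top
    (ENNReal.mul_ne_top (by norm_num) (ENNReal.add_ne_top.2 ⟨hf s hs, hf t ht⟩)) (EE_sub_le _ _ _)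
  have h2 : lam k ^ α * ‖(u s - u t) k‖ ^ 2 ≤ hSq α (u s - u t) :=
    ((FinH_iff _ _).2 hfin).le_tsum k (fun j _ => term_nonneg _ _ _)
  have h3 : Real.sqrt (lam k ^ α) * ‖(u s - u t) k‖ ≤ hN α (u s - u t) := by
    unfold hN
    refine Real.le_sqrt_of_sq_le ?_
    rw [mul_pow, Real.sq_sqrt hl.le]; exact h2
  rw [dist_eq_norm]
  have h4 := h3.trans_lt h1
  exact lt_of_mul_lt_mul_left h4 (Real.sqrt_nonneg _)

lemma ContH_bdd {α T : ℝ} {u : ℝ → Coef} (hu : ContH α T u)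
    (hf : ∀ t ∈ Icc 0 T, EE α (u t) ≠ ⊤) :
    ∃ M : ℝ≥0∞, M ≠ ⊤ ∧ ∀ t ∈ Icc 0 T, EE α (u t) ≤ M := by
  have hK : IsCompact (Icc (0:ℝ) T) := isCompact_Icc
  refine hK.induction_on (p := fun S => ∃ M : ℝ≥0∞, M ≠ ⊤ ∧ ∀ t ∈ S, EE α (u t) ≤ M) ?_ ?_ ?_ ?_
  · exact ⟨0, by simp, by simp⟩
  · rintro s t hst ⟨M, hM, h⟩
    exact ⟨M, hM, fun x hx => h x (hst hx)⟩
  · rintro s t ⟨M, hM, h⟩ ⟨M', hM', h'⟩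
    refine ⟨M + M', ENNReal.add_ne_top.2 ⟨hM, hM'⟩, ?_⟩
    rintro x (hx | hx)
    · exact (h x hx).trans le_self_add
    · exact (h' x hx).trans le_add_self
  · intro t ht
    obtain ⟨δ, hδ, h⟩ := hu t ht 1 one_pos
    refine ⟨Icc 0 T ∩ Metric.ball t δ, ?_, 4 * (ENNReal.ofReal (1 ^ 2) + EE α (u t)), ?_, ?_⟩
    · exact inter_mem_nhdsWithin _ (Metric.ball_mem_nhds t hδ)
    · exact ENNReal.mul_ne_top (by norm_num) (ENNReal.add_ne_top.2 ⟨ENNReal.ofReal_ne_top, hf t ht⟩)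
    · rintro s ⟨hs, hst⟩
      have hfin : EE α (u s - u t) ≠ ⊤ := ne_top_of_le_ne_top
        (ENNReal.mul_ne_top (by norm_num) (ENNReal.add_ne_top.2 ⟨hf s hs, hf t ht⟩))
        (EE_sub_le _ _ _)
      refine (EE_le_sub α (u s) (u t)).trans ?_
      gcongr
      exact EE_of_hN_lt hfin (h s hs hst)

lemma lint_of_MemL2H {α T : ℝ} {u : ℝ → Coef} (h : MemL2H α T u) :
    ∫⁻ t in Ioc 0 T, EE α (u t) ≠ ⊤ := by
  have h1 := h.2.2
  rw [hasFiniteIntegral_iff_ofReal (Filter.Eventually.of_forall fun t => hSq_nonneg _ _)] at h1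
  have : ∫⁻ t in Ioc 0 T, EE α (u t) = ∫⁻ t in Ioc 0 T, ENNReal.ofReal (hSq α (u t)) :=
    setLIntegral_congr_fun measurableSet_Ioc fun t ht => (ofReal_hSq (h.1 t ht).2).symm
  rw [this]
  exact h1.ne

lemma tame_Bc {r : ℝ} (hr : 0 ≤ r) : ∃ C : ℝ≥0∞, C ≠ ⊤ ∧ ∀ c d : Coef,
    ∑' k : Freq, WW r k.1 * cv (nx c) (nx d) k.1 ^ 2 ≤
      C * (EE r c * EE (3/2) d + EE (3/2) c * EE r d) := by
  obtain ⟨C, hC, h⟩ := tame hr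
  exact ⟨C, hC, fun c d => (tsum_freq_le (fun k => WW r k * cv (nx c) (nx d) k ^ 2)).trans (h _ _)⟩

section NS
variable {ν T : ℝ} {f θ : Coef} {u : ℝ → Coef}

lemma NS_fin1 (h : IsNSSol ν f T θ u) (hθ : EE 1 θ ≠ ⊤) : ∀ t ∈ Icc 0 T, EE 1 (u t) ≠ ⊤ := by
  intro t ht
  rcases eq_or_lt_of_le ht.1 with h0 | h0
  · rw [← h0, h.init]; exact hθ
  · exact ne_top_of_le_ne_top ((FinH_iff _ _).1 (h.memL2H2.1 t ⟨h0, ht.2⟩).2)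
      (EE_mono (by norm_num) _)

lemma NS_cont (h : IsNSSol ν f T θ u) (hθ : EE 1 θ ≠ ⊤) (k : Freq) :
    ContinuousOn (fun t => u t k) (Icc 0 T) := ContH_cont h.contH1 (NS_fin1 h hθ) k

/-- Trilinear density. -/
def Rk (u : ℝ → Coef) (k : Freq) (t : ℝ) : ℝ :=
  lam k * (Bc (u t) (u t) k * (starRingEnd ℂ) (u t k)).re

lemma Rk_bound : ∃ C : ℝ≥0∞, C ≠ ⊤ ∧ ∀ (u : ℝ → Coef) (t : ℝ),
    ∑' k, ‖Rk u k t‖ₑ ≤ (C * EE 1 (u t) + 1) * EE 2 (u t) := by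
  obtain ⟨C, hC, h⟩ := tame_Bc (r := 1) (by norm_num)
  refine ⟨2 * C, ENNReal.mul_ne_top (by norm_num) hC, fun u t => ?_⟩
  calc _ ≤ ∑' k : Freq, (WW 1 k.1 * cv (nx (u t)) (nx (u t)) k.1 ^ 2 +
        WW 2 k.1 * ‖u t k‖ₑ ^ 2) := by
        refine ENNReal.tsum_le_tsum fun k => ?_
        have e1 : ‖Rk u k t‖ₑ ≤ ‖Bc (u t) (u t) k‖ₑ * (WW 1 k.1 * ‖u t k‖ₑ) := by
          unfold Rk
          rw [enorm_mul, mul_left_comm]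
          have a1 : ‖lam k‖ₑ = WW 1 k.1 := by
            rw [WW_lam, Real.rpow_one, ← ofReal_norm, Real.norm_of_nonneg (lam_pos k).le]
          rw [a1]
          refine mul_le_mul' le_rfl ?_
          have : ‖(Bc (u t) (u t) k * (starRingEnd ℂ) (u t k)).re‖ₑ ≤
              ‖Bc (u t) (u t) k * (starRingEnd ℂ) (u t k)‖ₑ := by
            rw [← ofReal_norm, ← ofReal_norm]
            exact ENNReal.ofReal_le_ofReal (Complex.abs_re_le_norm _)
          refine this.trans (le_of_eq ?_)
          rw [enorm_mul, ← ofReal_norm ((starRingEnd ℂ) (u t k)), RCLike.norm_conj, ofReal_norm]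
        refine e1.trans ((ofReal_amgm _ _).trans ?_)
        refine add_le_add (enorm_Bc_sq _ _ _) (le_of_eq ?_)
        have := WW_sq 2 k.1
        norm_num at this
        rw [mul_pow, this]
    _ ≤ C * (EE 1 (u t) * EE (3/2) (u t) + EE (3/2) (u t) * EE 1 (u t)) + EE 2 (u t) := by
        rw [ENNReal.tsum_add, ← EE_eq]
        exact add_le_add (h _ _) le_rfl
    _ ≤ C * (EE 1 (u t) * EE 2 (u t) + EE 2 (u t) * EE 1 (u t)) + EE 2 (u t) := by
        have := EE_mono (show (3/2:ℝ) ≤ 2 by norm_num) (u t)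
        gcongr
    _ = _ := by ring

lemma NS_enst_k (hν : 0 < ν) (h : IsNSSol ν f T θ u) (hθ : EE 1 θ ≠ ⊤) (k : Freq)
    {t : ℝ} (ht : t ∈ Icc 0 T) (hR : IntegrableOn (Rk u k) (Ioc 0 T)) :
    lam k * ‖u t k‖ ^ 2 + ν * ∫ s in Ioc 0 t, lam k ^ 2 * ‖u s k‖ ^ 2 ≤
      lam k * ‖θ k‖ ^ 2 + t * (ν⁻¹ * ‖f k‖ ^ 2) - 2 * ∫ s in Ioc 0 t, Rk u k s := by
  have hc := (NS_cont h hθ k).mono (Icc_subset_Icc le_rfl ht.2)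
  have hR' := hR.mono_set (Ioc_subset_Ioc_right ht.2)
  have hyi : IntegrableOn (fun s => lam k ^ 2 * ‖u s k‖ ^ 2) (Ioc 0 t) := by
    have : ContinuousOn (fun s => lam k ^ 2 * ‖u s k‖ ^ 2) (Icc 0 t) := by fun_prop
    exact this.integrableOn_Icc.mono_set Ioc_subset_Icc_self
  have hci : IntegrableOn (fun _ : ℝ => ν⁻¹ * ‖f k‖ ^ 2) (Ioc 0 t) :=
    continuous_const.integrableOn_Ioc
  have hA : IntegrableOn (fun s => ν⁻¹ * ‖f k‖ ^ 2 - ν * (lam k ^ 2 * ‖u s k‖ ^ 2)) (Ioc 0 t) :=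
    hci.sub (hyi.const_mul _)
  have hφ : IntegrableOn (fun s => ν⁻¹ * ‖f k‖ ^ 2 - ν * (lam k ^ 2 * ‖u s k‖ ^ 2) -
      2 * Rk u k s) (Icc 0 t) := by
    rw [integrableOn_Icc_iff_integrableOn_Ioc]
    exact hA.sub (hR'.const_mul _)
  have main := intervalIntegral.sub_le_integral_of_hasDeriv_right_of_le
    (g := fun s => lam k * ‖u s k‖ ^ 2)
    (g' := fun s => lam k * (2 * inner ℝ (u s k) (f k - ((ν * lam k : ℝ) : ℂ) * u s k -
      Bc (u s) (u s) k))) ht.1 (by fun_prop)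
    (fun s hs => ((h.deriv k s ⟨hs.1, hs.2.le.trans ht.2⟩).norm_sq.const_mul _).hasDerivWithinAt)
    hφ (by
      intro s hs
      have e : ((ν * lam k : ℝ) : ℂ) * u s k = (ν * lam k) • u s k := by
        simp
      rw [e, inner_sub_right, inner_sub_right, inner_smul_right, real_inner_self_eq_norm_sq]
      have h1 : inner ℝ (u s k) (f k) ≤ ‖u s k‖ * ‖f k‖ := real_inner_le_norm _ _
      have h3 : lam k * inner ℝ (u s k) (Bc (u s) (u s) k) = Rk u k s := by
        unfold Rk
        rw [Complex.inner]
      have hl := lam_pos k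
      have h2 : 2 * (lam k * (‖u s k‖ * ‖f k‖)) ≤
          ν * (lam k ^ 2 * ‖u s k‖ ^ 2) + ν⁻¹ * ‖f k‖ ^ 2 := by
        have : 0 ≤ ν⁻¹ * (ν * (lam k * ‖u s k‖) - ‖f k‖) ^ 2 := by positivity
        have e2 : ν⁻¹ * (ν * (lam k * ‖u s k‖) - ‖f k‖) ^ 2 =
          ν * (lam k ^ 2 * ‖u s k‖ ^ 2) + ν⁻¹ * ‖f k‖ ^ 2 - 2 * (lam k * (‖u s k‖ * ‖f k‖)) := by
          field_simp; ring
        linarith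
      have h4 := mul_le_mul_of_nonneg_left h1 hl.le
      nlinarith)
  rw [intervalIntegral.integral_of_le ht.1, integral_sub hA
    (hR'.const_mul _), integral_sub hci (hyi.const_mul _), integral_const_mul ν,
    integral_const_mul (2:ℝ), h.init] at main
  have e0 : ∫ _ in Ioc 0 t, ν⁻¹ * ‖f k‖ ^ 2 = t * (ν⁻¹ * ‖f k‖ ^ 2) := by
    simp [ht.1]
  rw [e0] at main
  linarith

/-- Enstrophy inequality. -/
lemma NS_enst (hν : 0 < ν) (h : IsNSSol ν f T θ u) (hθ : EE 1 θ ≠ ⊤) (hf : EE 0 f ≠ ⊤)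
    {t : ℝ} (ht : t ∈ Icc 0 T) :
    EE 1 (u t) + ENNReal.ofReal ν * ∫⁻ s in Ioc 0 t, EE 2 (u s) ≤
      EE 1 θ + ENNReal.ofReal (t * ν⁻¹) * EE 0 f := by
  obtain ⟨C, hC, hCb⟩ := Rk_bound
  obtain ⟨M, hM, hMb⟩ := ContH_bdd h.contH1 (NS_fin1 h hθ)
  have hcont := NS_cont h hθ
  have hRsum : ∑' k, ∫⁻ s in Ioc 0 T, ‖Rk u k s‖ₑ ≠ ⊤ := by
    refine ne_top_of_le_ne_top ?_ (tsum_lintegral_le _ _)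
    refine ne_top_of_le_ne_top (b := (C * M + 1) * ∫⁻ s in Ioc 0 T, EE 2 (u s)) ?_ ?_
    · exact ENNReal.mul_ne_top (ENNReal.add_ne_top.2 ⟨ENNReal.mul_ne_top hC hM, by simp⟩)
        (lint_of_MemL2H h.memL2H2)
    · rw [← lintegral_const_mul' _ _ (ENNReal.add_ne_top.2 ⟨ENNReal.mul_ne_top hC hM, by simp⟩)]
      refine setLIntegral_mono' measurableSet_Ioc fun s hs => (hCb u s).trans ?_
      have := hMb s ⟨hs.1.le, hs.2⟩
      gcongr
  have hRm : ∀ k, AEStronglyMeasurable (Rk u k) (volume.restrict (Ioc 0 T)) := by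
    intro k
    have hym : AEStronglyMeasurable (fun t => u t k) (volume.restrict (Ioc 0 T)) :=
      ((hcont k).mono Ioc_subset_Icc_self).aestronglyMeasurable measurableSet_Ioc
    have h1 : AEStronglyMeasurable (fun s => lam k * ((f k - ((ν * lam k : ℝ) : ℂ) * u s k -
        deriv (fun t => u t k) s) * (starRingEnd ℂ) (u s k)).re) (volume.restrict (Ioc 0 T)) := by
      have h2 : AEStronglyMeasurable (fun s => ((f k - ((ν * lam k : ℝ) : ℂ) * u s k -
        deriv (fun t => u t k) s) * (starRingEnd ℂ) (u s k))) (volume.restrict (Ioc 0 T)) := by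
        refine AEStronglyMeasurable.mul ?_ (Complex.continuous_conj.comp_aestronglyMeasurable hym)
        refine AEStronglyMeasurable.sub ?_ (stronglyMeasurable_deriv _).aestronglyMeasurable
        exact aestronglyMeasurable_const.sub (hym.const_mul _)
      exact (Complex.continuous_re.comp_aestronglyMeasurable h2).const_mul _
    refine h1.congr ?_
    filter_upwards [ae_restrict_mem measurableSet_Ioc] with s hs
    rw [(h.deriv k s hs).deriv]
    unfold Rk
    congr 3
    ring
  have hRi : ∀ k, IntegrableOn (Rk u k) (Ioc 0 T) := fun k =>
    ⟨hRm k, lt_top_iff_ne_top.2 (ne_top_of_le_ne_top hRsum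
      (ENNReal.le_tsum (f := fun k => ∫⁻ s in Ioc 0 T, ‖Rk u k s‖ₑ) k))⟩
  have hR' : HasSum (fun k => ∫ s in Ioc 0 t, Rk u k s) 0 := by
    have h1 := hasSum_integral_of_summable_integral_norm (F := Rk u)
      (μ := volume.restrict (Ioc 0 t))
      (fun k => (hRi k).mono_set (Ioc_subset_Ioc_right ht.2)) (by
        have h2 : ∑' k, ∫⁻ s in Ioc 0 t, ‖Rk u k s‖ₑ ≠ ⊤ := by
          refine ne_top_of_le_ne_top hRsum (ENNReal.tsum_le_tsum fun k => ?_)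
          exact lintegral_mono_set (Ioc_subset_Ioc_right ht.2)
        refine (ENNReal.summable_toReal h2).congr fun k => ?_
        rw [integral_norm_eq_lintegral_enorm
          ((hRm k).mono_set (Ioc_subset_Ioc_right ht.2))])
    have h3 : ∫ s in Ioc 0 t, ∑' k, Rk u k s = 0 := by
      rw [setIntegral_congr_fun (g := fun _ => (0:ℝ)) measurableSet_Ioc]
      · simp
      · intro s hs
        have hs' : s ∈ Ioc 0 T := ⟨hs.1, hs.2.trans ht.2⟩
        exact enstrophy (h.real s ⟨hs'.1.le, hs'.2⟩) ((FinH_iff _ _).1 (h.memL2H2.1 s hs').2)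
    rwa [h3] at h1
  have hk := fun k => NS_enst_k hν h hθ k ht (hRi k)
  have hEt := NS_fin1 h hθ t ht
  have sq0 : ∀ (z : ℂ), ENNReal.ofReal (‖z‖ ^ 2) = ‖z‖ₑ ^ 2 := fun z => by
    rw [ENNReal.ofReal_pow (norm_nonneg _), ofReal_norm]
  have hyi : ∀ k, IntegrableOn (fun s => lam k ^ 2 * ‖u s k‖ ^ 2) (Ioc 0 t) := by
    intro k
    have hc := (hcont k).mono (Icc_subset_Icc le_rfl ht.2)
    have : ContinuousOn (fun s => lam k ^ 2 * ‖u s k‖ ^ 2) (Icc 0 t) := by fun_prop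
    exact this.integrableOn_Icc.mono_set Ioc_subset_Icc_self
  have eL : ∀ k, WW 2 k.1 * ∫⁻ s in Ioc 0 t, ‖u s k‖ₑ ^ 2 =
      ENNReal.ofReal (∫ s in Ioc 0 t, lam k ^ 2 * ‖u s k‖ ^ 2) := by
    intro k
    rw [ofReal_integral_eq_lintegral_ofReal (hyi k)
      (Filter.Eventually.of_forall fun t => by positivity),
      ← lintegral_const_mul' _ _ (WW_ne_top _ _)]
    refine lintegral_congr fun s => ?_
    rw [EE_term]; norm_num
  have hE2 : ∫⁻ s in Ioc 0 t, EE 2 (u s) ≠ ⊤ := ne_top_of_le_ne_top (lint_of_MemL2H h.memL2H2)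
    (lintegral_mono_set (Ioc_subset_Ioc_right ht.2))
  have hcont' : ∀ k, ContinuousOn (fun s => u s k) (Icc 0 t) := fun k =>
    (hcont k).mono (Icc_subset_Icc le_rfl ht.2)
  rw [lint_EE hcont'] at hE2 ⊢
  simp only [eL] at hE2 ⊢
  have p0 : ∀ k, 0 ≤ ∫ s in Ioc 0 t, lam k ^ 2 * ‖u s k‖ ^ 2 := fun k =>
    integral_nonneg fun s => by positivity
  have s1 : Summable fun k => ∫ s in Ioc 0 t, lam k ^ 2 * ‖u s k‖ ^ 2 := by
    refine (ENNReal.summable_toReal hE2).congr fun k => ?_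
    rw [ENNReal.toReal_ofReal (p0 k)]
  have hF1 : Summable fun k => lam k * ‖u t k‖ ^ 2 := by
    have := (FinH_iff 1 (u t)).2 hEt
    simpa only [FinH, Real.rpow_one] using this
  have hF2 : Summable fun k => lam k * ‖θ k‖ ^ 2 := by
    have := (FinH_iff 1 θ).2 hθ
    simpa only [FinH, Real.rpow_one] using this
  have hF3 : Summable fun k => ‖f k‖ ^ 2 := by
    have := (FinH_iff 0 f).2 hf
    simpa only [FinH, Real.rpow_zero, one_mul] using this
  have key := Summable.tsum_le_tsum hk (hF1.add (s1.mul_left ν))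
    ((hF2.add ((hF3.mul_left ν⁻¹).mul_left t)).sub (hR'.summable.mul_left 2))
  rw [hF1.tsum_add (s1.mul_left ν), (hF2.add ((hF3.mul_left ν⁻¹).mul_left t)).tsum_sub
    (hR'.summable.mul_left 2), hF2.tsum_add ((hF3.mul_left ν⁻¹).mul_left t), tsum_mul_left,
    tsum_mul_left, tsum_mul_left, tsum_mul_left, hR'.tsum_eq] at key
  have g1 : EE 1 (u t) = ENNReal.ofReal (∑' k, lam k * ‖u t k‖ ^ 2) := by
    rw [← ofReal_hSq ((FinH_iff 1 (u t)).2 hEt)]; simp only [hSq, Real.rpow_one]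
  have g2 : EE 1 θ = ENNReal.ofReal (∑' k, lam k * ‖θ k‖ ^ 2) := by
    rw [← ofReal_hSq ((FinH_iff 1 θ).2 hθ)]; simp only [hSq, Real.rpow_one]
  have g3 : EE 0 f = ENNReal.ofReal (∑' k, ‖f k‖ ^ 2) := by
    rw [← ofReal_hSq ((FinH_iff 0 f).2 hf)]; simp only [hSq, Real.rpow_zero, one_mul]
  have q1 : 0 ≤ ∑' k, lam k * ‖u t k‖ ^ 2 :=
    tsum_nonneg fun k => mul_nonneg (lam_pos k).le (sq_nonneg _)
  have q2 : 0 ≤ ∑' k, lam k * ‖θ k‖ ^ 2 :=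
    tsum_nonneg fun k => mul_nonneg (lam_pos k).le (sq_nonneg _)
  have q3 : 0 ≤ ∑' k, ‖f k‖ ^ 2 := tsum_nonneg fun k => (sq_nonneg _)
  have q4 : 0 ≤ ∑' k, ∫ s in Ioc 0 t, lam k ^ 2 * ‖u s k‖ ^ 2 := tsum_nonneg p0
  have ht0 := ht.1
  rw [g1, g2, g3, ← ENNReal.ofReal_tsum_of_nonneg p0 s1, ← ENNReal.ofReal_mul hν.le,
    ← ENNReal.ofReal_mul (by positivity), ← ENNReal.ofReal_add q1 (by positivity),
    ← ENNReal.ofReal_add q2 (by positivity)]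
  refine ENNReal.ofReal_le_ofReal ?_
  linarith

end NS



/-! ### Higher regularity of the Navier-Stokes solution -/

lemma EE_interp (c : Coef) : EE (3/2) c * EE (3/2) c ≤ EE 1 c * EE 2 c := by
  have h := cs_tsum (fun k : Freq => WW (1/2) k.1 * ‖c k‖ₑ) (fun k : Freq => WW 1 k.1 * ‖c k‖ₑ)
  have e1 : EE (3/2) c = ∑' k : Freq, WW (1/2) k.1 * ‖c k‖ₑ * (WW 1 k.1 * ‖c k‖ₑ) := by
    rw [EE_eq]
    refine tsum_congr fun k => ?_
    rw [show (3/2:ℝ) = 1/2 + 1 by norm_num, WW_add]; ring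
  have e2 : EE 1 c = ∑' k : Freq, (WW (1/2) k.1 * ‖c k‖ₑ) ^ 2 := by
    rw [EE_eq]
    refine tsum_congr fun k => ?_
    rw [mul_pow, WW_sq]
  have e3 : EE 2 c = ∑' k : Freq, (WW 1 k.1 * ‖c k‖ₑ) ^ 2 := by
    rw [EE_eq]
    refine tsum_congr fun k => ?_
    have := WW_sq 2 k.1
    norm_num at this
    rw [mul_pow, this]
  rw [← sq, e1, e2, e3]; exact h

lemma NS_energy (ν T : ℝ) (hν : 0 < ν) (hT : 0 ≤ T) {r : ℝ} (hr : 0 ≤ r) :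
    ∃ C : ℝ≥0∞, C ≠ ⊤ ∧ ∀ (f θ : Coef) (u : ℝ → Coef), EE 1 θ ≠ ⊤ → IsNSSol ν f T θ u →
      NN r (fun k => ν * lam k) 0 T u ≤
        2 * (EE r θ + ENNReal.ofReal ν⁻¹ * (4 * (ENNReal.ofReal T * EE (r - 1) f +
          C * ∫⁻ t in Ioc 0 T, EE r (u t) * EE (3/2) (u t)))) := by
  obtain ⟨C, hC, h⟩ := tame_Bc hr
  refine ⟨2 * C, ENNReal.mul_ne_top (by norm_num) hC, fun f θ u hθ hu => ?_⟩
  have key := energy_sum (α := r) (ν := ν) (a := 0) (b := T) (μ := fun k => ν * lam k) (y := u)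
    (h := fun t k => f k - Bc (u t) (u t) k)
    (G := fun t k => 4 * (WW (-1) k.1 * ‖f k‖ₑ ^ 2 + cv (nx (u t)) (nx (u t)) k.1 ^ 2))
    hT hν (fun k => le_rfl) (NS_cont hu hθ) (fun k t ht => by
      have := hu.deriv k t ⟨ht.1, ht.2.le⟩
      convert this using 1; ring) (fun t ht k => by
      refine (enorm_sq_sub_le _ _).trans ?_
      calc _ ≤ 4 * (‖f k‖ₑ ^ 2 + WW 1 k.1 * cv (nx (u t)) (nx (u t)) k.1 ^ 2) := by
            gcongr; exact enorm_Bc_sq _ _ _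
        _ = 4 * ((WW 1 k.1 * WW (-1) k.1) * ‖f k‖ₑ ^ 2 +
              WW 1 k.1 * cv (nx (u t)) (nx (u t)) k.1 ^ 2) := by rw [WW_mul_neg', one_mul]
        _ = _ := by ring)
  rw [hu.init] at key
  refine key.trans ?_
  gcongr 2 * (_ + _ * ?_)
  calc _ ≤ ∫⁻ t in Ioc 0 T, 4 * (EE (r - 1) f + (2 * C) * (EE r (u t) * EE (3/2) (u t))) := by
        refine lintegral_mono fun t => ?_
        calc ∑' k : Freq, WW r k.1 * (4 * (WW (-1) k.1 * ‖f k‖ₑ ^ 2 +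
              cv (nx (u t)) (nx (u t)) k.1 ^ 2))
            = ∑' k : Freq, 4 * (WW (r - 1) k.1 * ‖f k‖ₑ ^ 2 +
                WW r k.1 * cv (nx (u t)) (nx (u t)) k.1 ^ 2) := by
              refine tsum_congr fun k => ?_
              rw [sub_eq_add_neg, WW_add]; ring
          _ = 4 * (EE (r - 1) f + ∑' k : Freq, WW r k.1 * cv (nx (u t)) (nx (u t)) k.1 ^ 2) := by
              rw [ENNReal.tsum_mul_left, ENNReal.tsum_add, EE_eq]
          _ ≤ 4 * (EE (r - 1) f + C * (EE r (u t) * EE (3/2) (u t) +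
                EE (3/2) (u t) * EE r (u t))) := by gcongr; exact h _ _
          _ = _ := by ring
    _ = _ := by
        rw [lintegral_const_mul' _ _ (by norm_num), lintegral_add_left measurable_const,
          lintegral_const_mul' _ _ (ENNReal.mul_ne_top (by norm_num) hC)]
        simp [mul_comm]

lemma ofReal_inv_mul_le {ν : ℝ} (hν : 0 < ν) {x y : ℝ≥0∞} (h : ENNReal.ofReal ν * x ≤ y) :
    x ≤ ENNReal.ofReal ν⁻¹ * y := by
  calc x = ENNReal.ofReal ν⁻¹ * (ENNReal.ofReal ν * x) := by
        rw [← mul_assoc, ← ENNReal.ofReal_mul (by positivity), inv_mul_cancel₀ hν.ne']; simp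
    _ ≤ _ := mul_le_mul' le_rfl h

/-- Base bounds from the enstrophy inequality. -/
lemma NS_base (ν T : ℝ) (hν : 0 < ν) (hT : 0 ≤ T) (f : Coef) (hf : EE 0 f ≠ ⊤) (B : ℝ≥0∞)
    (hB : B ≠ ⊤) : ∃ M : ℝ≥0∞, M ≠ ⊤ ∧ ∀ (θ : Coef) (u : ℝ → Coef), EE 1 θ ≤ B →
      IsNSSol ν f T θ u → (∀ t ∈ Icc 0 T, EE 1 (u t) ≤ M) ∧ ∫⁻ t in Ioc 0 T, EE 2 (u t) ≤ M := by
  set M0 := B + ENNReal.ofReal (T * ν⁻¹) * EE 0 f with hM0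
  have hM0t : M0 ≠ ⊤ := ENNReal.add_ne_top.2 ⟨hB, ENNReal.mul_ne_top ENNReal.ofReal_ne_top hf⟩
  refine ⟨M0 + ENNReal.ofReal ν⁻¹ * M0, ENNReal.add_ne_top.2
    ⟨hM0t, ENNReal.mul_ne_top ENNReal.ofReal_ne_top hM0t⟩, fun θ u hθ hu => ?_⟩
  have hθt : EE 1 θ ≠ ⊤ := ne_top_of_le_ne_top hB hθ
  have hb : ∀ t ∈ Icc 0 T, EE 1 (u t) + ENNReal.ofReal ν * ∫⁻ s in Ioc 0 t, EE 2 (u s) ≤ M0 := by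
    intro t ht
    refine (NS_enst hν hu hθt hf ht).trans ?_
    have := ht.2
    rw [hM0]
    gcongr
  constructor
  · intro t ht
    exact (le_self_add.trans (hb t ht)).trans le_self_add
  · have := ofReal_inv_mul_le hν (le_add_self.trans (hb T ⟨hT, le_rfl⟩))
    exact this.trans le_add_self

lemma NS_three_half (ν T : ℝ) (hν : 0 < ν) (hT : 0 ≤ T) (f : Coef) (hf : EE 1 f ≠ ⊤) (B : ℝ≥0∞)
    (hB : B ≠ ⊤) : ∃ M : ℝ≥0∞, M ≠ ⊤ ∧ ∀ (θ : Coef) (u : ℝ → Coef), EE 2 θ ≤ B →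
      IsNSSol ν f T θ u → ∀ t ∈ Icc 0 T, EE (3/2) (u t) ≤ M := by
  have hf0 : EE 0 f ≠ ⊤ := ne_top_of_le_ne_top hf (EE_mono (by norm_num) f)
  have hf1 : EE (3/2 - 1) f ≠ ⊤ := ne_top_of_le_ne_top hf (EE_mono (by norm_num) f)
  obtain ⟨M, hM, h⟩ := NS_base ν T hν hT f hf0 B hB
  obtain ⟨C, hC, he⟩ := NS_energy ν T hν hT (r := 3/2) (by norm_num)
  refine ⟨2 * (B + ENNReal.ofReal ν⁻¹ * (4 * (ENNReal.ofReal T * EE (3/2 - 1) f + C * (M * M)))),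
    ?_, fun θ u hθ hu t ht => ?_⟩
  · finiteness
  have hθ1 : EE 1 θ ≤ B := (EE_mono (by norm_num) θ).trans hθ
  obtain ⟨h1, h2⟩ := h θ u hθ1 hu
  refine (EE_le_NN u ht).trans ((he f θ u (ne_top_of_le_ne_top hB hθ1) hu).trans ?_)
  gcongr
  · exact (EE_mono (by norm_num) θ).trans hθ
  · calc _ ≤ ∫⁻ t in Ioc 0 T, M * EE 2 (u t) :=
          setLIntegral_mono' measurableSet_Ioc fun t ht => (EE_interp (u t)).trans
            (mul_le_mul' (h1 t ⟨ht.1.le, ht.2⟩) le_rfl)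
      _ ≤ _ := by
          rw [lintegral_const_mul' _ _ hM]
          gcongr

lemma NS_level (ν T : ℝ) (hν : 0 < ν) (hT : 0 ≤ T) (f : Coef) (B : ℝ≥0∞)
    (hB : B ≠ ⊤) (n : ℕ) (hn : 1 ≤ n) (hf : EE ((n : ℝ) - 1) f ≠ ⊤) :
    ∃ M : ℝ≥0∞, M ≠ ⊤ ∧ ∀ (θ : Coef) (u : ℝ → Coef), EE n θ ≤ B →
      IsNSSol ν f T θ u → NN n (fun k => ν * lam k) 0 T u ≤ M := by
  induction n, hn using Nat.le_induction with
  | base =>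
    norm_num at hf ⊢
    obtain ⟨M, hM, h⟩ := NS_base ν T hν hT f hf B hB
    obtain ⟨C, hC, he⟩ := NS_energy ν T hν hT (r := 1) (by norm_num)
    refine ⟨2 * (B + ENNReal.ofReal ν⁻¹ * (4 * (ENNReal.ofReal T * EE (1 - 1) f + C * (M * M)))),
      ?_, fun θ u hθ hu => ?_⟩
    · norm_num
      finiteness
    obtain ⟨h1, h2⟩ := h θ u hθ hu
    refine ((he f θ u (ne_top_of_le_ne_top hB hθ) hu).trans ?_)
    gcongr
    calc _ ≤ ∫⁻ t in Ioc 0 T, M * EE 2 (u t) :=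
            setLIntegral_mono' measurableSet_Ioc fun t ht =>
              (mul_le_mul' (h1 t ⟨ht.1.le, ht.2⟩) (EE_mono (by norm_num) _))
        _ ≤ _ := by
            rw [lintegral_const_mul' _ _ hM]
            gcongr
  | succ n hn ih =>
    push_cast at hf ⊢
    have hn1 : (1:ℝ) ≤ n := by exact_mod_cast hn
    have hfn : EE ((n:ℝ) - 1) f ≠ ⊤ := ne_top_of_le_ne_top hf (EE_mono (by linarith) f)
    have hf1 : EE 1 f ≠ ⊤ := ne_top_of_le_ne_top hf (EE_mono (by linarith) f)
    obtain ⟨M, hM, h⟩ := ih hfn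
    obtain ⟨M', hM', h'⟩ := NS_three_half ν T hν hT f hf1 B hB
    obtain ⟨C, hC, he⟩ := NS_energy ν T hν hT (r := (n:ℝ) + 1) (by linarith)
    refine ⟨2 * (B + ENNReal.ofReal ν⁻¹ * (4 * (ENNReal.ofReal T * EE ((n:ℝ) + 1 - 1) f +
      C * (M' * (ENNReal.ofReal ν⁻¹ * M))))), ?_, fun θ u hθ hu => ?_⟩
    · finiteness
    have hθ1 : EE 1 θ ≤ B := (EE_mono (by linarith) θ).trans hθ
    have hθ1t := (ne_top_of_le_ne_top hB hθ1)
    have h1 := h θ u ((EE_mono (by linarith) θ).trans hθ) hu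
    have h2 := h' θ u ((EE_mono (by linarith) θ).trans hθ) hu
    refine ((he f θ u hθ1t hu).trans ?_)
    gcongr
    calc _ ≤ ∫⁻ t in Ioc 0 T, M' * EE ((n:ℝ) + 1) (u t) :=
            setLIntegral_mono' measurableSet_Ioc fun t ht => by
              rw [mul_comm]
              exact (mul_le_mul' (h2 t ⟨ht.1.le, ht.2⟩) le_rfl)
        _ ≤ _ := by
            rw [lintegral_const_mul' _ _ hM']
            gcongr
            refine (lint_EE_le hν (fun k => le_rfl) (NS_cont hu hθ1t)).trans ?_
            gcongr



/-! ### Linear estimates -/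

/-- The linearised nonlinearity. -/
def hlin (u W : ℝ → Coef) (t : ℝ) : Coef := fun k => - Bc (u t) (W t) k - Bc (W t) (u t) k

lemma hlin_sq (u W : ℝ → Coef) (t : ℝ) (k : Freq) :
    ‖hlin u W t k‖ₑ ^ 2 ≤ WW 1 k.1 * (8 * cv (nx (u t)) (nx (W t)) k.1 ^ 2) := by
  unfold hlin
  refine (enorm_sq_sub_le _ _).trans ?_
  rw [enorm_neg]
  have h1 := enorm_Bc_sq (u t) (W t) k
  have h2 := enorm_Bc_sq (W t) (u t) k
  rw [cv_comm] at h2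
  calc _ ≤ 4 * (WW 1 k.1 * cv (nx (u t)) (nx (W t)) k.1 ^ 2 +
        WW 1 k.1 * cv (nx (u t)) (nx (W t)) k.1 ^ 2) := by gcongr
    _ = _ := by ring

lemma lin_energy {α ν a b : ℝ} {μ : Freq → ℝ} {u V W : ℝ → Coef}
    (hab : a ≤ b) (hν : 0 < ν) (hμ : ∀ k, ν * lam k ≤ μ k)
    (hc : ∀ k, ContinuousOn (fun t => V t k) (Icc a b))
    (hd : ∀ k, ∀ t ∈ Ioo a b, HasDerivAt (fun t => V t k) (hlin u W t k - (μ k : ℂ) * V t k) t) :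
    NN α μ a b V ≤ 2 * (EE α (V a) + ENNReal.ofReal ν⁻¹ * (8 * ∫⁻ t in Ioc a b,
      ∑' k, WW α k * cv (nx (u t)) (nx (W t)) k ^ 2)) := by
  refine (energy_sum hab hν hμ hc hd (fun t _ k => hlin_sq u W t k)).trans ?_
  gcongr 2 * (_ + _ * ?_)
  rw [← lintegral_const_mul' _ _ (by norm_num)]
  refine lintegral_mono fun t => ?_
  rw [← ENNReal.tsum_mul_left]
  calc _ = ∑' k : Freq, 8 * (WW α k.1 * cv (nx (u t)) (nx (W t)) k.1 ^ 2) :=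
        tsum_congr fun k => by ring
    _ ≤ _ := tsum_freq_le (fun k => 8 * (WW α k * cv (nx (u t)) (nx (W t)) k ^ 2))

/-- Damping rates. -/
def mu (ν Λ : ℝ) (k : Freq) : ℝ := ν * lam k + Λ

lemma mu_ge {ν Λ : ℝ} (hΛ : 0 ≤ Λ) (k : Freq) : ν * lam k ≤ mu ν Λ k := by
  unfold mu; linarith

lemma half_lint {α ν Λ a b : ℝ} {y : ℝ → Coef} (hν : 0 < ν) (hΛ : 0 < Λ)
    (hc : ∀ k, ContinuousOn (fun t => y t k) (Icc a b)) :
    ∫⁻ t in Ioc a b, EE (α + 1/2) (y t) ≤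
      ENNReal.ofReal (Real.sqrt (ν * Λ))⁻¹ * NN α (mu ν Λ) a b y := by
  rw [lint_EE hc, NN, ← ENNReal.tsum_mul_left]
  refine ENNReal.tsum_le_tsum fun k => ?_
  have : WW (α + 1/2) k.1 ≤ ENNReal.ofReal (Real.sqrt (ν * Λ))⁻¹ *
      (WW α k.1 * ENNReal.ofReal (mu ν Λ k)) := by
    rw [WW_add, mul_left_comm]
    refine mul_le_mul' le_rfl ?_
    rw [WW_lam, ← Real.sqrt_eq_rpow, ← ENNReal.ofReal_mul (by positivity)]
    refine ENNReal.ofReal_le_ofReal ?_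
    have hl := lam_pos k
    rw [inv_mul_eq_div, le_div_iff₀ (Real.sqrt_pos.2 (by positivity)), ← Real.sqrt_mul hl.le]
    refine Real.sqrt_le_iff.2 ⟨by unfold mu; positivity, ?_⟩
    unfold mu
    nlinarith [mul_pos hν hl, mul_pos (mul_pos hν hl) hΛ, sq_nonneg (ν * lam k), sq_nonneg Λ]
  calc _ ≤ ENNReal.ofReal (Real.sqrt (ν * Λ))⁻¹ * (WW α k.1 * ENNReal.ofReal (mu ν Λ k)) *
        ∫⁻ t in Ioc a b, ‖y t k‖ₑ ^ 2 := mul_le_mul' this le_rfl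
    _ = ENNReal.ofReal (Real.sqrt (ν * Λ))⁻¹ * (WW α k.1 * (ENNReal.ofReal (mu ν Λ k) *
        ∫⁻ t in Ioc a b, ‖y t k‖ₑ ^ 2)) := by ring
    _ ≤ _ := by gcongr; exact le_add_self

/-- Bound of the trilinear time integral. -/
lemma lint_prod {α s a b : ℝ} (had : Adm α s) : ∃ C : ℝ≥0∞, C ≠ ⊤ ∧ ∀ (M : ℝ≥0∞), M ≠ ⊤ →
    ∀ u W : ℝ → Coef, (∀ t ∈ Ioc a b, EE s (u t) ≤ M) →
    ∫⁻ t in Ioc a b, ∑' k, WW α k * cv (nx (u t)) (nx (W t)) k ^ 2 ≤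
      C * M * ∫⁻ t in Ioc a b, EE (α + 1/2) (W t) := by
  obtain ⟨C, hC, h⟩ := prodMain had
  refine ⟨C, hC, fun M hM u W hu => ?_⟩
  rw [← lintegral_const_mul' _ _ (ENNReal.mul_ne_top hC hM)]
  refine setLIntegral_mono' measurableSet_Ioc fun t ht => (h _ _).trans ?_
  rw [mul_assoc]
  gcongr
  · exact hu t ht
  · exact le_rfl

/-- Contraction estimate with large damping. -/
lemma contraction {α s ν T : ℝ} (had : Adm α s) (hν : 0 < ν) (hT : 0 ≤ T) (M : ℝ≥0∞) (hM : M ≠ ⊤) :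
    ∃ Λ : ℝ, 0 < Λ ∧ ∀ u V W : ℝ → Coef, (∀ t ∈ Icc 0 T, EE s (u t) ≤ M) →
      (∀ k, ContinuousOn (fun t => V t k) (Icc 0 T)) →
      (∀ k, ContinuousOn (fun t => W t k) (Icc 0 T)) →
      (∀ k, ∀ t ∈ Ioo 0 T, HasDerivAt (fun t => V t k)
        (hlin u W t k - (mu ν Λ k : ℂ) * V t k) t) →
      NN α (mu ν Λ) 0 T V ≤ 2 * EE α (V 0) + 8⁻¹ * NN α (mu ν Λ) 0 T W := by
  obtain ⟨C, hC, h⟩ := lint_prod (a := 0) (b := T) had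
  set K : ℝ≥0∞ := 16 * (ENNReal.ofReal ν⁻¹ * (C * M)) with hK
  have hKt : K ≠ ⊤ := by rw [hK]; finiteness
  set κ := K.toReal with hκ
  have hκ0 : 0 ≤ κ := ENNReal.toReal_nonneg
  refine ⟨(8 * (κ + 1)) ^ 2 / ν, by positivity, fun u V W hu hV hW hd => ?_⟩
  set Λ := (8 * (κ + 1)) ^ 2 / ν with hΛ
  have hΛ0 : 0 < Λ := by positivity
  have hsq : Real.sqrt (ν * Λ) = 8 * (κ + 1) := by
    rw [hΛ, mul_div_cancel₀ _ hν.ne', Real.sqrt_sq (by positivity)]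
  have h1 := lin_energy (α := α) hT hν (mu_ge hΛ0.le) hV hd
  have h2 := h M hM u W (fun t ht => hu t ⟨ht.1.le, ht.2⟩)
  have h3 := half_lint (α := α) hν hΛ0 hW
  rw [hsq] at h3
  calc _ ≤ _ := h1
    _ ≤ 2 * (EE α (V 0) + ENNReal.ofReal ν⁻¹ * (8 * (C * M *
        (ENNReal.ofReal (8 * (κ + 1))⁻¹ * NN α (mu ν Λ) 0 T W)))) := by
        gcongr 2 * (_ + _ * (8 * ?_))
        exact h2.trans (mul_le_mul' le_rfl h3)
    _ = 2 * EE α (V 0) + (K * ENNReal.ofReal (8 * (κ + 1))⁻¹) * NN α (mu ν Λ) 0 T W := by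
        rw [hK]; ring
    _ ≤ _ := by
        gcongr
        rw [← ENNReal.ofReal_toReal hKt, ← hκ, ← ENNReal.ofReal_mul hκ0]
        have : (8:ℝ≥0∞)⁻¹ = ENNReal.ofReal 8⁻¹ := by
          rw [ENNReal.ofReal_inv_of_pos (by norm_num)]; norm_num
        rw [this]
        refine ENNReal.ofReal_le_ofReal ?_
        rw [mul_inv, mul_left_comm, ← div_eq_mul_inv κ]
        have : κ / (κ + 1) ≤ 1 := (div_le_one (by positivity)).2 (by linarith)
        linarith

lemma Bc_smul_right (r : ℂ) (c d : Coef) (k : Freq) :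
    Bc c (fun j => r * d j) k = r * Bc c d k := by
  have e : ∀ n, ext (fun j => r * d j) n = r * ext d n := by
    intro n; unfold ext; split_ifs <;> simp
  rw [Bc_eq, Bc_eq]
  simp only [e]
  have : ∀ m, ext c m * (r * ext d (k.1 - m)) * ((kap m (k.1 - m) : ℝ) : ℂ) =
    r * (ext c m * ext d (k.1 - m) * ((kap m (k.1 - m) : ℝ) : ℂ)) := fun m => by ring
  simp only [this]
  rw [tsum_mul_left]; ring

lemma Bc_smul_left (r : ℂ) (c d : Coef) (k : Freq) :
    Bc (fun j => r * c j) d k = r * Bc c d k := by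
  have e : ∀ n, ext (fun j => r * c j) n = r * ext c n := by
    intro n; unfold ext; split_ifs <;> simp
  rw [Bc_eq, Bc_eq]
  simp only [e]
  have : ∀ m, r * ext c m * ext d (k.1 - m) * ((kap m (k.1 - m) : ℝ) : ℂ) =
    r * (ext c m * ext d (k.1 - m) * ((kap m (k.1 - m) : ℝ) : ℂ)) := fun m => by ring
  simp only [this]
  rw [tsum_mul_left]; ring

lemma hlin_smul (r : ℝ → ℂ) (u W : ℝ → Coef) (t : ℝ) (k : Freq) :
    hlin u (fun s j => r s * W s j) t k = r t * hlin u W t k := by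
  unfold hlin
  rw [Bc_smul_left, Bc_smul_right]; ring

lemma EE_smul (α : ℝ) (r : ℂ) (c : Coef) : EE α (fun j => r * c j) = ‖r‖ₑ ^ 2 * EE α c := by
  rw [EE_eq, EE_eq, ← ENNReal.tsum_mul_left]
  refine tsum_congr fun k => ?_
  rw [enorm_mul]; ring

lemma enorm_exp (x : ℝ) : ‖((Real.exp x : ℝ) : ℂ)‖ₑ = ENNReal.ofReal (Real.exp x) := by
  rw [← ofReal_norm, Complex.norm_real, Real.norm_of_nonneg (Real.exp_pos _).le]

lemma exp_deriv (Λ t : ℝ) :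
    HasDerivAt (fun s : ℝ => ((Real.exp (Λ * s) : ℝ) : ℂ)) ((Λ : ℂ) * ((Real.exp (Λ * t) : ℝ) : ℂ)) t := by
  have h1 : HasDerivAt (fun s : ℝ => Real.exp (Λ * s)) (Λ * Real.exp (Λ * t)) t := by
    have := ((hasDerivAt_id t).const_mul Λ).exp
    simpa [mul_comm] using this
  have := h1.ofReal_comp
  push_cast at this ⊢
  exact this

lemma astar_pos (a : ℤ) : 1 ≤ astar a := by
  unfold astar
  split_ifs with h
  · have := abs_nonneg a; omega
  · omega

lemma abs_le_astar (a : ℤ) : |(a : ℝ)| ≤ (astar a : ℝ) := by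
  have : |a| ≤ astar a := by
    unfold astar
    split_ifs <;> omega
  exact_mod_cast this

lemma adm_astar (a : ℤ) : Adm (a : ℝ) (astar a : ℝ) := by
  unfold Adm astar
  split_ifs with h
  · rw [abs_le] at h
    have : a = -1 ∨ a = 0 ∨ a = 1 := by omega
    rcases this with rfl | rfl | rfl <;> norm_num
  · push Not at h
    rcases le_or_gt 0 a with h0 | h0
    · rw [abs_of_nonneg h0] at h ⊢
      have : (2:ℝ) ≤ a := by exact_mod_cast h
      right; right; right
      refine ⟨by linarith, le_rfl, by linarith⟩
    · rw [abs_of_neg h0] at h ⊢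
      have : (2:ℝ) ≤ -a := by exact_mod_cast h
      right; right; left
      push_cast
      exact ⟨by linarith, le_rfl⟩

lemma EE_of_hN_le {α B : ℝ} {c : Coef} (h : EE α c ≠ ⊤) (hB : hN α c ≤ B) :
    EE α c ≤ ENNReal.ofReal ((B + 1) ^ 2) := EE_of_hN_lt h (by linarith)

lemma absorb {x A : ℝ≥0∞} (hx : x ≠ ⊤) (h : x ≤ A + 8⁻¹ * x) : x ≤ 2 * A := by
  by_cases hA : A = ⊤
  · rw [hA, ENNReal.mul_top (by norm_num)]; simp
  lift x to NNReal using hx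
  lift A to NNReal using hA
  have e : (8:ℝ≥0∞)⁻¹ = ((8⁻¹ : NNReal) : ℝ≥0∞) := by
    rw [ENNReal.coe_inv (by norm_num)]; norm_num
  rw [e] at h
  norm_cast at h ⊢
  rw [← NNReal.coe_le_coe] at h ⊢
  push_cast at h ⊢
  have := x.coe_nonneg
  have := A.coe_nonneg
  linarith

/-- A priori estimate for the linearised flow. -/
lemma lin_apriori {α s ν T : ℝ} (had : Adm α s) (hν : 0 < ν) (hT : 0 ≤ T) (M : ℝ≥0∞) (hM : M ≠ ⊤) :
    ∃ K : ℝ≥0∞, K ≠ ⊤ ∧ ∀ (u U : ℝ → Coef) (ξ : Coef), (∀ t ∈ Icc 0 T, EE s (u t) ≤ M) →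
      (∀ k, ContinuousOn (fun t => U t k) (Icc 0 T)) →
      EE α ξ ≠ ⊤ → IsLinSol ν u T ξ U → ∫⁻ t in Ioc 0 T, EE (α + 1) (U t) ≠ ⊤ →
      ∀ t ∈ Icc 0 T, EE α (U t) + ∫⁻ t in Ioc 0 T, EE (α + 1) (U t) ≤ K * EE α ξ := by
  obtain ⟨Λ, hΛ, hcon⟩ := contraction had hν hT M hM
  obtain ⟨C, hC, hp⟩ := lint_prod (a := 0) (b := T) had
  set Q : ℝ≥0∞ := ENNReal.ofReal (Real.exp (Λ * T)) ^ 2 with hQ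
  refine ⟨Q * (1 + ENNReal.ofReal ν⁻¹) * 4, by rw [hQ]; finiteness,
    fun u U ξ hu hc hξ hU hfin t ht => ?_⟩
  set V : ℝ → Coef := fun t k => ((Real.exp (-Λ * t) : ℝ) : ℂ) * U t k with hV
  have hVc : ∀ k, ContinuousOn (fun t => V t k) (Icc 0 T) := by
    intro k
    have := hc k
    have h2 : Continuous fun t : ℝ => ((Real.exp (-Λ * t) : ℝ) : ℂ) := by fun_prop
    exact h2.continuousOn.mul this
  have hVd : ∀ k, ∀ t ∈ Ioo 0 T, HasDerivAt (fun t => V t k)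
        (hlin u V t k - (mu ν Λ k : ℂ) * V t k) t := by
    intro k t ht
    have h1 := (exp_deriv (-Λ) t).mul (hU.deriv k t ⟨ht.1, ht.2.le⟩)
    refine h1.congr_deriv ?_
    rw [hV, hlin_smul]
    unfold hlin mu
    push_cast
    simp only [Pi.zero_apply]
    ring
  have hV0 : EE α (V 0) = EE α ξ := by
    rw [hV]; simp [hU.init]
  have hle : ∀ β, ∀ t ∈ Ioc 0 T, EE β (V t) ≤ EE β (U t) := by
    intro β t ht
    rw [hV, EE_smul, enorm_exp]
    refine mul_le_of_le_one_left' ?_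
    refine pow_le_one' ?_ 2
    rw [ENNReal.ofReal_le_one, Real.exp_le_one_iff]
    nlinarith [ht.1]
  have hge : ∀ β, ∀ t ∈ Icc 0 T, EE β (U t) ≤ Q * EE β (V t) := by
    intro β t ht
    rw [hV, EE_smul, enorm_exp, ← mul_assoc, hQ, ← mul_pow, ← ENNReal.ofReal_mul (Real.exp_pos _).le,
      ← Real.exp_add]
    refine le_mul_of_one_le_left' ?_
    refine one_le_pow_of_one_le' ?_ 2
    rw [ENNReal.one_le_ofReal, Real.one_le_exp_iff]
    nlinarith [ht.2]
  have hNfin : NN α (mu ν Λ) 0 T V ≠ ⊤ := by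
    refine ne_top_of_le_ne_top ?_ (lin_energy (u := u) (W := V) hT hν (mu_ge hΛ.le) hVc hVd)
    have h2 := hp M hM u V (fun t ht => hu t ⟨ht.1.le, ht.2⟩)
    have h3 : ∫⁻ t in Ioc 0 T, EE (α + 1/2) (V t) ≠ ⊤ := by
      refine ne_top_of_le_ne_top hfin (setLIntegral_mono' measurableSet_Ioc fun t ht => ?_)
      exact (hle _ t ht).trans (EE_mono (by linarith) _)
    have h4 := ne_top_of_le_ne_top (ENNReal.mul_ne_top (ENNReal.mul_ne_top hC hM) h3) h2
    rw [hV0]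
    finiteness
  have hN := absorb hNfin (hcon u V V hu hVc hVc hVd)
  rw [hV0] at hN
  have e1 : EE α (U t) ≤ Q * NN α (mu ν Λ) 0 T V :=
    (hge α t ht).trans (mul_le_mul' le_rfl (EE_le_NN V ht))
  have e2 : ∫⁻ t in Ioc 0 T, EE (α + 1) (U t) ≤
      Q * (ENNReal.ofReal ν⁻¹ * NN α (mu ν Λ) 0 T V) := by
    calc _ ≤ ∫⁻ t in Ioc 0 T, Q * EE (α + 1) (V t) :=
          setLIntegral_mono' measurableSet_Ioc fun t ht => hge _ t ⟨ht.1.le, ht.2⟩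
      _ ≤ _ := by
          rw [lintegral_const_mul' _ _ (by rw [hQ]; finiteness)]
          gcongr
          exact lint_EE_le hν (mu_ge hΛ.le) hVc
  calc _ ≤ Q * NN α (mu ν Λ) 0 T V + Q * (ENNReal.ofReal ν⁻¹ * NN α (mu ν Λ) 0 T V) :=
        add_le_add e1 e2
    _ = Q * (1 + ENNReal.ofReal ν⁻¹) * NN α (mu ν Λ) 0 T V := by ring
    _ ≤ Q * (1 + ENNReal.ofReal ν⁻¹) * (2 * (2 * EE α ξ)) := by gcongr
    _ = _ := by ring

/-- Uniform bound on the base flow at level `a*`. -/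
lemma NS_astar (a : ℤ) (ν T : ℝ) (hν : 0 < ν) (hT : 0 ≤ T) (f : Coef)
    (hf : MemH ((astar a : ℝ) - 1) f) (B : ℝ≥0∞) (hB : B ≠ ⊤) :
    ∃ M : ℝ≥0∞, M ≠ ⊤ ∧ ∀ (θ : Coef) (u : ℝ → Coef), EE (astar a : ℝ) θ ≤ B →
      IsNSSol ν f T θ u → NN (astar a : ℝ) (fun k => ν * lam k) 0 T u ≤ M := by
  have h1 := astar_pos a
  obtain ⟨n, hn⟩ := Int.eq_ofNat_of_zero_le (show 0 ≤ astar a by omega)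
  have hn1 : 1 ≤ n := by omega
  have e : (astar a : ℝ) = (n : ℝ) := by rw [hn]; simp
  rw [e] at hf ⊢
  exact NS_level ν T hν hT f B hB n hn1 ((FinH_iff _ _).1 hf.2)

lemma one_le_astar (a : ℤ) : (1:ℝ) ≤ (astar a : ℝ) := by exact_mod_cast astar_pos a

/-- Second part of the theorem. -/
lemma part2 (a : ℤ) (T ν : ℝ) (hT : 0 < T) (hν : 0 < ν)
    (f : Coef) (hf : MemH ((astar a : ℝ) - 1) f) (B : ℝ) :
    ∃ C : ℝ, 0 < C ∧
      ∀ (θ : Coef) (uθ : ℝ → Coef), MemH (astar a : ℝ) θ →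
        hN (astar a : ℝ) θ ≤ B → IsNSSol ν f T θ uθ →
        ∀ (ξ : Coef) (U : ℝ → Coef), MemH (a : ℝ) ξ → IsLinSol ν uθ T ξ U →
          ContH (a : ℝ) T U → MemL2H ((a : ℝ) + 1) T U →
          IntervalIntegrable (fun t => hSq ((a : ℝ) + 1) (U t)) volume 0 T ∧
          ∀ t ∈ Icc (0:ℝ) T,
            hSq (a : ℝ) (U t) + (∫ s in (0:ℝ)..T, hSq ((a : ℝ) + 1) (U s)) ≤
              C * hSq (a : ℝ) ξ := by
  obtain ⟨M, hM, hb⟩ := NS_astar a ν T hν hT.le f hf (ENNReal.ofReal ((B + 1) ^ 2))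
    ENNReal.ofReal_ne_top
  obtain ⟨K, hK, hl⟩ := lin_apriori (adm_astar a) hν hT.le M hM
  refine ⟨K.toReal + 1, by positivity, fun θ u hθ hθB hu ξ U hξ hU hcU hLU => ?_⟩
  have hθt := (FinH_iff _ _).1 hθ.2
  have hξt := (FinH_iff _ _).1 hξ.2
  have hN := hb θ u (EE_of_hN_le hθt hθB) hu
  have hsup : ∀ t ∈ Icc 0 T, EE (astar a : ℝ) (u t) ≤ M := fun t ht => (EE_le_NN u ht).trans hN
  have hUf : ∀ t ∈ Icc 0 T, EE (a : ℝ) (U t) ≠ ⊤ := by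
    intro t ht
    rcases eq_or_lt_of_le ht.1 with h0 | h0
    · rw [← h0, hU.init]; exact hξt
    · exact ne_top_of_le_ne_top ((FinH_iff _ _).1 (hLU.1 t ⟨h0, ht.2⟩).2)
        (EE_mono (by linarith) _)
  have hUc := ContH_cont hcU hUf
  have hLfin := lint_of_MemL2H hLU
  have main := hl u U ξ hsup hUc hξt hU hLfin
  refine ⟨(intervalIntegrable_iff_integrableOn_Ioc_of_le hT.le).2 hLU.2, fun t ht => ?_⟩
  have h := main t ht
  have hI : ENNReal.ofReal (∫ s in (0:ℝ)..T, hSq ((a : ℝ) + 1) (U s)) =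
      ∫⁻ t in Ioc 0 T, EE ((a : ℝ) + 1) (U t) := by
    rw [intervalIntegral.integral_of_le hT.le, ofReal_integral_eq_lintegral_ofReal hLU.2
      (Filter.Eventually.of_forall fun t => hSq_nonneg _ _)]
    exact setLIntegral_congr_fun measurableSet_Ioc fun t ht => ofReal_hSq (hLU.1 t ht).2
  have hI0 : 0 ≤ ∫ s in (0:ℝ)..T, hSq ((a : ℝ) + 1) (U s) := by
    rw [intervalIntegral.integral_of_le hT.le]
    exact integral_nonneg fun s => hSq_nonneg _ _
  rw [← hI, ← ofReal_hSq ((FinH_iff _ _).2 (hUf t ht)), ← ofReal_hSq hξ.2,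
    ← ENNReal.ofReal_toReal hK, ← ENNReal.ofReal_mul ENNReal.toReal_nonneg,
    ← ENNReal.ofReal_add (hSq_nonneg _ _) hI0, ENNReal.ofReal_le_ofReal_iff
      (mul_nonneg ENNReal.toReal_nonneg (hSq_nonneg _ _))] at h
  have := hSq_nonneg (a : ℝ) ξ
  linarith



/-! ### Construction of the linearised flow -/

/-- Supremum sequence on the lattice. -/
def sx (T : ℝ) (y : ℝ → Coef) (n : ℤ × ℤ) : ℝ≥0∞ := ⨆ t ∈ Icc 0 T, nx (y t) n

lemma le_sx {T t : ℝ} (y : ℝ → Coef) (n : ℤ × ℤ) (ht : t ∈ Icc 0 T) : nx (y t) n ≤ sx T y n :=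
  le_iSup₂ (f := fun t (_ : t ∈ Icc 0 T) => nx (y t) n) t ht

lemma EN_sx_le {α T : ℝ} {μ : Freq → ℝ} (y : ℝ → Coef) : EN α (sx T y) ≤ NN α μ 0 T y := by
  unfold EN
  rw [← tsum_freq (fun k => WW α k * sx T y k ^ 2) (by simp [sx, nx_zero])]
  refine ENNReal.tsum_le_tsum fun k => mul_le_mul' le_rfl ?_
  have : sx T y k.1 = sp 0 T y k := by simp only [sx, sp, nx_val]
  rw [this]
  exact le_self_add

/-- Clamping of the time variable. -/
def cl (T t : ℝ) : ℝ := max 0 (min t T)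

lemma cl_mem {T : ℝ} (hT : 0 ≤ T) (t : ℝ) : cl T t ∈ Icc 0 T := by
  unfold cl
  exact ⟨le_max_left _ _, max_le hT (min_le_right _ _)⟩

lemma cl_of_mem {T t : ℝ} (ht : t ∈ Icc 0 T) : cl T t = t := by
  unfold cl; rw [min_eq_left ht.2, max_eq_right ht.1]

lemma cl_cont (T : ℝ) : Continuous (cl T) := by unfold cl; fun_prop

lemma comp_cl {T : ℝ} (hT : 0 ≤ T) {f : ℝ → ℂ} (hf : ContinuousOn f (Icc 0 T)) :
    Continuous fun t => f (cl T t) :=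
  hf.comp_continuous (cl_cont T) fun t => cl_mem hT t

/-- Standing bounds for a coefficient path. -/
def Good (α T : ℝ) (y : ℝ → Coef) : Prop :=
  (∀ k, ContinuousOn (fun t => y t k) (Icc 0 T)) ∧ EN α (sx T y) ≠ ⊤

lemma Good_of {α T : ℝ} {μ : Freq → ℝ} {y : ℝ → Coef}
    (hc : ∀ k, ContinuousOn (fun t => y t k) (Icc 0 T)) (h : NN α μ 0 T y ≠ ⊤) : Good α T y :=
  ⟨hc, ne_top_of_le_ne_top h (EN_sx_le y)⟩

lemma ext_contOn {T : ℝ} {y : ℝ → Coef} (hc : ∀ k, ContinuousOn (fun t => y t k) (Icc 0 T))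
    (n : ℤ × ℤ) : ContinuousOn (fun t => ext (y t) n) (Icc 0 T) := by
  by_cases h : n = 0
  · subst h; simp only [ext_zero]; exact continuousOn_const
  · have := hc ⟨n, h⟩
    refine this.congr fun t _ => ?_
    exact ext_val (y t) ⟨n, h⟩

lemma cv_sx_ne_top {a s T : ℝ} (h : |a| ≤ s) {u W : ℝ → Coef} (hu : Good s T u) (hW : Good a T W)
    (k : ℤ × ℤ) : cv (sx T u) (sx T W) k ≠ ⊤ := by
  obtain ⟨C, hC, hp⟩ := pairK h k
  have := ne_top_of_le_ne_top (ENNReal.mul_ne_top hC (ENNReal.mul_ne_top hu.2 hW.2))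
    (hp (sx T u) (sx T W))
  intro h'
  rw [h'] at this
  simp at this

lemma cv_mono {x x' y y' : ℤ × ℤ → ℝ≥0∞} (hx : ∀ k, x k ≤ x' k) (hy : ∀ k, y k ≤ y' k)
    (k : ℤ × ℤ) : cv x y k ≤ cv x' y' k :=
  ENNReal.tsum_le_tsum fun _ => mul_le_mul' (hx _) (hy _)

lemma Bc_cont {T : ℝ} (hT : 0 ≤ T) {u W : ℝ → Coef}
    (hu : ∀ k, ContinuousOn (fun t => u t k) (Icc 0 T))
    (hW : ∀ k, ContinuousOn (fun t => W t k) (Icc 0 T)) (k : Freq)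
    (h : cv (sx T u) (sx T W) k.1 ≠ ⊤) :
    Continuous fun t => Bc (u (cl T t)) (W (cl T t)) k := by
  simp only [Bc_eq]
  refine continuous_const.mul ?_
  have hb : ∑' m, ENNReal.ofReal (Real.sqrt (nq k.1)) * (sx T u m * sx T W (k.1 - m)) ≠ ⊤ := by
    rw [ENNReal.tsum_mul_left]
    exact ENNReal.mul_ne_top ENNReal.ofReal_ne_top h
  refine continuous_tsum (u := fun m => (ENNReal.ofReal (Real.sqrt (nq k.1)) *
    (sx T u m * sx T W (k.1 - m))).toReal) (fun m => ?_) (ENNReal.summable_toReal hb) ?_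
  · exact ((comp_cl hT (ext_contOn hu m)).mul (comp_cl hT (ext_contOn hW (k.1 - m)))).mul
      continuous_const
  · intro m t
    have h1 := enorm_kterm (u (cl T t)) (W (cl T t)) k m
    have h2 : ENNReal.ofReal (Real.sqrt (nq k.1)) * (nx (u (cl T t)) m * nx (W (cl T t)) (k.1 - m)) ≤
        ENNReal.ofReal (Real.sqrt (nq k.1)) * (sx T u m * sx T W (k.1 - m)) := by
      gcongr
      · exact le_sx u m (cl_mem hT t)
      · exact le_sx W _ (cl_mem hT t)
    have h3 := ENNReal.toReal_mono (ENNReal.ne_top_of_tsum_ne_top hb m) (h1.trans h2)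
    rwa [toReal_enorm] at h3

lemma hlin_cont {a s T : ℝ} (h : |a| ≤ s) (hT : 0 ≤ T) {u W : ℝ → Coef} (hu : Good s T u)
    (hW : Good a T W) (k : Freq) : Continuous fun t => hlin u W (cl T t) k := by
  unfold hlin
  have h1 := cv_sx_ne_top h hu hW k.1
  have h2 := h1
  rw [cv_comm] at h2
  exact (Bc_cont hT hu.1 hW.1 k h1).neg.sub (Bc_cont hT hW.1 hu.1 k h2)

lemma ext_add (c d : Coef) (n : ℤ × ℤ) : ext (fun j => c j + d j) n = ext c n + ext d n := by
  unfold ext; split_ifs <;> simp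

lemma Bc_add_right {c d e : Coef} {k : Freq} (h1 : cv (nx c) (nx d) k.1 ≠ ⊤)
    (h2 : cv (nx c) (nx e) k.1 ≠ ⊤) :
    Bc c (fun j => d j + e j) k = Bc c d k + Bc c e k := by
  rw [Bc_eq, Bc_eq, Bc_eq, ← mul_add, ← (kterm_summable h1).tsum_add (kterm_summable h2)]
  congr 1
  refine tsum_congr fun m => ?_
  rw [ext_add]; ring

lemma Bc_add_left {c d e : Coef} {k : Freq} (h1 : cv (nx d) (nx c) k.1 ≠ ⊤)
    (h2 : cv (nx e) (nx c) k.1 ≠ ⊤) :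
    Bc (fun j => d j + e j) c k = Bc d c k + Bc e c k := by
  rw [Bc_eq, Bc_eq, Bc_eq, ← mul_add, ← (kterm_summable h1).tsum_add (kterm_summable h2)]
  congr 1
  refine tsum_congr fun m => ?_
  rw [ext_add]; ring

lemma hlin_add {a s T : ℝ} (h : |a| ≤ s) {u W W' : ℝ → Coef} (hu : Good s T u)
    (hW : Good a T W) (hW' : Good a T W') {t : ℝ} (ht : t ∈ Icc 0 T) (k : Freq) :
    hlin u (fun t j => W t j + W' t j) t k = hlin u W t k + hlin u W' t k := by
  have h1 : cv (nx (u t)) (nx (W t)) k.1 ≠ ⊤ := ne_top_of_le_ne_top (cv_sx_ne_top h hu hW k.1)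
    (cv_mono (fun n => le_sx u n ht) (fun n => le_sx W n ht) _)
  have h2 : cv (nx (u t)) (nx (W' t)) k.1 ≠ ⊤ := ne_top_of_le_ne_top (cv_sx_ne_top h hu hW' k.1)
    (cv_mono (fun n => le_sx u n ht) (fun n => le_sx W' n ht) _)
  unfold hlin
  rw [Bc_add_right h1 h2]
  rw [cv_comm] at h1 h2
  rw [Bc_add_left h1 h2]
  ring

/-- Duhamel operator. -/
def Phi (μ : Freq → ℝ) (T : ℝ) (u W : ℝ → Coef) : ℝ → Coef := fun t k =>
  ((Real.exp (-μ k * t) : ℝ) : ℂ) *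
    ∫ s in (0:ℝ)..t, ((Real.exp (μ k * s) : ℝ) : ℂ) * hlin u W (cl T s) k

lemma Phi_zero (μ : Freq → ℝ) (T : ℝ) (u W : ℝ → Coef) (k : Freq) : Phi μ T u W 0 k = 0 := by
  simp [Phi]

lemma Phi_int_cont {a s T : ℝ} (h : |a| ≤ s) (hT : 0 ≤ T) {u W : ℝ → Coef} (hu : Good s T u)
    (hW : Good a T W) (μ : Freq → ℝ) (k : Freq) :
    Continuous fun s : ℝ => ((Real.exp (μ k * s) : ℝ) : ℂ) * hlin u W (cl T s) k := by
  have h1 := hlin_cont h hT hu hW k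
  have h2 : Continuous fun s : ℝ => ((Real.exp (μ k * s) : ℝ) : ℂ) := by fun_prop
  exact h2.mul h1

lemma Phi_deriv {a s T : ℝ} (h : |a| ≤ s) (hT : 0 ≤ T) {u W : ℝ → Coef} (hu : Good s T u)
    (hW : Good a T W) (μ : Freq → ℝ) (k : Freq) (t : ℝ) :
    HasDerivAt (fun t => Phi μ T u W t k) (hlin u W (cl T t) k - (μ k : ℂ) * Phi μ T u W t k) t := by
  have hc := Phi_int_cont h hT hu hW μ k
  have h1 := intervalIntegral.integral_hasDerivAt_right (hc.intervalIntegrable 0 t)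
    hc.stronglyMeasurable.stronglyMeasurableAtFilter hc.continuousAt
  have h2 := (exp_deriv (-μ k) t).mul h1
  refine h2.congr_deriv ?_
  unfold Phi
  have e : ((Real.exp (-μ k * t) : ℝ) : ℂ) * ((Real.exp (μ k * t) : ℝ) : ℂ) = 1 := by
    rw [← Complex.ofReal_mul, ← Real.exp_add]; simp
  rw [← mul_assoc ((Real.exp (-μ k * t) : ℝ) : ℂ) _ (hlin u W (cl T t) k), e]
  push_cast
  ring

lemma Phi_add {a s T : ℝ} (h : |a| ≤ s) (hT : 0 ≤ T) {u W W' : ℝ → Coef} (hu : Good s T u)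
    (hW : Good a T W) (hW' : Good a T W') (μ : Freq → ℝ) (k : Freq) (t : ℝ) :
    Phi μ T u (fun t j => W t j + W' t j) t k = Phi μ T u W t k + Phi μ T u W' t k := by
  unfold Phi
  rw [← mul_add, ← intervalIntegral.integral_add
    ((Phi_int_cont h hT hu hW μ k).intervalIntegrable 0 t)
    ((Phi_int_cont h hT hu hW' μ k).intervalIntegrable 0 t)]
  congr 1
  refine intervalIntegral.integral_congr fun s _ => ?_
  rw [hlin_add h hu hW hW' (cl_mem hT s)]
  ring

lemma Phi_congr {T : ℝ} (hT : 0 ≤ T) {u W W' : ℝ → Coef} (hW : ∀ t ∈ Icc 0 T, W t = W' t)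
    (μ : Freq → ℝ) : Phi μ T u W = Phi μ T u W' := by
  funext t k
  unfold Phi hlin
  have : ∀ s, W (cl T s) = W' (cl T s) := fun s => hW _ (cl_mem hT s)
  simp only [this]

lemma hlin_real {u W : ℝ → Coef} {t : ℝ} (hu : IsReal (u t)) (hW : IsReal (W t)) :
    IsReal (hlin u W t) := by
  intro k
  unfold hlin
  rw [isReal_Bc hu hW k, isReal_Bc hW hu k]
  simp only [map_sub, map_neg]
  ring

lemma Phi_real {T : ℝ} (hT : 0 ≤ T) {u W : ℝ → Coef} {μ : Freq → ℝ} (hμ : ∀ k, μ (fneg k) = μ k)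
    (hu : ∀ t ∈ Icc 0 T, IsReal (u t)) (hW : ∀ t ∈ Icc 0 T, IsReal (W t)) (t : ℝ) :
    IsReal (Phi μ T u W t) := by
  intro k
  unfold Phi
  rw [hμ, map_mul, Complex.conj_ofReal, ← intervalIntegral.intervalIntegral_conj, ← mul_neg,
    ← intervalIntegral.integral_neg]
  congr 1
  refine intervalIntegral.integral_congr fun s _ => ?_
  rw [hlin_real (hu _ (cl_mem hT s)) (hW _ (cl_mem hT s)) k, map_mul, Complex.conj_ofReal]
  ring



lemma sq_le_of_forall {a b : ℝ} {y : ℝ → Coef} {k : Freq} {X : ℝ≥0∞}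
    (h : ∀ t ∈ Icc a b, ‖y t k‖ₑ ^ 2 ≤ X) : sp a b y k ^ 2 ≤ X := by
  have h2 : sp a b y k ≤ X ^ (1/2 : ℝ) := by
    refine iSup₂_le fun t ht => ?_
    rw [← ENNReal.rpow_one ‖y t k‖ₑ]
    rw [show (1:ℝ) = 2 * (1/2) by norm_num, ENNReal.rpow_mul]
    norm_num
    exact ENNReal.rpow_le_rpow (h t ht) (by norm_num)
  calc _ ≤ _ := pow_le_pow_left' h2 2
    _ = _ := by
      rw [← ENNReal.rpow_natCast, ← ENNReal.rpow_mul]; norm_num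

lemma geom_two : ∑' j : ℕ, (2⁻¹ : ℝ≥0∞) ^ j = 2 := by
  rw [ENNReal.tsum_geometric]
  rw [ENNReal.one_sub_inv_two, inv_inv]

lemma tsum_sq_le (x : ℕ → ℝ≥0∞) : (∑' j, x j) ^ 2 ≤ 2 * ∑' j, 4 ^ j * x j ^ 2 := by
  have h := cs_tsum (fun j : ℕ => (2⁻¹ : ℝ≥0∞) ^ j) (fun j => 2 ^ j * x j)
  have e1 : ∀ j, (2⁻¹ : ℝ≥0∞) ^ j * (2 ^ j * x j) = x j := by
    intro j
    rw [← mul_assoc, ← mul_pow, ENNReal.inv_mul_cancel (by norm_num) (by norm_num), one_pow, one_mul]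
  have e2 : ∀ j, ((2:ℝ≥0∞) ^ j * x j) ^ 2 = 4 ^ j * x j ^ 2 := by
    intro j
    rw [mul_pow, ← pow_mul, mul_comm j 2, pow_mul]; norm_num
  simp only [e1, e2] at h
  refine h.trans (mul_le_mul' ?_ le_rfl)
  refine le_trans ?_ geom_two.le
  refine ENNReal.tsum_le_tsum fun j => ?_
  have h1 : (2⁻¹ : ℝ≥0∞) ^ j ≤ 1 := pow_le_one' (by simp) _
  calc _ = (2⁻¹ : ℝ≥0∞) ^ j * 2⁻¹ ^ j := sq _
    _ ≤ 1 * 2⁻¹ ^ j := mul_le_mul' h1 le_rfl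
    _ = _ := one_mul _

lemma enorm_tsum_sq (z : ℕ → ℂ) : ‖∑' j, z j‖ₑ ^ 2 ≤ 2 * ∑' j, 4 ^ j * ‖z j‖ₑ ^ 2 :=
  (pow_le_pow_left' enorm_tsum_le_tsum_enorm 2).trans (tsum_sq_le _)

lemma NN_tsum {α a b : ℝ} {μ : Freq → ℝ} {δ : ℕ → ℝ → Coef}
    (hc : ∀ j k, ContinuousOn (fun t => δ j t k) (Icc a b)) :
    NN α μ a b (fun t k => ∑' j, δ j t k) ≤ 2 * ∑' j, 4 ^ j * NN α μ a b (δ j) := by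
  have hm : ∀ j k, AEMeasurable (fun t => ‖δ j t k‖ₑ ^ 2) (volume.restrict (Ioc a b)) := fun j k =>
    (((hc j k).mono Ioc_subset_Icc_self).aestronglyMeasurable measurableSet_Ioc).enorm.pow_const 2
  have key : ∀ k, WW α k.1 * (sp a b (fun t k => ∑' j, δ j t k) k ^ 2 +
      ENNReal.ofReal (μ k) * ∫⁻ t in Ioc a b, ‖∑' j, δ j t k‖ₑ ^ 2) ≤
      ∑' j, 2 * (4 ^ j * (WW α k.1 * (sp a b (δ j) k ^ 2 +
      ENNReal.ofReal (μ k) * ∫⁻ t in Ioc a b, ‖δ j t k‖ₑ ^ 2))) := by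
    intro k
    have h1 : sp a b (fun t k => ∑' j, δ j t k) k ^ 2 ≤ 2 * ∑' j, 4 ^ j * sp a b (δ j) k ^ 2 := by
      refine sq_le_of_forall fun t ht => (enorm_tsum_sq _).trans ?_
      gcongr
      exact le_sp _ _ ht
    have h2 : ∫⁻ t in Ioc a b, ‖∑' j, δ j t k‖ₑ ^ 2 ≤
        2 * ∑' j, 4 ^ j * ∫⁻ t in Ioc a b, ‖δ j t k‖ₑ ^ 2 := by
      calc _ ≤ ∫⁻ t in Ioc a b, 2 * ∑' j, 4 ^ j * ‖δ j t k‖ₑ ^ 2 :=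
            lintegral_mono fun t => enorm_tsum_sq _
        _ = _ := by
            rw [lintegral_const_mul' _ _ (by norm_num),
              lintegral_tsum fun j => (hm j k).const_mul _]
            congr 1
            refine tsum_congr fun j => ?_
            rw [lintegral_const_mul' _ _ (by finiteness)]
    calc _ ≤ WW α k.1 * (2 * ∑' j, 4 ^ j * sp a b (δ j) k ^ 2 + ENNReal.ofReal (μ k) *
          (2 * ∑' j, 4 ^ j * ∫⁻ t in Ioc a b, ‖δ j t k‖ₑ ^ 2)) := by gcongr
      _ = _ := by
          rw [← ENNReal.tsum_mul_left, ← ENNReal.tsum_mul_left, ← ENNReal.tsum_mul_left,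
            ← ENNReal.tsum_add, ← ENNReal.tsum_mul_left]
          refine tsum_congr fun j => ?_
          ring
  calc _ ≤ ∑' k, ∑' j, 2 * (4 ^ j * (WW α k.1 * (sp a b (δ j) k ^ 2 +
      ENNReal.ofReal (μ k) * ∫⁻ t in Ioc a b, ‖δ j t k‖ₑ ^ 2))) := ENNReal.tsum_le_tsum key
    _ = _ := by
      rw [ENNReal.tsum_comm, ← ENNReal.tsum_mul_left]
      refine tsum_congr fun j => ?_
      rw [ENNReal.tsum_mul_left, ENNReal.tsum_mul_left]
      rfl

lemma sp_le_NN {α a b : ℝ} {μ : Freq → ℝ} (y : ℝ → Coef) (k : Freq) :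
    WW α k.1 * sp a b y k ^ 2 ≤ NN α μ a b y := by
  refine le_trans ?_ (ENNReal.le_tsum k)
  exact mul_le_mul' le_rfl le_self_add

lemma sp_tsum_ne_top {α a b : ℝ} {μ : Freq → ℝ} {δ : ℕ → ℝ → Coef}
    (h : ∑' j, 4 ^ j * NN α μ a b (δ j) ≠ ⊤) (k : Freq) : ∑' j, sp a b (δ j) k ≠ ⊤ := by
  have h1 : WW α k.1 * (∑' j, sp a b (δ j) k) ^ 2 ≤ 2 * ∑' j, 4 ^ j * NN α μ a b (δ j) := by
    calc _ ≤ WW α k.1 * (2 * ∑' j, 4 ^ j * sp a b (δ j) k ^ 2) := by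
          gcongr; exact tsum_sq_le _
      _ = 2 * ∑' j, 4 ^ j * (WW α k.1 * sp a b (δ j) k ^ 2) := by
          rw [mul_left_comm, ← ENNReal.tsum_mul_left]
          congr 1
          exact tsum_congr fun j => by ring
      _ ≤ _ := by gcongr; exact sp_le_NN _ _
  have h2 := ne_top_of_le_ne_top (ENNReal.mul_ne_top (by norm_num) h) h1
  intro h3
  rw [h3] at h2
  simp [ENNReal.mul_top (WW_ne_zero α k.1)] at h2

lemma ser_summable {α a b : ℝ} {μ : Freq → ℝ} {δ : ℕ → ℝ → Coef}
    (h : ∑' j, 4 ^ j * NN α μ a b (δ j) ≠ ⊤) {t : ℝ} (ht : t ∈ Icc a b) (k : Freq) :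
    Summable fun j => δ j t k :=
  summable_of_enorm (ne_top_of_le_ne_top (sp_tsum_ne_top h k)
    (ENNReal.tsum_le_tsum fun j => le_sp (δ j) k ht))

lemma ser_cont {α a b : ℝ} {μ : Freq → ℝ} {δ : ℕ → ℝ → Coef}
    (hc : ∀ j k, ContinuousOn (fun t => δ j t k) (Icc a b))
    (h : ∑' j, 4 ^ j * NN α μ a b (δ j) ≠ ⊤) (k : Freq) :
    ContinuousOn (fun t => ∑' j, δ j t k) (Icc a b) := by
  refine continuousOn_tsum (u := fun j => (sp a b (δ j) k).toReal) (fun j => hc j k)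
    (ENNReal.summable_toReal (sp_tsum_ne_top h k)) fun j t ht => ?_
  have := ENNReal.toReal_mono (ENNReal.ne_top_of_tsum_ne_top (sp_tsum_ne_top h k) j)
    (le_sp (δ j) k ht)
  rwa [toReal_enorm] at this

lemma isReal_tsum {z : ℕ → Coef} (h : ∀ j, IsReal (z j)) : IsReal (fun k => ∑' j, z j k) := by
  intro k
  simp only
  rw [Complex.conj_tsum, ← tsum_neg]
  exact tsum_congr fun j => h j k

lemma picard {a s T : ℝ} (has : |a| ≤ s) (hT : 0 ≤ T) {μ : Freq → ℝ} {u Y : ℝ → Coef}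
    (hu : Good s T u)
    (hΦ : ∀ W, (∀ k, ContinuousOn (fun t => W t k) (Icc 0 T)) → NN a μ 0 T W ≠ ⊤ →
      NN a μ 0 T (Phi μ T u W) ≤ 8⁻¹ * NN a μ 0 T W)
    (hYc : ∀ k, ContinuousOn (fun t => Y t k) (Icc 0 T)) (hY : NN a μ 0 T Y ≠ ⊤)
    (hμ : ∀ k, μ (fneg k) = μ k)
    (hur : ∀ t ∈ Icc 0 T, IsReal (u t)) (hYr : ∀ t ∈ Icc 0 T, IsReal (Y t)) :
    ∃ V : ℝ → Coef, (∀ k, ContinuousOn (fun t => V t k) (Icc 0 T)) ∧ NN a μ 0 T V ≠ ⊤ ∧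
      (∀ t ∈ Icc 0 T, IsReal (V t)) ∧
      ∀ t ∈ Icc 0 T, ∀ k, V t k = Y t k + Phi μ T u V t k := by
  set D := NN a μ 0 T Y with hD
  set δ : ℕ → ℝ → Coef := fun j => (Phi μ T u)^[j] Y with hδ
  have hδ0 : δ 0 = Y := rfl
  have hδs : ∀ j, δ (j + 1) = Phi μ T u (δ j) := fun j => by
    rw [hδ]; exact Function.iterate_succ_apply' _ _ _
  have hPc : ∀ W, (∀ k, ContinuousOn (fun t => W t k) (Icc 0 T)) → NN a μ 0 T W ≠ ⊤ →
      ∀ k, ContinuousOn (fun t => Phi μ T u W t k) (Icc 0 T) := fun W hc hN k t _ =>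
    (Phi_deriv has hT hu (Good_of hc hN) μ k t).continuousAt.continuousWithinAt
  have h8 : ∀ n, (8⁻¹:ℝ≥0∞) ^ n ≠ ⊤ := fun n => by finiteness
  have hj : ∀ j, (∀ k, ContinuousOn (fun t => δ j t k) (Icc 0 T)) ∧
      NN a μ 0 T (δ j) ≤ 8⁻¹ ^ j * D := by
    intro j
    induction j with
    | zero => exact ⟨hYc, by simp [hδ0, hD]⟩
    | succ j ih =>
      have hfin := ne_top_of_le_ne_top (ENNReal.mul_ne_top (h8 j) hY) ih.2
      rw [hδs]
      refine ⟨hPc _ ih.1 hfin, (hΦ _ ih.1 hfin).trans ?_⟩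
      rw [pow_succ']
      calc _ ≤ 8⁻¹ * (8⁻¹ ^ j * D) := by gcongr; exact ih.2
        _ = _ := by ring
  have hjr : ∀ j, ∀ t ∈ Icc 0 T, IsReal (δ j t) := by
    intro j
    induction j with
    | zero => exact hYr
    | succ j ih => rw [hδs]; exact fun t _ => Phi_real hT hμ hur ih t
  set V : ℕ → ℝ → Coef := fun n t k => ∑' i, δ (i + n) t k with hV
  have hsum : ∀ n, ∑' i, 4 ^ i * NN a μ 0 T (δ (i + n)) ≤ 2 * (8⁻¹ ^ n * D) := by
    intro n
    calc _ ≤ ∑' i : ℕ, 2⁻¹ ^ i * (8⁻¹ ^ n * D) := by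
          refine ENNReal.tsum_le_tsum fun i => ?_
          calc _ ≤ 4 ^ i * (8⁻¹ ^ (i + n) * D) := by gcongr; exact (hj _).2
            _ = (4 * 8⁻¹) ^ i * (8⁻¹ ^ n * D) := by rw [mul_pow, pow_add]; ring
            _ = _ := by
              congr 2
              rw [show (8:ℝ≥0∞) = 4 * 2 by norm_num, ENNReal.mul_inv (by norm_num) (by norm_num),
                ← mul_assoc, ENNReal.mul_inv_cancel (by norm_num) (by norm_num), one_mul]
      _ = _ := by rw [ENNReal.tsum_mul_right, geom_two]
  have hsumt : ∀ n, ∑' i, 4 ^ i * NN a μ 0 T (δ (i + n)) ≠ ⊤ := fun n =>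
    ne_top_of_le_ne_top (ENNReal.mul_ne_top (by norm_num) (ENNReal.mul_ne_top (h8 n) hY)) (hsum n)
  have hVN : ∀ n, NN a μ 0 T (V n) ≤ 4 * (8⁻¹ ^ n * D) := by
    intro n
    refine (NN_tsum (δ := fun i => δ (i + n)) fun j k => (hj _).1 k).trans ?_
    calc _ ≤ 2 * (2 * (8⁻¹ ^ n * D)) := by gcongr; exact hsum n
      _ = _ := by ring
  have hVt : ∀ n, NN a μ 0 T (V n) ≠ ⊤ := fun n =>
    ne_top_of_le_ne_top (ENNReal.mul_ne_top (by norm_num) (ENNReal.mul_ne_top (h8 n) hY)) (hVN n)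
  have hVc : ∀ n k, ContinuousOn (fun t => V n t k) (Icc 0 T) := fun n k =>
    ser_cont (δ := fun i => δ (i + n)) (fun j k => (hj _).1 k) (hsumt n) k
  have hVs : ∀ n, ∀ t ∈ Icc 0 T, ∀ k, V n t k = δ n t k + V (n + 1) t k := by
    intro n t ht k
    have := (ser_summable (δ := fun i => δ (i + n)) (hsumt n) ht k).tsum_eq_zero_add
    rw [hV]
    simp only at this ⊢
    rw [this, zero_add]
    congr 1
    exact tsum_congr fun i => by rw [add_right_comm, add_assoc]
  have hδt : ∀ j, NN a μ 0 T (δ j) ≠ ⊤ := fun j =>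
    ne_top_of_le_ne_top (ENNReal.mul_ne_top (h8 j) hY) (hj j).2
  have hPs : ∀ n t k, Phi μ T u (V n) t k = δ (n + 1) t k + Phi μ T u (V (n + 1)) t k := by
    intro n t k
    rw [Phi_congr hT (W' := fun t j => δ n t j + V (n + 1) t j)
      (fun t ht => funext fun k => hVs n t ht k), hδs,
      Phi_add has hT hu (Good_of (hj n).1 (hδt n)) (Good_of (hVc _) (hVt _))]
  have hR : ∀ n, ∀ t ∈ Icc 0 T, ∀ k,
      Phi μ T u (V 0) t k - V 1 t k = Phi μ T u (V n) t k - V (n + 1) t k := by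
    intro n t ht k
    induction n with
    | zero => rfl
    | succ n ih => rw [ih, hPs n t k, hVs (n + 1) t ht k]; ring
  have hz : ∀ t ∈ Icc 0 T, ∀ k, Phi μ T u (V 0) t k - V 1 t k = 0 := by
    intro t ht k
    have hb : ∀ n, WW a k.1 * ‖Phi μ T u (V 0) t k - V 1 t k‖ₑ ^ 2 ≤ 8⁻¹ ^ n * (32 * D) := by
      intro n
      rw [hR n t ht k]
      have e1 : WW a k.1 * ‖Phi μ T u (V n) t k‖ₑ ^ 2 ≤ 4 * (8⁻¹ ^ n * D) := by
        calc _ ≤ WW a k.1 * sp 0 T (Phi μ T u (V n)) k ^ 2 := by gcongr; exact le_sp _ _ ht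
          _ ≤ _ := sp_le_NN _ _
          _ ≤ _ := hΦ _ (hVc n) (hVt n)
          _ ≤ 1 * NN a μ 0 T (V n) := by gcongr; simp
          _ ≤ _ := by rw [one_mul]; exact hVN n
      have e2 : WW a k.1 * ‖V (n + 1) t k‖ₑ ^ 2 ≤ 4 * (8⁻¹ ^ n * D) := by
        calc _ ≤ WW a k.1 * sp 0 T (V (n + 1)) k ^ 2 := by gcongr; exact le_sp _ _ ht
          _ ≤ _ := sp_le_NN _ _
          _ ≤ _ := hVN (n + 1)
          _ ≤ _ := by
            gcongr 4 * (?_ * _)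
            rw [pow_succ]
            exact mul_le_of_le_one_right' (by simp)
      calc _ ≤ WW a k.1 * (4 * (‖Phi μ T u (V n) t k‖ₑ ^ 2 + ‖V (n + 1) t k‖ₑ ^ 2)) := by
            gcongr; exact enorm_sq_sub_le _ _
        _ = 4 * (WW a k.1 * ‖Phi μ T u (V n) t k‖ₑ ^ 2 + WW a k.1 * ‖V (n + 1) t k‖ₑ ^ 2) := by ring
        _ ≤ 4 * (4 * (8⁻¹ ^ n * D) + 4 * (8⁻¹ ^ n * D)) := by gcongr
        _ = _ := by ring
    have hlim : Filter.Tendsto (fun n : ℕ => (8⁻¹:ℝ≥0∞) ^ n * (32 * D)) Filter.atTop (nhds 0) := by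
      have := ENNReal.Tendsto.mul_const (b := 32 * D)
        (ENNReal.tendsto_pow_atTop_nhds_zero_of_lt_one (r := (8⁻¹:ℝ≥0∞))
        (by rw [ENNReal.inv_lt_one]; norm_num)) (Or.inr (ENNReal.mul_ne_top (by norm_num) hY))
      simpa using this
    have h0 := le_antisymm (ge_of_tendsto' hlim hb) (by simp)
    rcases mul_eq_zero.1 h0 with h0 | h0
    · exact absurd h0 (WW_ne_zero _ _)
    · simpa using h0
  refine ⟨V 0, hVc 0, hVt 0, fun t ht => isReal_tsum fun j => hjr _ t ht, fun t ht k => ?_⟩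
  rw [hVs 0 t ht k, hδ0, sub_eq_zero.1 (hz t ht k)]



lemma heat_good {α ν T : ℝ} (hT : 0 ≤ T) (hν : 0 < ν) {μ : Freq → ℝ} (hμ : ∀ k, ν * lam k ≤ μ k)
    (ξ : Coef) : NN α μ 0 T (fun t k => ((Real.exp (-μ k * t) : ℝ) : ℂ) * ξ k) ≤ 2 * EE α ξ := by
  have h := energy_sum (α := α) (μ := μ) (a := 0) (b := T)
    (y := fun t k => ((Real.exp (-μ k * t) : ℝ) : ℂ) * ξ k) (h := fun _ _ => 0) (G := fun _ _ => 0)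
    hT hν hμ (fun k => by
      have h2 : Continuous fun t : ℝ => ((Real.exp (-μ k * t) : ℝ) : ℂ) := by fun_prop
      exact (h2.mul continuous_const).continuousOn)
    (fun k t _ => by
      refine ((exp_deriv (-μ k) t).mul_const (ξ k)).congr_deriv ?_
      push_cast; ring) (fun t _ k => by simp)
  refine h.trans ?_
  simp

lemma mu_fneg (ν Λ : ℝ) (k : Freq) : mu ν Λ (fneg k) = mu ν Λ k := by
  unfold mu; rw [lam_fneg]

lemma lin_exists {a s ν T : ℝ} (had : Adm a s) (has : |a| ≤ s) (hν : 0 < ν) (hT : 0 ≤ T)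
    (M : ℝ≥0∞) (hM : M ≠ ⊤) {u : ℝ → Coef} {ξ : Coef}
    (huc : ∀ k, ContinuousOn (fun t => u t k) (Icc 0 T)) {κ : Freq → ℝ} (huN : NN s κ 0 T u ≤ M)
    (hur : ∀ t ∈ Icc 0 T, IsReal (u t)) (hξr : IsReal ξ) (hξ : EE a ξ ≠ ⊤) :
    ∃ U : ℝ → Coef, IsLinSol ν u T ξ U ∧ (∀ k, ContinuousOn (fun t => U t k) (Icc 0 T)) ∧
      NN a (fun k => ν * lam k) 0 T U ≠ ⊤ := by
  obtain ⟨Λ, hΛ, hcon⟩ := contraction had hν hT M hM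
  have hgu : Good s T u := Good_of huc (ne_top_of_le_ne_top hM huN)
  have hsup : ∀ t ∈ Icc 0 T, EE s (u t) ≤ M := fun t ht => (EE_le_NN u ht).trans huN
  set Y : ℝ → Coef := fun t k => ((Real.exp (-mu ν Λ k * t) : ℝ) : ℂ) * ξ k with hYdef
  have hYN : NN a (mu ν Λ) 0 T Y ≠ ⊤ := ne_top_of_le_ne_top (ENNReal.mul_ne_top (by norm_num) hξ)
    (heat_good hT hν (mu_ge hΛ.le) ξ)
  have hYd : ∀ k t, HasDerivAt (fun t => Y t k) (-(mu ν Λ k : ℂ) * Y t k) t := by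
    intro k t
    refine ((exp_deriv (-mu ν Λ k) t).mul_const (ξ k)).congr_deriv ?_
    rw [hYdef]; push_cast; ring
  have hYr : ∀ t ∈ Icc 0 T, IsReal (Y t) := by
    intro t _ k
    rw [hYdef]
    simp only
    rw [mu_fneg, hξr k, map_mul, Complex.conj_ofReal]
    ring
  have hΦ : ∀ W, (∀ k, ContinuousOn (fun t => W t k) (Icc 0 T)) → NN a (mu ν Λ) 0 T W ≠ ⊤ →
      NN a (mu ν Λ) 0 T (Phi (mu ν Λ) T u W) ≤ 8⁻¹ * NN a (mu ν Λ) 0 T W := by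
    intro W hW hWN
    have hd := Phi_deriv has hT hgu (Good_of hW hWN) (mu ν Λ)
    have h1 := hcon u (Phi (mu ν Λ) T u W) W hsup
      (fun k t _ => (hd k t).continuousAt.continuousWithinAt) hW
      (fun k t ht => by
        have := hd k t
        rwa [cl_of_mem ⟨ht.1.le, ht.2.le⟩] at this)
    have h0 : EE a (Phi (mu ν Λ) T u W 0) = 0 := by
      rw [EE_eq]; simp [Phi_zero]
    rwa [h0, mul_zero, zero_add] at h1
  obtain ⟨V, hVc, hVN, hVr, hVe⟩ := picard has hT hgu hΦ
    (fun k t _ => (hYd k t).continuousAt.continuousWithinAt) hYN (mu_fneg ν Λ) hur hYr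
  set V' : ℝ → Coef := fun t k => Y t k + Phi (mu ν Λ) T u V t k with hV'
  have hVV : ∀ t ∈ Icc 0 T, V t = V' t := fun t ht => funext fun k => hVe t ht k
  have hd := Phi_deriv has hT hgu (Good_of hVc hVN) (mu ν Λ)
  have hV'd : ∀ k, ∀ t ∈ Icc 0 T, HasDerivAt (fun t => V' t k)
      (hlin u V' t k - (mu ν Λ k : ℂ) * V' t k) t := by
    intro k t ht
    refine ((hYd k t).add (hd k t)).congr_deriv ?_
    have : hlin u V' t k = hlin u V t k := by unfold hlin; rw [hVV t ht]
    rw [this, cl_of_mem ht, hV']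
    ring
  set U : ℝ → Coef := fun t k => ((Real.exp (Λ * t) : ℝ) : ℂ) * V' t k with hU
  have hUd : ∀ k, ∀ t ∈ Icc 0 T, HasDerivAt (fun t => U t k)
      (hlin u U t k - ((ν * lam k : ℝ) : ℂ) * U t k) t := by
    intro k t ht
    refine ((exp_deriv Λ t).mul (hV'd k t ht)).congr_deriv ?_
    rw [hU, hlin_smul]
    unfold mu
    push_cast
    ring
  have hUV : ∀ t ∈ Icc 0 T, ∀ k, ‖U t k‖ₑ ≤ ENNReal.ofReal (Real.exp (Λ * T)) * ‖V t k‖ₑ := by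
    intro t ht k
    rw [hVV t ht, hU, enorm_mul, enorm_exp]
    gcongr
    exact ht.2
  refine ⟨U, ⟨?_, ?_, ?_⟩, fun k t ht => (hUd k t ht).continuousAt.continuousWithinAt, ?_⟩
  · funext k
    rw [hU, hV', hYdef]
    simp [Phi_zero]
  · intro t ht k
    have := hVr t ht k
    rw [hVV t ht] at this
    rw [hU]
    simp only
    rw [this, map_mul, Complex.conj_ofReal]
    ring
  · intro k t ht
    refine (hUd k t ⟨ht.1.le, ht.2⟩).congr_deriv ?_
    unfold hlin
    simp only [Pi.zero_apply]
    ring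
  · set Q := ENNReal.ofReal (Real.exp (Λ * T)) ^ 2 with hQ
    have hQt : Q ≠ ⊤ := by rw [hQ]; finiteness
    refine ne_top_of_le_ne_top (ENNReal.mul_ne_top hQt hVN) ?_
    unfold NN
    rw [← ENNReal.tsum_mul_left]
    refine ENNReal.tsum_le_tsum fun k => ?_
    have e0 : ∀ t ∈ Icc 0 T, ‖U t k‖ₑ ^ 2 ≤ Q * ‖V t k‖ₑ ^ 2 := by
      intro t ht
      rw [hQ, ← mul_pow]
      exact pow_le_pow_left' (hUV t ht k) 2
    have e1 : sp 0 T U k ^ 2 ≤ Q * sp 0 T V k ^ 2 := by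
      refine sq_le_of_forall fun t ht => (e0 t ht).trans ?_
      gcongr
      exact le_sp _ _ ht
    have e2 : ∫⁻ t in Ioc 0 T, ‖U t k‖ₑ ^ 2 ≤ Q * ∫⁻ t in Ioc 0 T, ‖V t k‖ₑ ^ 2 := by
      rw [← lintegral_const_mul' _ _ hQt]
      exact setLIntegral_mono' measurableSet_Ioc fun t ht => e0 t ⟨ht.1.le, ht.2⟩
    calc _ ≤ WW a k.1 * (Q * sp 0 T V k ^ 2 + ENNReal.ofReal (mu ν Λ k) *
          (Q * ∫⁻ t in Ioc 0 T, ‖V t k‖ₑ ^ 2)) := by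
          gcongr
          exact mu_ge hΛ.le k
      _ = _ := by ring

lemma ContH_of_NN {a T : ℝ} {μ : Freq → ℝ} {U : ℝ → Coef}
    (hc : ∀ k, ContinuousOn (fun t => U t k) (Icc 0 T)) (hfin : NN a μ 0 T U ≠ ⊤) :
    ContH a T U := by
  intro t ht ε hε
  have hb : ∑' k : Freq, WW a k.1 * (4 * (sp 0 T U k ^ 2 + sp 0 T U k ^ 2)) ≠ ⊤ := by
    refine ne_top_of_le_ne_top (ENNReal.mul_ne_top (a := 8) (by norm_num) hfin) ?_
    unfold NN
    rw [← ENNReal.tsum_mul_left]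
    refine ENNReal.tsum_le_tsum fun k => ?_
    calc _ = 8 * (WW a k.1 * sp 0 T U k ^ 2) := by ring
      _ ≤ _ := by gcongr; exact le_self_add
  have hcont : ContinuousOn (fun s => hSq a (U s - U t)) (Icc 0 T) := by
    unfold hSq
    refine continuousOn_tsum (u := fun k : Freq => (WW a k.1 *
      (4 * (sp 0 T U k ^ 2 + sp 0 T U k ^ 2))).toReal) (fun k => ?_) (ENNReal.summable_toReal hb) ?_
    · exact continuousOn_const.mul (((hc k).sub continuousOn_const).norm.pow 2)
    · intro k s hs
      rw [Real.norm_of_nonneg (term_nonneg _ _ _)]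
      rw [← ENNReal.toReal_ofReal (term_nonneg a (U s - U t) k), ← EE_term]
      refine ENNReal.toReal_mono (ENNReal.ne_top_of_tsum_ne_top hb k) ?_
      refine mul_le_mul' le_rfl ((enorm_sq_sub_le _ _).trans ?_)
      gcongr
      · exact le_sp _ _ hs
      · exact le_sp _ _ ht
  have h2 : ContinuousOn (fun s => hN a (U s - U t)) (Icc 0 T) := hcont.sqrt
  obtain ⟨δ, hδ, h⟩ := Metric.continuousOn_iff.1 h2 t ht ε hε
  refine ⟨δ, hδ, fun s hs hst => ?_⟩
  have h3 := h s hs hst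
  have h0 : hN a (U t - U t) = 0 := by
    unfold hN hSq; simp
  rw [h0, Real.dist_eq, sub_zero] at h3
  exact (le_abs_self _).trans_lt h3

lemma EE_aemeas {α a b : ℝ} {y : ℝ → Coef} (hc : ∀ k, ContinuousOn (fun t => y t k) (Icc a b)) :
    AEMeasurable (fun t => EE α (y t)) (volume.restrict (Ioc a b)) := by
  simp only [EE_eq]
  refine AEMeasurable.tsum fun k => AEMeasurable.const_mul ?_ _
  exact (((hc k).mono Ioc_subset_Icc_self).aestronglyMeasurable measurableSet_Ioc).enorm.pow_const 2

/-- Parabolic smoothing step. -/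
lemma smooth_step {β ν c T : ℝ} (hc0 : 0 ≤ c) (hν : 0 < ν) {u U : ℝ → Coef} {ξ : Coef}
    (hUc : ∀ k, ContinuousOn (fun t => U t k) (Icc 0 T)) (hU : IsLinSol ν u T ξ U)
    (h1 : ∫⁻ t in Ioc c T, EE β (U t) ≠ ⊤)
    (h2 : ∫⁻ t in Ioc c T, ∑' k, WW β k * cv (nx (u t)) (nx (U t)) k ^ 2 ≠ ⊤)
    {t : ℝ} (ht : t ∈ Ioc c T) :
    ∃ t0 ∈ Ioo c t, NN β (fun k => ν * lam k) t0 T U ≠ ⊤ := by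
  have hex : ∃ t0 ∈ Ioo c t, EE β (U t0) ≠ ⊤ := by
    by_contra hcon
    push Not at hcon
    refine h1 (top_le_iff.1 ?_)
    calc (⊤ : ℝ≥0∞) = ∫⁻ s in Ioo c t, ⊤ := by
          rw [setLIntegral_const, Real.volume_Ioo, ENNReal.top_mul]
          simpa using ht.1
      _ ≤ ∫⁻ s in Ioo c t, EE β (U s) :=
          setLIntegral_mono' measurableSet_Ioo fun s hs => (hcon s hs).ge
      _ ≤ _ := lintegral_mono_set (fun s hs => ⟨hs.1, hs.2.le.trans ht.2⟩ : Ioo c t ⊆ Ioc c T)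
  obtain ⟨t0, ht0, hf⟩ := hex
  refine ⟨t0, ht0, ?_⟩
  have h3 := lin_energy (α := β) (ν := ν) (a := t0) (b := T) (μ := fun k => ν * lam k) (u := u)
    (V := U) (W := U) (ht0.2.le.trans ht.2) hν (fun k => le_rfl)
    (fun k => (hUc k).mono (Icc_subset_Icc (hc0.trans ht0.1.le) le_rfl))
    (fun k s hs => by
      refine (hU.deriv k s ⟨hc0.trans_lt (ht0.1.trans hs.1), hs.2.le⟩).congr_deriv ?_
      unfold hlin
      simp only [Pi.zero_apply]
      ring)
  refine ne_top_of_le_ne_top ?_ h3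
  have h4 : ∫⁻ t in Ioc t0 T, ∑' k, WW β k * cv (nx (u t)) (nx (U t)) k ^ 2 ≠ ⊤ :=
    ne_top_of_le_ne_top h2 (lintegral_mono_set (Ioc_subset_Ioc ht0.1.le le_rfl))
  finiteness

lemma smooth_half {a s ν T : ℝ} (hν : 0 < ν) (had1 : Adm (a + 1/2) s) (had2 : Adm (a + 1) s)
    {u U : ℝ → Coef} {ξ : Coef} (M : ℝ≥0∞) (hM : M ≠ ⊤)
    (hu : ∀ t ∈ Icc 0 T, EE s (u t) ≤ M)
    (hUc : ∀ k, ContinuousOn (fun t => U t k) (Icc 0 T)) (hU : IsLinSol ν u T ξ U)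
    (h1 : ∫⁻ t in Ioc 0 T, EE (a + 1) (U t) ≠ ⊤) {t : ℝ} (ht : t ∈ Ioc 0 T) :
    EE (a + 1) (U t) ≠ ⊤ := by
  obtain ⟨C, hC, hp⟩ := lint_prod (a := 0) (b := T) had1
  have hp1 := hp M hM u U (fun t ht => hu t ⟨ht.1.le, ht.2⟩)
  have e : a + 1/2 + 1/2 = a + 1 := by ring
  rw [e] at hp1
  obtain ⟨t0, ht0, hN⟩ := smooth_step (β := a + 1/2) le_rfl hν hUc hU
    (ne_top_of_le_ne_top h1 (lintegral_mono fun t => EE_mono (by linarith) _))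
    (ne_top_of_le_ne_top (by finiteness) hp1) ht
  have hUc' : ∀ k, ContinuousOn (fun t => U t k) (Icc t0 T) := fun k =>
    (hUc k).mono (Icc_subset_Icc ht0.1.le le_rfl)
  have h2 : ∫⁻ t in Ioc t0 T, EE (a + 1/2 + 1) (U t) ≠ ⊤ :=
    ne_top_of_le_ne_top (ENNReal.mul_ne_top ENNReal.ofReal_ne_top hN)
      (lint_EE_le hν (fun k => le_rfl) hUc')
  obtain ⟨C', hC', hp'⟩ := lint_prod (a := t0) (b := T) had2
  have hp2 := hp' M hM u U (fun t ht => hu t ⟨(ht0.1.trans ht.1).le, ht.2⟩)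
  have e' : a + 1 + 1/2 = a + 1/2 + 1 := by ring
  rw [e'] at hp2
  obtain ⟨t1, ht1, hN1⟩ := smooth_step (β := a + 1) (c := t0) ht0.1.le hν hUc hU
    (ne_top_of_le_ne_top h2 (lintegral_mono fun t => EE_mono (by linarith) _))
    (ne_top_of_le_ne_top (by finiteness) hp2) (t := t) ⟨ht0.2, ht.2⟩
  exact ne_top_of_le_ne_top hN1 (EE_le_NN U ⟨ht1.2.le, ht.2⟩)

lemma smooth_tame {a ν T : ℝ} (hν : 0 < ν) (ha : 3/2 ≤ a)
    {u U : ℝ → Coef} {ξ : Coef}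
    (huc : ∀ k, ContinuousOn (fun t => u t k) (Icc 0 T))
    (hu : NN a (fun k => ν * lam k) 0 T u ≠ ⊤)
    (hUc : ∀ k, ContinuousOn (fun t => U t k) (Icc 0 T)) (hU : IsLinSol ν u T ξ U)
    (hUN : NN a (fun k => ν * lam k) 0 T U ≠ ⊤)
    (h1 : ∫⁻ t in Ioc 0 T, EE (a + 1) (U t) ≠ ⊤) {t : ℝ} (ht : t ∈ Ioc 0 T) :
    EE (a + 1) (U t) ≠ ⊤ := by
  obtain ⟨C, hC, hp⟩ := tame (r := a + 1) (by linarith)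
  have hu1 : ∫⁻ t in Ioc 0 T, EE (a + 1) (u t) ≠ ⊤ :=
    ne_top_of_le_ne_top (ENNReal.mul_ne_top ENNReal.ofReal_ne_top hu)
      (lint_EE_le hν (fun k => le_rfl) huc)
  set A := NN a (fun k => ν * lam k) 0 T u
  set B := NN a (fun k => ν * lam k) 0 T U
  obtain ⟨t0, ht0, hN⟩ := smooth_step (β := a + 1) le_rfl hν hUc hU h1 (by
    have : ∫⁻ t in Ioc 0 T, ∑' k, WW (a + 1) k * cv (nx (u t)) (nx (U t)) k ^ 2 ≤
        C * ((∫⁻ t in Ioc 0 T, EE (a + 1) (u t)) * B + A * ∫⁻ t in Ioc 0 T, EE (a + 1) (U t)) := by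
      rw [← lintegral_mul_const' _ _ hUN, ← lintegral_const_mul' _ _ hu,
        ← lintegral_add_left' ((EE_aemeas huc).mul_const _), ← lintegral_const_mul' _ _ hC]
      refine setLIntegral_mono' measurableSet_Ioc fun s hs => (hp _ _).trans ?_
      have hs' : s ∈ Icc 0 T := ⟨hs.1.le, hs.2⟩
      gcongr
      · exact le_rfl
      · exact (EE_mono ha _).trans (EE_le_NN U hs')
      · exact (EE_mono ha _).trans (EE_le_NN u hs')
      · exact le_rfl
    exact ne_top_of_le_ne_top (by finiteness) this) ht
  exact ne_top_of_le_ne_top hN (EE_le_NN U ⟨ht0.2.le, ht.2⟩)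

lemma adm_half (a : ℤ) (h : a ≤ 1) : Adm ((a : ℝ) + 1/2) (astar a : ℝ) := by
  unfold Adm astar
  split_ifs with h'
  · rw [abs_le] at h'
    have : a = -1 ∨ a = 0 ∨ a = 1 := by omega
    rcases this with rfl | rfl | rfl <;> norm_num
  · push Not at h'
    have h0 : a ≤ -2 := by
      rcases le_or_gt 0 a with h0 | h0
      · rw [abs_of_nonneg h0] at h'; omega
      · rw [abs_of_neg h0] at h'; omega
    rw [abs_of_neg (by omega)]
    have : (a : ℝ) ≤ -2 := by exact_mod_cast h0
    right; right; left
    push_cast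
    exact ⟨by linarith, by linarith⟩

lemma adm_one (a : ℤ) (h : a ≤ 1) : Adm ((a : ℝ) + 1) (astar a : ℝ) := by
  unfold Adm astar
  split_ifs with h'
  · rw [abs_le] at h'
    have : a = -1 ∨ a = 0 ∨ a = 1 := by omega
    rcases this with rfl | rfl | rfl <;> norm_num
  · push Not at h'
    have h0 : a ≤ -2 := by
      rcases le_or_gt 0 a with h0 | h0
      · rw [abs_of_nonneg h0] at h'; omega
      · rw [abs_of_neg h0] at h'; omega
    rw [abs_of_neg (by omega)]
    rcases eq_or_lt_of_le h0 with h1 | h1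
    · subst h1; norm_num
    · have : (a : ℝ) ≤ -3 := by exact_mod_cast (show a ≤ -3 by omega)
      right; right; left
      push_cast
      exact ⟨by linarith, by linarith⟩

/-- First part of the theorem. -/
lemma part1 (a : ℤ) (T ν : ℝ) (hT : 0 < T) (hν : 0 < ν)
    (f : Coef) (hf : MemH ((astar a : ℝ) - 1) f)
    (θ : Coef) (uθ : ℝ → Coef) (hθ : MemH (astar a : ℝ) θ) (hu : IsNSSol ν f T θ uθ)
    (ξ : Coef) (hξ : MemH (a : ℝ) ξ) :
    ∃ U : ℝ → Coef, IsLinSol ν uθ T ξ U ∧ ContH (a : ℝ) T U ∧ MemL2H ((a : ℝ) + 1) T U := by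
  have hθt := (FinH_iff _ _).1 hθ.2
  have hξt := (FinH_iff _ _).1 hξ.2
  obtain ⟨M, hM, hb⟩ := NS_astar a ν T hν hT.le f hf (EE (astar a : ℝ) θ) hθt
  have hN := hb θ uθ le_rfl hu
  have huc : ∀ k, ContinuousOn (fun t => uθ t k) (Icc 0 T) := by
    refine ContH_cont hu.contH1 fun t ht => ?_
    exact ne_top_of_le_ne_top (ne_top_of_le_ne_top hM hN)
      ((EE_mono (one_le_astar a) _).trans (EE_le_NN uθ ht))
  have hsup : ∀ t ∈ Icc 0 T, EE (astar a : ℝ) (uθ t) ≤ M := fun t ht => (EE_le_NN uθ ht).trans hN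
  obtain ⟨U, hU, hUc, hUN⟩ := lin_exists (adm_astar a) (abs_le_astar a) hν hT.le M hM huc hN
    hu.real hξ.1 hξt
  have hintU : ∫⁻ t in Ioc 0 T, EE ((a : ℝ) + 1) (U t) ≠ ⊤ :=
    ne_top_of_le_ne_top (ENNReal.mul_ne_top ENNReal.ofReal_ne_top hUN)
      (lint_EE_le hν (fun k => le_rfl) hUc)
  refine ⟨U, hU, ContH_of_NN hUc hUN, fun t ht => ⟨hU.real t ⟨ht.1.le, ht.2⟩, ?_⟩, ?_⟩
  · rw [FinH_iff]
    rcases le_or_gt a 1 with h | h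
    · exact smooth_half hν (adm_half a h) (adm_one a h) M hM hsup hUc hU hintU ht
    · have e : astar a = a := by
        unfold astar
        rw [abs_of_pos (by omega), if_neg (by omega)]
      rw [e] at hN
      have h2 : (2:ℝ) ≤ a := by exact_mod_cast h
      exact smooth_tame hν (by linarith) huc (ne_top_of_le_ne_top hM hN) hUc hU hUN hintU ht
  · simp only [hSq_eq]
    exact integrable_toReal_of_lintegral_ne_top (EE_aemeas hUc) hintU


end Proofs

end NS2D

namespace NS2D

/-- Proposition `PropLinSob`. Sobolev estimates for the
linearised flow `𝕀_θ`: for `a ∈ ℤ`, `a* = |a|+1` if `|a| ≤ 1` and `a* = |a|`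
if `|a| ≥ 2`, `θ ∈ Ḣ^{a*}_⋄` and `f ∈ Ḣ^{a*−1}_⋄`, the operator `𝕀_θ`
extends to `Ḣ^a_⋄`: for every `ξ ∈ Ḣ^a_⋄` the linearised equation has a
solution `𝕀_θ[ξ] ∈ C([0,T], Ḣ^a_⋄) ∩ L²([0,T], Ḣ^{a+1}_⋄)`; moreover for
every `B > 0` there is `C = C(ν,T,‖f‖_{Ḣ^{a*−1}},a,B) > 0` such that for all
`‖θ‖_{Ḣ^{a*}} ≤ B` and `ξ ∈ Ḣ^a_⋄`,
`sup_{0≤t≤T} ‖𝕀_θ[ξ](t)‖²_{Ḣ^a} + ∫₀ᵀ ‖𝕀_θ[ξ](t)‖²_{Ḣ^{a+1}} dt ≤ C ‖ξ‖²_{Ḣ^a}`. -/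
theorem statement6 (a : ℤ) (T ν : ℝ) (hT : 0 < T) (hν : 0 < ν)
    (f : Coef) (hf : MemH ((astar a : ℝ) - 1) f) :
    (∀ (θ : Coef) (uθ : ℝ → Coef), MemH (astar a : ℝ) θ → IsNSSol ν f T θ uθ →
      ∀ ξ, MemH (a : ℝ) ξ →
        ∃ U : ℝ → Coef, IsLinSol ν uθ T ξ U ∧ ContH (a : ℝ) T U ∧
          MemL2H ((a : ℝ) + 1) T U) ∧
    (∀ B : ℝ, 0 < B → ∃ C : ℝ, 0 < C ∧
      ∀ (θ : Coef) (uθ : ℝ → Coef), MemH (astar a : ℝ) θ →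
        hN (astar a : ℝ) θ ≤ B → IsNSSol ν f T θ uθ →
        ∀ (ξ : Coef) (U : ℝ → Coef), MemH (a : ℝ) ξ → IsLinSol ν uθ T ξ U →
          ContH (a : ℝ) T U → MemL2H ((a : ℝ) + 1) T U →
          IntervalIntegrable (fun t => hSq ((a : ℝ) + 1) (U t)) volume 0 T ∧
          ∀ t ∈ Icc (0:ℝ) T,
            hSq (a : ℝ) (U t) + (∫ s in (0:ℝ)..T, hSq ((a : ℝ) + 1) (U s)) ≤
              C * hSq (a : ℝ) ξ) := by
  exact ⟨fun θ uθ hθ hu ξ hξ => part1 a T ν hT hν f hf θ uθ hθ hu ξ hξ,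
    fun B _ => part2 a T ν hT hν f hf B⟩

end NS2D
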